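/- arXiv:1810.06680 — 2 statements merged into one kernel-verified Lean document; each statement's English description precedes it below -/
import Mathlib

section
/- (Li–Ombrosi–Pérez, maximal-function case of Sawyer's conjecture) Let u and v be weights on ℝ^n with u ∈ A_1 and v ∈ A_∞. Then there exists a constant C, depending only on the A_1 constant of u and the A_∞ constant of v, such that for every locally integrable f, ‖M(fv)/v‖_{L^{1,∞}(uv)} ≤ C ∫_{ℝ^n} |f| u v, where uv denotes the weight u·v. -/
open MeasureTheory ENNReal Set

noncomputable section

/-- Euclidean space `ℝ^n`. -/
abbrev ESp (n : ℕ) := EuclideanSpace ℝ (Fin n)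

/-- An axis-parallel cube with positive finite side length. -/
def IsCube {n : ℕ} (Q : Set (ESp n)) : Prop :=
  ∃ (c : Fin n → ℝ) (h : ℝ), 0 < h ∧ Q = {x : ESp n | ∀ i, c i ≤ x i ∧ x i ≤ c i + h}

/-- The measure `w(E) = ∫_E w` associated to a weight `w`. -/
def wMeas {n : ℕ} (w : ESp n → ℝ) (E : Set (ESp n)) : ℝ≥0∞ :=
  ∫⁻ x in E, ENNReal.ofReal (w x)

/-- A weight: a nonnegative locally integrable function, positive (and finite) a.e. -/
def IsWeight {n : ℕ} (w : ESp n → ℝ) : Prop :=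
  Measurable w ∧ (∀ x, 0 ≤ w x) ∧ (∀ᵐ x ∂(volume : Measure (ESp n)), 0 < w x) ∧
    ∀ Q : Set (ESp n), IsCube Q → wMeas w Q < ⊤

/-- `C` is an admissible `A₁` constant for `w`. -/
def A1Const {n : ℕ} (w : ESp n → ℝ) (C : ℝ≥0∞) : Prop :=
  ∀ Q : Set (ESp n), IsCube Q →
    (volume Q)⁻¹ * wMeas w Q ≤ C * essInf (fun x => ENNReal.ofReal (w x)) (volume.restrict Q)

/-- The Muckenhoupt class `A₁`. -/
def IsA1 {n : ℕ} (w : ESp n → ℝ) : Prop := ∃ C : ℝ≥0∞, C < ⊤ ∧ A1Const w C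

/-- The Muckenhoupt class `A_p`, `1 < p < ∞`. -/
def IsAp {n : ℕ} (w : ESp n → ℝ) (p : ℝ) : Prop :=
  ∃ C : ℝ≥0∞, C < ⊤ ∧ ∀ Q : Set (ESp n), IsCube Q →
    ((volume Q)⁻¹ * wMeas w Q) *
      ((volume Q)⁻¹ * ∫⁻ x in Q, ENNReal.ofReal (w x) ^ (1 - p / (p - 1))) ^ (p - 1) ≤ C

/-- The class `A_∞ = ⋃_{p ≥ 1} A_p`. -/
def IsAinfty {n : ℕ} (w : ESp n → ℝ) : Prop :=
  IsA1 w ∨ ∃ p : ℝ, 1 < p ∧ IsAp w p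

/-- The Hardy–Littlewood maximal function (over cubes). -/
def maxFn {n : ℕ} (f : ESp n → ℝ) (x : ESp n) : ℝ≥0∞ :=
  ⨆ (Q : Set (ESp n)) (_ : IsCube Q) (_ : x ∈ Q),
    (volume Q)⁻¹ * ∫⁻ y in Q, ENNReal.ofReal |f y|

/-- The Fujii–Wilson `A_∞` constant. -/
def FW {n : ℕ} (w : ESp n → ℝ) : ℝ≥0∞ :=
  ⨆ (Q : Set (ESp n)) (_ : IsCube Q),
    (wMeas w Q)⁻¹ * ∫⁻ x in Q, maxFn (Q.indicator w) x

/-- The weighted weak `L^{q,∞}(w)` quasinorm of `g`. -/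
def wnorm {n : ℕ} (g : ESp n → ℝ≥0∞) (q : ℝ) (w : ESp n → ℝ) : ℝ≥0∞ :=
  ⨆ (t : ℝ) (_ : 0 < t), ENNReal.ofReal t * (wMeas w {x | ENNReal.ofReal t < g x}) ^ (1 / q)

/-- The weighted `L¹(w)` norm. -/
def L1norm {n : ℕ} (f : ESp n → ℝ) (w : ESp n → ℝ) : ℝ≥0∞ :=
  ∫⁻ x, ENNReal.ofReal (|f x| * w x)

/-- The fractional maximal operator `M_α`. -/
def fracM {n : ℕ} (α : ℝ) (f : ESp n → ℝ) (x : ESp n) : ℝ≥0∞ :=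
  ⨆ (Q : Set (ESp n)) (_ : IsCube Q) (_ : x ∈ Q),
    ((volume Q) ^ (1 - α / (n : ℝ)))⁻¹ * ∫⁻ y in Q, ENNReal.ofReal |f y|

/-- The fractional integral (Riesz potential) `I_α`. -/
def fracI {n : ℕ} (α : ℝ) (f : ESp n → ℝ) (x : ESp n) : ℝ :=
  ∫ y, f y / dist x y ^ ((n : ℝ) - α)

/-- The multi(sub)linear maximal function `𝓜`. -/
def multiM {n m : ℕ} (f : Fin m → ESp n → ℝ) (x : ESp n) : ℝ≥0∞ :=
  ⨆ (Q : Set (ESp n)) (_ : IsCube Q) (_ : x ∈ Q),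
    ∏ i, (volume Q)⁻¹ * ∫⁻ y in Q, ENNReal.ofReal |f i y|

/-- The multi(sub)linear fractional maximal operator `𝓜_α`. -/
def multiMα {n m : ℕ} (α : ℝ) (f : Fin m → ESp n → ℝ) (x : ESp n) : ℝ≥0∞ :=
  ⨆ (Q : Set (ESp n)) (_ : IsCube Q) (_ : x ∈ Q),
    ∏ i, ((volume Q) ^ (1 - α / ((m : ℝ) * (n : ℝ))))⁻¹ * ∫⁻ y in Q, ENNReal.ofReal |f i y|

/-- The multilinear fractional integral `𝓘_α`. -/
def multiIα {n m : ℕ} (α : ℝ) (f : Fin m → ESp n → ℝ) (x : ESp n) : ℝ :=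
  ∫ y : Fin m → ESp n, (∏ i, f i (y i)) / (∑ i, dist x (y i)) ^ ((m : ℝ) * (n : ℝ) - α)

/-- The multilinear class `A_{(1,…,1)}`. -/
def A11 {n m : ℕ} (w : Fin m → ESp n → ℝ) : Prop :=
  ∃ C : ℝ≥0∞, C < ⊤ ∧ ∀ Q : Set (ESp n), IsCube Q →
    ((volume Q)⁻¹ * ∫⁻ x in Q, ENNReal.ofReal (∏ i, w i x ^ ((m : ℝ)⁻¹))) ^ (m : ℝ) *
      ∏ i, (essInf (fun x => ENNReal.ofReal (w i x)) (volume.restrict Q))⁻¹ ≤ C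


/-! ## Geometry of cubes -/

/-- half-open cube -/
def hc {n : ℕ} (c : Fin n → ℝ) (h : ℝ) : Set (ESp n) := {x | ∀ i, c i ≤ x i ∧ x i < c i + h}

/-- closed cube -/
def cc {n : ℕ} (c : Fin n → ℝ) (h : ℝ) : Set (ESp n) := {x | ∀ i, c i ≤ x i ∧ x i ≤ c i + h}

lemma isCube_cc {n : ℕ} (c : Fin n → ℝ) {h : ℝ} (hh : 0 < h) : IsCube (cc c h) := ⟨c, h, hh, rfl⟩

lemma hc_sub_cc {n : ℕ} (c : Fin n → ℝ) (h : ℝ) : hc c h ⊆ cc c h :=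
  fun _ hx i => ⟨(hx i).1, (hx i).2.le⟩

lemma hc_eq_pre {n : ℕ} (c : Fin n → ℝ) (h : ℝ) :
    hc c h = (@WithLp.ofLp 2 (Fin n → ℝ)) ⁻¹' (pi univ fun i => Ico (c i) (c i + h)) := by
  ext x; simp [hc]

lemma cc_eq_pre {n : ℕ} (c : Fin n → ℝ) (h : ℝ) :
    cc c h = (@WithLp.ofLp 2 (Fin n → ℝ)) ⁻¹' (Icc c (fun i => c i + h)) := by
  ext x; simp [cc, Pi.le_def, forall_and]

lemma meas_hc {n : ℕ} (c : Fin n → ℝ) (h : ℝ) : MeasurableSet (hc c h) := by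
  rw [hc_eq_pre]
  exact (PiLp.volume_preserving_ofLp (Fin n)).measurable
    (MeasurableSet.univ_pi fun i => measurableSet_Ico)

lemma meas_cc {n : ℕ} (c : Fin n → ℝ) (h : ℝ) : MeasurableSet (cc c h) := by
  rw [cc_eq_pre]
  exact (PiLp.volume_preserving_ofLp (Fin n)).measurable measurableSet_Icc

lemma vol_hc {n : ℕ} (c : Fin n → ℝ) (h : ℝ) : volume (hc c h) = ENNReal.ofReal h ^ n := by
  rw [hc_eq_pre, (PiLp.volume_preserving_ofLp (Fin n)).measure_preimage
    (MeasurableSet.univ_pi fun i => measurableSet_Ico).nullMeasurableSet, Real.volume_pi_Ico]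
  simp

lemma vol_cc {n : ℕ} (c : Fin n → ℝ) (h : ℝ) : volume (cc c h) = ENNReal.ofReal h ^ n := by
  rw [cc_eq_pre, (PiLp.volume_preserving_ofLp (Fin n)).measure_preimage
    measurableSet_Icc.nullMeasurableSet, Real.volume_Icc_pi]
  simp

lemma vol_hc_pos {n : ℕ} (c : Fin n → ℝ) {h : ℝ} (hh : 0 < h) : volume (hc c h) ≠ 0 := by
  rw [vol_hc]; positivity

lemma vol_hc_fin {n : ℕ} (c : Fin n → ℝ) (h : ℝ) : volume (hc c h) ≠ ⊤ := by
  rw [vol_hc]; finiteness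

lemma hc_ae_cc {n : ℕ} (c : Fin n → ℝ) (h : ℝ) : hc c h =ᵐ[volume] cc c h :=
  ae_eq_of_subset_of_measure_ge (hc_sub_cc c h) (by rw [vol_hc, vol_cc])
    (meas_hc c h).nullMeasurableSet (by rw [vol_cc]; finiteness)

/-- dyadic cube of generation `j` containing `x` in the grid with origin `c` and top scale `h` -/
def dy {n : ℕ} (c : Fin n → ℝ) (h : ℝ) (j : ℕ) (x : ESp n) : Set (ESp n) :=
  {y | ∀ i, ⌊2 ^ j * ((y i - c i) / h)⌋ = ⌊2 ^ j * ((x i - c i) / h)⌋}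

lemma mem_dy {n : ℕ} (c : Fin n → ℝ) (h : ℝ) (j : ℕ) (x : ESp n) : x ∈ dy c h j x := fun _ => rfl

lemma dy_eq_of_mem {n : ℕ} {c : Fin n → ℝ} {h : ℝ} {j : ℕ} {x y : ESp n} (hy : y ∈ dy c h j x) :
    dy c h j y = dy c h j x := by
  ext z; exact ⟨fun hz i => (hz i).trans (hy i), fun hz i => (hz i).trans (hy i).symm⟩

lemma dy_succ_sub {n : ℕ} (c : Fin n → ℝ) (h : ℝ) (j : ℕ) (x : ESp n) :
    dy c h (j + 1) x ⊆ dy c h j x := by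
  have key : ∀ t : ℝ, ⌊2 ^ j * t⌋ = ⌊2 ^ (j + 1) * t⌋ / 2 := by
    intro t
    have := Int.floor_div_natCast (2 ^ (j + 1) * t) 2
    push_cast at this
    rw [← this]; congr 1; rw [pow_succ]; ring
  intro y hy i
  rw [key, key, hy i]

lemma dy_anti {n : ℕ} (c : Fin n → ℝ) (h : ℝ) {j k : ℕ} (hjk : j ≤ k) (x : ESp n) :
    dy c h k x ⊆ dy c h j x := by
  induction k, hjk using Nat.le_induction with
  | base => exact subset_rfl
  | succ k _ ih => exact (dy_succ_sub c h k x).trans ih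

/-- corner of the dyadic cube -/
def dyc {n : ℕ} (c : Fin n → ℝ) (h : ℝ) (j : ℕ) (x : ESp n) : Fin n → ℝ :=
  fun i => c i + h / 2 ^ j * ⌊2 ^ j * ((x i - c i) / h)⌋

lemma dy_eq_hc {n : ℕ} (c : Fin n → ℝ) {h : ℝ} (hh : 0 < h) (j : ℕ) (x : ESp n) :
    dy c h j x = hc (dyc c h j x) (h / 2 ^ j) := by
  ext y
  simp only [dy, hc, dyc, mem_ofPred_eq]
  refine forall_congr' fun i => ?_
  rw [Int.floor_eq_iff]
  have e : 2 ^ j * ((y i - c i) / h) = (y i - c i) / (h / 2 ^ j) := by field_simp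
  have hp : 0 < h / 2 ^ j := by positivity
  rw [e, le_div_iff₀ hp, div_lt_iff₀ hp]
  constructor <;> rintro ⟨h1, h2⟩ <;> constructor <;> linarith

lemma dy_zero {n : ℕ} {c : Fin n → ℝ} {h : ℝ} (hh : 0 < h) {x : ESp n} (hx : x ∈ hc c h) :
    dy c h 0 x = hc c h := by
  have : ∀ y : ESp n, y ∈ hc c h ↔ ∀ i, ⌊2 ^ 0 * ((y i - c i) / h)⌋ = 0 := by
    intro y
    refine forall_congr' fun i => ?_
    rw [Int.floor_eq_iff]
    simp only [pow_zero, one_mul, Int.cast_zero, zero_add]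
    rw [le_div_iff₀ hh, div_lt_iff₀ hh]
    constructor <;> rintro ⟨h1, h2⟩ <;> constructor <;> linarith
  ext y
  rw [this y]
  refine forall_congr' fun i => ?_
  rw [(this x).1 hx i]

lemma hc_eq_dy {n : ℕ} (c : Fin n → ℝ) {h : ℝ} (hh : 0 < h) :
    hc c h = dy c h 0 (WithLp.toLp 2 c) := (dy_zero hh (fun i => by simp [hh])).symm

/-- the dyadic family -/
def Dy {n : ℕ} (c : Fin n → ℝ) (h : ℝ) : Set (Set (ESp n)) := {Q | ∃ j x, Q = dy c h j x}

lemma Dy_countable {n : ℕ} (c : Fin n → ℝ) (h : ℝ) : (Dy c h).Countable := by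
  have : Dy c h ⊆ range (fun p : ℕ × (Fin n → ℤ) =>
      {y : ESp n | ∀ i, ⌊2 ^ p.1 * ((y i - c i) / h)⌋ = p.2 i}) := by
    rintro Q ⟨j, x, rfl⟩
    exact ⟨(j, fun i => ⌊2 ^ j * ((x i - c i) / h)⌋), rfl⟩
  exact (countable_range _).mono this

lemma Dy_hc {n : ℕ} {c : Fin n → ℝ} {h : ℝ} (hh : 0 < h) {Q : Set (ESp n)} (hQ : Q ∈ Dy c h) :
    ∃ c' h', 0 < h' ∧ Q = hc c' h' := by
  obtain ⟨j, x, rfl⟩ := hQ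
  exact ⟨_, _, by positivity, dy_eq_hc c hh j x⟩

lemma Dy_nested {n : ℕ} {c : Fin n → ℝ} {h : ℝ} {Q R : Set (ESp n)} (hQ : Q ∈ Dy c h)
    (hR : R ∈ Dy c h) (hne : (Q ∩ R).Nonempty) : Q ⊆ R ∨ R ⊆ Q := by
  obtain ⟨j, x, rfl⟩ := hQ
  obtain ⟨k, y, rfl⟩ := hR
  obtain ⟨z, hz1, hz2⟩ := hne
  rw [← dy_eq_of_mem hz1, ← dy_eq_of_mem hz2]
  rcases le_total j k with hjk | hjk
  · exact Or.inr (dy_anti c h hjk z)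
  · exact Or.inl (dy_anti c h hjk z)

/-- maximal elements of a family of sets -/
def maxF {n : ℕ} (S : Set (Set (ESp n))) : Set (Set (ESp n)) := {Q ∈ S | ∀ R ∈ S, Q ⊆ R → R = Q}

lemma maxF_sub {n : ℕ} (S : Set (Set (ESp n))) : maxF S ⊆ S := fun _ h => h.1

lemma maxF_cover {n : ℕ} {c : Fin n → ℝ} {h : ℝ} {S : Set (Set (ESp n))} (hS : S ⊆ Dy c h)
    {Q : Set (ESp n)} (hQ : Q ∈ S) : ∃ P ∈ maxF S, Q ⊆ P := by
  classical
  obtain ⟨j, x, rfl⟩ := hS hQ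
  have hex : ∃ i, dy c h i x ∈ S := ⟨j, hQ⟩
  refine ⟨dy c h (Nat.find hex) x, ⟨Nat.find_spec hex, ?_⟩, dy_anti c h (Nat.find_min' hex hQ) x⟩
  intro R hR hsub
  obtain ⟨k, y, rfl⟩ := hS hR
  have hx := hsub (mem_dy c h _ x)
  rw [← dy_eq_of_mem hx] at hR hsub ⊢
  exact (dy_anti c h (Nat.find_min' hex hR) x).antisymm hsub

lemma maxF_disj {n : ℕ} {c : Fin n → ℝ} {h : ℝ} {S : Set (Set (ESp n))} (hS : S ⊆ Dy c h) :
    (maxF S).PairwiseDisjoint id := by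
  intro P hP Q hQ hne
  by_contra hcon
  have : (P ∩ Q).Nonempty := by
    rw [Function.onFun, not_disjoint_iff_nonempty_inter] at hcon; exact hcon
  rcases Dy_nested (hS hP.1) (hS hQ.1) this with h1 | h1
  · exact hne (hP.2 Q hQ.1 h1).symm
  · exact hne (hQ.2 P hP.1 h1)

lemma maxF_sUnion {n : ℕ} {c : Fin n → ℝ} {h : ℝ} {S : Set (Set (ESp n))} (hS : S ⊆ Dy c h) :
    ⋃₀ maxF S = ⋃₀ S := by
  refine (sUnion_subset_sUnion (maxF_sub S)).antisymm ?_
  rintro x ⟨Q, hQ, hx⟩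
  obtain ⟨P, hP, hsub⟩ := maxF_cover hS hQ
  exact ⟨P, hP, hsub hx⟩

lemma maxF_countable {n : ℕ} {c : Fin n → ℝ} {h : ℝ} {S : Set (Set (ESp n))} (hS : S ⊆ Dy c h) :
    (maxF S).Countable := (Dy_countable c h).mono ((maxF_sub S).trans hS)

lemma Dy_meas {n : ℕ} {c : Fin n → ℝ} {h : ℝ} (hh : 0 < h) {Q : Set (ESp n)} (hQ : Q ∈ Dy c h) :
    MeasurableSet Q := by
  obtain ⟨c', h', -, rfl⟩ := Dy_hc hh hQ
  exact meas_hc _ _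

/-- measure of a countable disjoint union of dyadic cubes intersected with a set -/
lemma measure_sUnion_inter {n : ℕ} {c : Fin n → ℝ} {h : ℝ} (hh : 0 < h) {P : Set (Set (ESp n))}
    (hP : P ⊆ Dy c h) (hd : P.PairwiseDisjoint id) (μ : Measure (ESp n)) {E : Set (ESp n)}
    (hE : MeasurableSet E) :
    μ (E ∩ ⋃₀ P) = ∑' Q : P, μ (E ∩ Q) := by
  have hc : P.Countable := (Dy_countable c h).mono hP
  rw [sUnion_eq_biUnion, inter_iUnion₂, measure_biUnion hc]
  · intro Q hQ R hR hne
    exact (hd hQ hR hne).mono inter_subset_right inter_subset_right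
  · intro Q hQ; exact hE.inter (Dy_meas hh (hP hQ))

lemma measure_sUnion' {n : ℕ} {c : Fin n → ℝ} {h : ℝ} (hh : 0 < h) {P : Set (Set (ESp n))}
    (hP : P ⊆ Dy c h) (hd : P.PairwiseDisjoint id) (μ : Measure (ESp n)) :
    μ (⋃₀ P) = ∑' Q : P, μ Q := by
  have := measure_sUnion_inter hh hP hd μ MeasurableSet.univ
  simpa using this

/-- parents: the cube itself, seen as a generation-0 cube, or a bigger cube -/
lemma maxF_parent {n : ℕ} {c : Fin n → ℝ} {h : ℝ} (hh : 0 < h) (hn : 0 < n)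
    {S : Set (Set (ESp n))} (hS : S ⊆ Dy c h)
    {x : ESp n} {Q : Set (ESp n)} (hQ : Q ∈ maxF S) (hx : x ∈ Q) (htop : dy c h 0 x ∉ S) :
    ∃ j, Q = dy c h (j + 1) x ∧ dy c h j x ∉ S := by
  obtain ⟨j, y, rfl⟩ := hS hQ.1
  rw [← dy_eq_of_mem hx] at hQ ⊢
  cases j with
  | zero => exact absurd hQ.1 htop
  | succ j =>
    refine ⟨j, rfl, fun hcon => ?_⟩
    have := hQ.2 _ hcon (dy_succ_sub c h j x)
    have h2 := congrArg (fun s => volume s) this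
    simp only [dy_eq_hc c hh, vol_hc] at h2
    have h3 := (ENNReal.pow_right_strictMono (n := n) hn.ne').injective h2
    rw [ENNReal.ofReal_eq_ofReal_iff (by positivity) (by positivity), pow_succ] at h3
    have : 0 < h / 2 ^ j := by positivity
    have h4 : h / (2 ^ j * 2) = h / 2 ^ j / 2 := by field_simp
    linarith

lemma vol_dy_parent {n : ℕ} (c : Fin n → ℝ) {h : ℝ} (hh : 0 < h) (j : ℕ) (x : ESp n) :
    volume (dy c h j x) = 2 ^ n * volume (dy c h (j + 1) x) := by
  rw [dy_eq_hc c hh, dy_eq_hc c hh, vol_hc, vol_hc, ← mul_pow]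
  congr 1
  rw [show (2 : ℝ≥0∞) = ENNReal.ofReal 2 by simp, ← ENNReal.ofReal_mul (by norm_num)]
  congr 1
  rw [pow_succ]; field_simp

/-! ## Lebesgue differentiation along dyadic cubes -/

lemma dy_tendsto {n : ℕ} (c : Fin n → ℝ) {h : ℝ} (hh : 0 < h) {f : ESp n → ℝ≥0∞}
    (hf : Measurable f) (hfin : ∫⁻ x, f x ≠ ⊤) :
    ∀ᵐ x : ESp n, Filter.Tendsto
      (fun j => (∫⁻ y in dy c h j x, f y) / volume (dy c h j x)) Filter.atTop (nhds (f x)) := by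
  set f' : (Fin n → ℝ) → ℝ≥0∞ := fun z => f (WithLp.toLp 2 z) with hf'
  have hmp := PiLp.volume_preserving_ofLp (Fin n)
  have hf'm : Measurable f' := hf.comp (PiLp.volume_preserving_toLp (Fin n)).measurable
  have hf'fin : ∫⁻ z, f' z ≠ ⊤ := by
    rw [← hmp.lintegral_comp hf'm]; simpa [hf'] using hfin
  have hae := (IsUnifLocDoublingMeasure.vitaliFamily (volume : Measure (Fin n → ℝ))
    1).ae_tendsto_lintegral_div' hf'm hf'fin
  have hae2 := hmp.quasiMeasurePreserving.ae hae
  filter_upwards [hae2] with x hx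
  have hδ : Filter.Tendsto (fun j : ℕ => h / 2 ^ j / 2) Filter.atTop (nhdsWithin 0 (Ioi 0)) := by
    rw [tendsto_nhdsWithin_iff]
    refine ⟨?_, Filter.Eventually.of_forall fun j => by simp only [mem_Ioi]; positivity⟩
    have h1 : Filter.Tendsto (fun j : ℕ => (h / 2) * (1 / 2 : ℝ) ^ j) Filter.atTop (nhds 0) := by
      simpa using (tendsto_pow_atTop_nhds_zero_of_lt_one (r := (1/2 : ℝ)) (by norm_num)
        (by norm_num)).const_mul (h / 2)
    refine h1.congr fun j => ?_
    rw [div_pow, one_pow]; field_simp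
  have hball : ∀ j, Metric.closedBall (fun i => dyc c h j x i + h / 2 ^ j / 2) (h / 2 ^ j / 2)
      = Icc (dyc c h j x) (fun i => dyc c h j x i + h / 2 ^ j) := by
    intro j
    rw [closedBall_pi _ (by positivity), ← pi_univ_Icc]
    refine congrArg _ (funext fun i => ?_)
    rw [Real.closedBall_eq_Icc]
    congr 1 <;> ring
  have hmem : ∀ j, x.ofLp ∈ Metric.closedBall (fun i => dyc c h j x i + h / 2 ^ j / 2)
      (1 * (h / 2 ^ j / 2)) := by
    intro j
    rw [one_mul, hball]
    have := hc_sub_cc _ _ ((dy_eq_hc c hh j x) ▸ mem_dy c h j x)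
    rw [cc_eq_pre] at this
    exact this
  have := hx.comp (IsUnifLocDoublingMeasure.tendsto_closedBall_filterAt (volume) (K := 1)
    (x := x.ofLp) (fun j : ℕ => fun i => dyc c h j x i + h / 2 ^ j / 2) _ hδ
    (Filter.Eventually.of_forall hmem))
  refine this.congr fun j => ?_
  simp only [Function.comp_apply, hball]
  congr 1
  · rw [dy_eq_hc c hh, setLIntegral_congr (hc_ae_cc _ _), cc_eq_pre,
      ← hmp.setLIntegral_comp_preimage measurableSet_Icc hf'm]
  · rw [dy_eq_hc c hh, measure_congr (hc_ae_cc _ _), cc_eq_pre,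
      hmp.measure_preimage measurableSet_Icc.nullMeasurableSet]

lemma dy_sub_top {n : ℕ} {c : Fin n → ℝ} {h : ℝ} (hh : 0 < h) {x : ESp n} (hx : x ∈ hc c h)
    (j : ℕ) : dy c h j x ⊆ hc c h := by
  rw [← dy_zero hh hx]; exact dy_anti c h (Nat.zero_le j) x

lemma dy_vol_pos {n : ℕ} (c : Fin n → ℝ) {h : ℝ} (hh : 0 < h) (j : ℕ) (x : ESp n) :
    volume (dy c h j x) ≠ 0 := by
  rw [dy_eq_hc c hh]; exact vol_hc_pos _ (by positivity)

lemma dy_vol_fin {n : ℕ} (c : Fin n → ℝ) {h : ℝ} (hh : 0 < h) (j : ℕ) (x : ESp n) :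
    volume (dy c h j x) ≠ ⊤ := by
  rw [dy_eq_hc c hh]; exact vol_hc_fin _ _

lemma dy_meas {n : ℕ} (c : Fin n → ℝ) {h : ℝ} (hh : 0 < h) (j : ℕ) (x : ESp n) :
    MeasurableSet (dy c h j x) := by
  rw [dy_eq_hc c hh]; exact meas_hc _ _

/-- Differentiation, in usable form. -/
lemma dy_diff {n : ℕ} (c : Fin n → ℝ) {h : ℝ} (hh : 0 < h) {w : ESp n → ℝ≥0∞}
    (hw : Measurable w) (hfin : ∫⁻ x in hc c h, w x ≠ ⊤) :
    ∀ᵐ x : ESp n, x ∈ hc c h → ∀ t : ℝ≥0∞,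
      (t < w x → ∃ j, t * volume (dy c h j x) < ∫⁻ y in dy c h j x, w y) ∧
      (w x < t → ∃ j, ∫⁻ y in dy c h j x, w y < t * volume (dy c h j x)) := by
  have hfin' : ∫⁻ x, (hc c h).indicator w x ≠ ⊤ := by
    rwa [lintegral_indicator (meas_hc c h)]
  filter_upwards [dy_tendsto c hh (hw.indicator (meas_hc c h)) hfin'] with x hx hxm t
  have e : ∀ j, ∫⁻ y in dy c h j x, (hc c h).indicator w y = ∫⁻ y in dy c h j x, w y := by
    intro j
    refine setLIntegral_congr_fun (dy_meas c hh j x) fun y hy => ?_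
    exact indicator_of_mem (dy_sub_top hh hxm j hy) _
  simp only [e, indicator_of_mem hxm] at hx
  constructor
  · intro ht
    obtain ⟨j, hj⟩ := (hx.eventually (lt_mem_nhds ht)).exists
    exact ⟨j, (ENNReal.lt_div_iff_mul_lt (Or.inl (dy_vol_pos c hh j x))
      (Or.inl (dy_vol_fin c hh j x))).1 hj⟩
  · intro ht
    obtain ⟨j, hj⟩ := (hx.eventually (gt_mem_nhds ht)).exists
    exact ⟨j, (ENNReal.div_lt_iff (Or.inl (dy_vol_pos c hh j x))
      (Or.inl (dy_vol_fin c hh j x))).1 hj⟩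

/-! ## Weights: from Fujii-Wilson to quantitative absolute continuity -/

/-- the measure of a weight -/
abbrev wm {n : ℕ} (w : ESp n → ℝ≥0∞) : Measure (ESp n) := volume.withDensity w

/-- local finiteness and nondegeneracy -/
def GoodW {n : ℕ} (w : ESp n → ℝ≥0∞) : Prop :=
  Measurable w ∧ ∀ (c : Fin n → ℝ) (h : ℝ), 0 < h → wm w (hc c h) ≠ 0 ∧ wm w (hc c h) ≠ ⊤

/-- dyadic Fujii-Wilson condition -/
def FWd {n : ℕ} (w : ESp n → ℝ≥0∞) (K : ℝ≥0∞) : Prop :=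
  ∀ (c : Fin n → ℝ) (h : ℝ), 0 < h →
    ∫⁻ x in hc c h, (⨆ j, wm w (dy c h j x) / volume (dy c h j x)) ≤ K * wm w (hc c h)

/-- the half property -/
def HalfP {n : ℕ} (w : ESp n → ℝ≥0∞) (α : ℝ≥0∞) : Prop :=
  ∀ (c : Fin n → ℝ) (h : ℝ), 0 < h → ∀ E : Set (ESp n), MeasurableSet E → E ⊆ hc c h →
    volume E ≤ α * volume (hc c h) → wm w E ≤ 2⁻¹ * wm w (hc c h)

lemma sUnion_bound {n : ℕ} {c : Fin n → ℝ} {h : ℝ} (hh : 0 < h) {S : Set (Set (ESp n))}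
    (hS : S ⊆ Dy c h) (μ ν : Measure (ESp n)) (a : ℝ≥0∞) {E : Set (ESp n)} (hE : MeasurableSet E)
    (hb : ∀ P ∈ maxF S, μ (E ∩ P) ≤ a * ν P) : μ (E ∩ ⋃₀ S) ≤ a * ν (⋃₀ S) := by
  rw [← maxF_sUnion hS, measure_sUnion_inter hh ((maxF_sub S).trans hS) (maxF_disj hS) μ hE,
    measure_sUnion' hh ((maxF_sub S).trans hS) (maxF_disj hS) ν, ← ENNReal.tsum_mul_left]
  exact ENNReal.tsum_le_tsum fun P => hb P P.2

lemma sUnion_meas {n : ℕ} {c : Fin n → ℝ} {h : ℝ} (hh : 0 < h) {S : Set (Set (ESp n))}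
    (hS : S ⊆ Dy c h) : MeasurableSet (⋃₀ S) :=
  MeasurableSet.sUnion ((Dy_countable c h).mono hS) fun _ hQ => Dy_meas hh (hS hQ)

lemma sum_two_pow_le (l M : ℝ≥0∞) (N : ℕ) (A : ℕ → Prop) [DecidablePred A]
    (hA : ∀ i, A i → 2 ^ i * l ≤ M) :
    ∑ i ∈ Finset.range N, (if A i then 2 ^ i * l else 0) ≤ 2 * M := by
  have hs : ∀ N : ℕ, ∑ i ∈ Finset.range N, (if A i then 2 ^ i * l else 0) ≤ 2 ^ N * l := by
    intro N
    induction N with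
    | zero => simp
    | succ N ih =>
      rw [Finset.sum_range_succ, pow_succ, mul_assoc, mul_comm 2 l, ← mul_assoc, mul_two]
      gcongr
      split_ifs <;> simp
  induction N with
  | zero => simp
  | succ N ih =>
    by_cases h : A N
    · refine (hs (N + 1)).trans ?_
      rw [pow_succ, mul_comm _ 2, mul_assoc]
      gcongr
      exact hA N h
    · rw [Finset.sum_range_succ, if_neg h, add_zero]; exact ih

lemma halfP_of_FWd {n : ℕ} (hn : 0 < n) {K : ℝ≥0∞} (hK : K < ⊤) :
    ∃ α : ℝ≥0∞, 0 < α ∧ α < 1 ∧ ∀ w : ESp n → ℝ≥0∞, GoodW w → FWd w K → HalfP w α := by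
  obtain ⟨N, hN⟩ := ENNReal.exists_nat_gt (r := 2 ^ (n + 3) * K) (by finiteness)
  have hN0 : (N : ℝ≥0∞) ≠ 0 := (bot_le.trans_lt hN).ne'
  have h4 : (4 * 2 ^ N : ℝ≥0∞) ≠ ⊤ := by finiteness
  refine ⟨(4 * 2 ^ N)⁻¹, by simpa using h4, ?_, ?_⟩
  · rw [ENNReal.inv_lt_one]
    calc (1 : ℝ≥0∞) < 4 * 1 := by norm_num
      _ ≤ 4 * 2 ^ N := by gcongr; exact one_le_pow₀ (by norm_num)
  intro w hw hF c h hh E hE hEQ hvE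
  obtain ⟨hQ0, hQt⟩ := hw.2 c h hh
  set μ := wm w with hμ
  set Q := hc c h with hQdef
  have hv0 : volume Q ≠ 0 := vol_hc_pos c hh
  have hvt : volume Q ≠ ⊤ := vol_hc_fin c h
  set l := μ Q / volume Q with hl
  have hlQ : l * volume Q = μ Q := ENNReal.div_mul_cancel hv0 hvt
  have hlt : l ≠ ⊤ := (ENNReal.div_lt_top hQt hv0).ne
  have hl0 : l ≠ 0 := by rw [hl]; exact (ENNReal.div_pos hQ0 hvt).ne'
  let S : ℕ → Set (Set (ESp n)) := fun i => {R ∈ Dy c h | R ⊆ Q ∧ 2 ^ i * l * volume R < μ R}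
  have hS : ∀ i, S i ⊆ Dy c h := fun i R hR => hR.1
  set F := Q ∩ {x | 2 ^ N * l < w x} with hF'
  have hFm : MeasurableSet F := (meas_hc c h).inter (measurableSet_lt measurable_const hw.1)
  have hdiff := dy_diff c hh hw.1 (by rwa [hμ, withDensity_apply _ (meas_hc c h)] at hQt)
  have step1 : ∀ i ∈ Finset.range N, μ F ≤ 2 ^ n * (2 ^ i * l * volume (⋃₀ S i)) := by
    intro i hi
    have hsub : F ≤ᵐ[μ] ⋃₀ S i := by
      have := (withDensity_absolutelyContinuous volume w).ae_le hdiff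
      filter_upwards [this] with x hx hxF
      obtain ⟨j, hj⟩ := (hx hxF.1 (2 ^ i * l)).1 (lt_of_le_of_lt (by
        gcongr
        · norm_num
        · exact (Finset.mem_range.1 hi).le) hxF.2)
      refine ⟨dy c h j x, ⟨⟨j, x, rfl⟩, dy_sub_top hh hxF.1 j, ?_⟩, mem_dy c h j x⟩
      rwa [hμ, withDensity_apply _ (dy_meas c hh j x)]
    refine (measure_mono_ae hsub).trans ?_
    have := sUnion_bound hh (hS i) μ volume (2 ^ n * (2 ^ i * l)) MeasurableSet.univ ?_
    · rw [univ_inter] at this; rwa [← mul_assoc]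
    intro P hP
    rw [univ_inter]
    obtain ⟨x, hx⟩ : P.Nonempty := by
      rw [nonempty_iff_ne_empty]; rintro rfl; have := hP.1.2.2; simp at this
    have hxQ : x ∈ Q := hP.1.2.1 hx
    obtain ⟨j, rfl, hj⟩ := maxF_parent hh hn (hS i) hP hx (by
      rw [dy_zero hh hxQ]
      rintro ⟨-, -, h3⟩
      refine absurd h3 (not_lt.2 ?_)
      rw [← hQdef, mul_assoc, hlQ]
      exact le_mul_of_one_le_left bot_le (one_le_pow₀ (by norm_num)))
    have hj' : μ (dy c h j x) ≤ 2 ^ i * l * volume (dy c h j x) := by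
      by_contra hcon
      exact hj ⟨⟨j, x, rfl⟩, dy_sub_top hh hxQ j, not_le.1 hcon⟩
    refine (measure_mono (dy_succ_sub c h j x)).trans (hj'.trans (le_of_eq ?_))
    rw [vol_dy_parent c hh]; ring
  have step2 : ∑ i ∈ Finset.range N, 2 ^ i * l * volume (⋃₀ S i) ≤ 2 * (K * μ Q) := by
    classical
    have hUm : ∀ i, MeasurableSet (⋃₀ S i) := fun i => sUnion_meas hh (hS i)
    have hUQ : ∀ i, ⋃₀ S i ⊆ Q := fun i => sUnion_subset fun R hR => hR.2.1
    have e : ∀ i, 2 ^ i * l * volume (⋃₀ S i)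
        = ∫⁻ x in Q, (⋃₀ S i).indicator (fun _ => 2 ^ i * l) x := by
      intro i
      rw [lintegral_indicator (hUm i), setLIntegral_const, Measure.restrict_apply (hUm i),
        inter_eq_left.2 (hUQ i)]
    simp_rw [e]
    rw [← lintegral_finsetSum _ (fun i _ => measurable_const.indicator (hUm i))]
    refine le_trans ?_ (mul_le_mul_right (hF c h hh) 2)
    rw [← lintegral_const_mul' _ _ (by norm_num)]
    refine lintegral_mono fun x => ?_
    simp only [indicator_apply]
    refine sum_two_pow_le l _ N (fun i => x ∈ ⋃₀ S i) ?_
    rintro i ⟨R, ⟨⟨j, y, rfl⟩, -, hR⟩, hxR⟩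
    rw [← dy_eq_of_mem hxR] at hR
    refine le_iSup_of_le j ?_
    rw [ENNReal.le_div_iff_mul_le (Or.inl (dy_vol_pos c hh j x))
      (Or.inl (dy_vol_fin c hh j x))]
    exact hR.le
  have step3 : (N : ℝ≥0∞) * μ F ≤ 2 ^ n * (2 * (K * μ Q)) := by
    have := Finset.sum_le_sum step1
    rw [Finset.sum_const, Finset.card_range, nsmul_eq_mul, ← Finset.mul_sum] at this
    exact this.trans (by gcongr)
  have step4 : μ F ≤ 4⁻¹ * μ Q := by
    have h5 : (N : ℝ≥0∞) * (4 * μ F) ≤ N * μ Q := by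
      calc (N : ℝ≥0∞) * (4 * μ F) = 4 * (N * μ F) := by ring
        _ ≤ 4 * (2 ^ n * (2 * (K * μ Q))) := by gcongr
        _ = 2 ^ (n + 3) * K * μ Q := by rw [pow_add]; ring
        _ ≤ N * μ Q := by gcongr
    have h6 := (ENNReal.mul_le_mul_iff_right hN0 (by finiteness)).1 h5
    rw [mul_comm, ← div_eq_mul_inv, ENNReal.le_div_iff_mul_le (by simp) (by simp), mul_comm]
    exact h6
  have step5 : μ E ≤ 2 ^ N * l * volume E + μ F := by
    have : E ⊆ (E ∩ {x | w x ≤ 2 ^ N * l}) ∪ F := by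
      intro x hx
      by_cases hx2 : w x ≤ 2 ^ N * l
      · exact Or.inl ⟨hx, hx2⟩
      · exact Or.inr ⟨hEQ hx, not_le.1 hx2⟩
    refine (measure_mono this).trans ((measure_union_le _ _).trans ?_)
    gcongr
    have hm : MeasurableSet (E ∩ {x | w x ≤ 2 ^ N * l}) :=
      hE.inter (measurableSet_le hw.1 measurable_const)
    rw [hμ, withDensity_apply _ hm]
    calc _ ≤ ∫⁻ _ in E ∩ {x | w x ≤ 2 ^ N * l}, 2 ^ N * l :=
          setLIntegral_mono' hm fun x hx => hx.2
      _ = 2 ^ N * l * volume (E ∩ {x | w x ≤ 2 ^ N * l}) := setLIntegral_const _ _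
      _ ≤ _ := by gcongr; exact inter_subset_left
  calc μ E ≤ 2 ^ N * l * volume E + μ F := step5
    _ ≤ 2 ^ N * l * ((4 * 2 ^ N)⁻¹ * volume Q) + 4⁻¹ * μ Q := by gcongr
    _ = (2 ^ N * (4 * 2 ^ N)⁻¹) * (l * volume Q) + 4⁻¹ * μ Q := by ring
    _ = 4⁻¹ * μ Q + 4⁻¹ * μ Q := by
      rw [hlQ, ENNReal.mul_inv (by simp) (by simp), mul_comm (4⁻¹ : ℝ≥0∞), ← mul_assoc,
        ENNReal.mul_inv_cancel (by positivity) (by finiteness), one_mul]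
    _ = 2⁻¹ * μ Q := by
      rw [← add_mul]; congr 1
      rw [show (4 : ℝ≥0∞) = 2 * 2 by norm_num, ENNReal.mul_inv (by simp) (by simp), ← mul_add,
        ENNReal.inv_two_add_inv_two, mul_one]

/-- iterated decay -/
lemma decay_of_halfP {n : ℕ} (hn : 0 < n) {α : ℝ≥0∞} (h0 : 0 < α) (h1 : α < 1)
    {w : ESp n → ℝ≥0∞} (hw : HalfP w α) {c : Fin n → ℝ} {h : ℝ} (hh : 0 < h) (m : ℕ) :
    ∀ E : Set (ESp n), MeasurableSet E → E ⊆ hc c h →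
      volume E ≤ (α * (2 ^ n)⁻¹) ^ m * volume (hc c h) →
      wm w E ≤ (2⁻¹) ^ m * wm w (hc c h) := by
  set β := α * (2 ^ n)⁻¹ with hβ
  have hβ0 : β ≠ 0 := mul_ne_zero h0.ne' (by simp)
  have hβ1 : β < 1 := by
    refine lt_of_le_of_lt ?_ h1
    rw [hβ]
    refine mul_le_of_le_one_right bot_le ?_
    rw [ENNReal.inv_le_one]
    exact one_le_pow₀ (by norm_num)
  have hβ2 : β * 2 ^ n = α := by
    rw [hβ, mul_assoc, ENNReal.inv_mul_cancel (by simp) (by finiteness), mul_one]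
  set Q := hc c h with hQ
  induction m with
  | zero => intro E _ hEQ _; simpa using measure_mono hEQ
  | succ m ih =>
    intro E hE hEQ hvE
    let S : Set (Set (ESp n)) := {R ∈ Dy c h | R ⊆ Q ∧ β * volume R < volume (E ∩ R)}
    have hS : S ⊆ Dy c h := fun R hR => hR.1
    have hUQ : ⋃₀ S ⊆ Q := sUnion_subset fun R hR => hR.2.1
    have hdiff := dy_diff c hh (w := E.indicator 1) (measurable_one.indicator hE) (by
      rw [lintegral_indicator_one hE]
      exact ((measure_mono (subset_univ E)).trans_lt (by
        rw [Measure.restrict_apply_univ]; exact (vol_hc_fin c h).lt_top) |>.ne))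
    have hsub : E ≤ᵐ[wm w] (E ∩ ⋃₀ S : Set (ESp n)) := by
      have := (withDensity_absolutelyContinuous volume w).ae_le hdiff
      filter_upwards [this] with x hx hxE
      obtain ⟨j, hj⟩ := (hx (hEQ hxE) β).1 (by rw [indicator_of_mem hxE]; exact hβ1)
      refine ⟨hxE, dy c h j x, ⟨⟨j, x, rfl⟩, dy_sub_top hh (hEQ hxE) j, ?_⟩, mem_dy c h j x⟩
      rwa [lintegral_indicator_one hE, Measure.restrict_apply hE] at hj
    have hvU : volume (⋃₀ S) ≤ β ^ m * volume Q := by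
      have := sUnion_bound hh hS volume (volume.restrict E) β⁻¹ MeasurableSet.univ (by
        intro P hP
        rw [univ_inter, Measure.restrict_apply (Dy_meas hh (hS hP.1)), inter_comm,
          ← ENNReal.div_eq_inv_mul, ENNReal.le_div_iff_mul_le (Or.inl hβ0)
          (Or.inl (hβ1.trans_le le_top).ne), mul_comm]
        exact hP.1.2.2.le)
      rw [univ_inter] at this
      refine this.trans ?_
      calc β⁻¹ * volume.restrict E (⋃₀ S) ≤ β⁻¹ * volume E := by
            refine mul_le_mul_right ?_ _
            rw [Measure.restrict_apply (sUnion_meas hh hS)]; exact measure_mono inter_subset_right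
        _ ≤ β⁻¹ * (β ^ (m + 1) * volume Q) := by gcongr
        _ = (β⁻¹ * β) * (β ^ m * volume Q) := by rw [pow_succ]; ring
        _ = β ^ m * volume Q := by
          rw [ENNReal.inv_mul_cancel hβ0 (hβ1.trans_le le_top).ne, one_mul]
    have hwU := ih _ (sUnion_meas hh hS) hUQ hvU
    have hhalf : wm w (E ∩ ⋃₀ S) ≤ 2⁻¹ * wm w (⋃₀ S) := by
      refine sUnion_bound hh hS _ _ _ hE fun P hP => ?_
      obtain ⟨x, hxE, hxP⟩ : (E ∩ P).Nonempty := by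
        rw [nonempty_iff_ne_empty]; intro h'; have := hP.1.2.2; rw [h'] at this; simp at this
      have hxQ := hEQ hxE
      obtain ⟨j, rfl, hj⟩ := maxF_parent hh hn hS hP hxP (by
        rw [dy_zero hh hxQ]
        rintro ⟨-, -, h3⟩
        refine absurd h3 (not_lt.2 ?_)
        rw [inter_eq_left.2 hEQ]
        refine hvE.trans ?_
        rw [pow_succ]
        gcongr
        exact mul_le_of_le_one_left bot_le (pow_le_one₀ bot_le hβ1.le))
      have hj' : volume (E ∩ dy c h j x) ≤ β * volume (dy c h j x) := by
        by_contra hcon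
        exact hj ⟨⟨j, x, rfl⟩, dy_sub_top hh hxQ j, not_le.1 hcon⟩
      have h5 : volume (E ∩ dy c h (j + 1) x) ≤ α * volume (dy c h (j + 1) x) := by
        refine (measure_mono (inter_subset_inter_right _ (dy_succ_sub c h j x))).trans
          (hj'.trans (le_of_eq ?_))
        rw [vol_dy_parent c hh, ← mul_assoc, hβ2]
      have hm := dy_meas c hh (j + 1) x
      rw [dy_eq_hc c hh] at h5 hm ⊢
      exact hw _ _ (by positivity) _ (hE.inter hm) inter_subset_right h5
    calc wm w E ≤ wm w (E ∩ ⋃₀ S) := measure_mono_ae hsub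
      _ ≤ 2⁻¹ * wm w (⋃₀ S) := hhalf
      _ ≤ 2⁻¹ * (2⁻¹ ^ m * wm w Q) := by gcongr
      _ = 2⁻¹ ^ (m + 1) * wm w Q := by rw [pow_succ]; ring

/-- One step of doubling. -/
lemma doubling_step {n : ℕ} {α : ℝ≥0∞} {w : ESp n → ℝ≥0∞} (hg : GoodW w)
    (hw : HalfP w α) {q q' : Fin n → ℝ} {h h' : ℝ} (hh' : 0 < h')
    (hsub : hc q h ⊆ hc q' h')
    (hv : volume (hc q' h') ≤ volume (hc q h) + α * volume (hc q' h')) :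
    wm w (hc q' h') ≤ 2 * wm w (hc q h) := by
  have hE : volume (hc q' h' \ hc q h) ≤ α * volume (hc q' h') := by
    rw [measure_sdiff hsub (meas_hc _ _).nullMeasurableSet (vol_hc_fin _ _)]
    exact tsub_le_iff_left.2 hv
  have h1 := hw q' h' hh' _ ((meas_hc _ _).diff (meas_hc _ _)) sdiff_subset hE
  have hfin := (hg.2 q' h' hh').2
  have h2 : wm w (hc q' h') ≤ wm w (hc q h) + 2⁻¹ * wm w (hc q' h') := by
    calc wm w (hc q' h') ≤ wm w (hc q h ∪ (hc q' h' \ hc q h)) :=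
          measure_mono (by rw [union_sdiff_self]; exact subset_union_right)
      _ ≤ _ := (measure_union_le _ _).trans (by gcongr)
  set a := wm w (hc q' h')
  set b := wm w (hc q h)
  have h3 : 2⁻¹ * a + 2⁻¹ * a ≤ b + 2⁻¹ * a := by
    rwa [← add_mul, ENNReal.inv_two_add_inv_two, one_mul]
  have h4 : 2⁻¹ * a ≤ b := (ENNReal.add_le_add_iff_right (by finiteness)).1 h3
  calc a = 2 * (2⁻¹ * a) := by
        rw [← mul_assoc, ENNReal.mul_inv_cancel (by simp) (by simp), one_mul]
    _ ≤ 2 * b := by gcongr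

lemma doubling_exists {n : ℕ} {α : ℝ≥0∞} (h0 : 0 < α) (h1 : α < 1) :
    ∃ N : ℕ, ∀ w : ESp n → ℝ≥0∞, GoodW w → HalfP w α → ∀ (p q : Fin n → ℝ) (h : ℝ), 0 < h →
      hc q h ⊆ hc p (2 * h) → wm w (hc p (2 * h)) ≤ 2 ^ N * wm w (hc q h) := by
  have ha0 : 0 < α.toReal := ENNReal.toReal_pos h0.ne' (h1.trans_le le_top).ne
  set a := α.toReal with ha
  have haα : ENNReal.ofReal a = α := ENNReal.ofReal_toReal (h1.trans_le le_top).ne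
  obtain ⟨N, hN⟩ := exists_nat_gt (max 1 (n / a))
  have hN1 : (1 : ℝ) < N := (le_max_left _ _).trans_lt hN
  have hN2 : (n : ℝ) ≤ a * N := by
    have := ((le_max_right _ _).trans_lt hN).le
    rw [div_le_iff₀ ha0] at this; linarith
  refine ⟨N, fun w hg hw p q h hh hsub => ?_⟩
  have hpq : ∀ i, p i ≤ q i ∧ q i ≤ p i + h := by
    intro i
    have hq : WithLp.toLp 2 q ∈ hc q h := fun i => by simp [hh]
    refine ⟨(hsub hq i).1, ?_⟩
    by_contra hcon
    push Not at hcon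
    have hq2 : WithLp.toLp 2 (fun k => q k + max 0 (p i + 2 * h - q i)) ∈ hc q h := by
      intro k
      simp only
      refine ⟨by simp, ?_⟩
      have : max 0 (p i + 2 * h - q i) < h := max_lt hh (by linarith)
      linarith
    have := (hsub hq2 i).2
    simp only at this
    have h3 := le_max_right 0 (p i + 2 * h - q i)
    linarith
  have hNpos : (0 : ℝ) < N := by linarith
  have key : ∀ k : ℕ, wm w (hc (fun i => q i - (k / N : ℝ) * (q i - p i)) (h * (1 + k / N)))
      ≤ 2 ^ k * wm w (hc q h) := by
    intro k
    induction k with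
    | zero => simp
    | succ k ih =>
      have hk0 : (0 : ℝ) ≤ k / N := by positivity
      have hk1 : ((k + 1 : ℕ) : ℝ) / N = k / N + 1 / N := by push_cast; ring
      have hd : (0 : ℝ) < 1 / N := by positivity
      have hpos' : 0 < h * (1 + ((k + 1 : ℕ) : ℝ) / N) := by positivity
      refine (doubling_step hg hw (q := fun i => q i - (k / N : ℝ) * (q i - p i))
        (h := h * (1 + k / N)) hpos' ?_ ?_).trans ?_
      · intro x hx i
        have hxi := hx i
        rw [hk1]
        have h3 := hpq i
        generalize (k / N : ℝ) = s at *
        generalize (1 / N : ℝ) = d at *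
        simp only at hxi ⊢
        constructor
        · nlinarith
        · nlinarith
      · rw [vol_hc, vol_hc, ← haα, ← ENNReal.ofReal_pow (by positivity),
          ← ENNReal.ofReal_pow (by positivity), ← ENNReal.ofReal_mul ha0.le,
          ← ENNReal.ofReal_add (by positivity) (by positivity)]
        refine ENNReal.ofReal_le_ofReal ?_
        rw [hk1]
        set H := h * (1 + (k / N + 1 / N : ℝ)) with hH
        have hHpos : 0 < H := by positivity
        have h4 : H * (1 - 1 / N) ≤ h * (1 + k / N) := by
          rw [hH]
          have : (1 + (k / N + 1 / N : ℝ)) * (1 - 1 / N) ≤ 1 + k / N := by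
            generalize (k / N : ℝ) = s at *
            generalize (1 / N : ℝ) = d at *
            nlinarith
          calc _ = h * ((1 + (k / N + 1 / N : ℝ)) * (1 - 1 / N)) := by ring
            _ ≤ _ := by gcongr
        have h5 : (0 : ℝ) ≤ 1 - 1 / N := by
          rw [sub_nonneg, div_le_one hNpos]; exact hN1.le
        have h6 : 1 - a ≤ (1 - 1 / N : ℝ) ^ n := by
          have := one_add_mul_le_pow (a := (-(1 / N) : ℝ)) (by linarith) n
          have h7 : (n : ℝ) * (1 / N) ≤ a := by
            rw [mul_one_div, div_le_iff₀ hNpos]; exact hN2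
          have h8 : (1 + -(1 / N) : ℝ) = 1 - 1 / N := by ring
          rw [h8] at this
          linarith
        have h9 : H ^ n * (1 - 1 / N : ℝ) ^ n ≤ (h * (1 + k / N)) ^ n := by
          rw [← mul_pow]; exact pow_le_pow_left₀ (by positivity) h4 n
        have h10 : H ^ n * (1 - a) ≤ H ^ n * (1 - 1 / N : ℝ) ^ n := by gcongr
        linarith
      · rw [pow_succ, mul_comm _ (2 : ℝ≥0∞), mul_assoc]
        gcongr
  have := key N
  rw [div_self hNpos.ne'] at this
  convert this using 3
  · funext i; ring
  · ring

/-- Lower level sets of the weight are small. -/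
lemma low_of_halfP {n : ℕ} (hn : 0 < n) {α : ℝ≥0∞} 
    {w : ESp n → ℝ≥0∞} (hg : GoodW w) (hw : HalfP w α) {N : ℕ}
    (hN : ∀ (p q : Fin n → ℝ) (h : ℝ), 0 < h →
      hc q h ⊆ hc p (2 * h) → wm w (hc p (2 * h)) ≤ 2 ^ N * wm w (hc q h)) (m : ℕ) :
    ∀ (c : Fin n → ℝ) (h : ℝ), 0 < h →
      volume (hc c h ∩ {x | w x * volume (hc c h) ≤ ((8 * 2 ^ N)⁻¹) ^ m * wm w (hc c h)})
        ≤ (1 - α) ^ m * volume (hc c h) := by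
  set γ : ℝ≥0∞ := (8 * 2 ^ N)⁻¹ with hγ
  have hγ4 : γ * (4 * 2 ^ N) ≤ 1 := by
    rw [hγ]
    calc (8 * 2 ^ N : ℝ≥0∞)⁻¹ * (4 * 2 ^ N) ≤ (8 * 2 ^ N : ℝ≥0∞)⁻¹ * (8 * 2 ^ N) := by
          gcongr; norm_num
      _ ≤ 1 := ENNReal.inv_mul_le_one _
  have hγlt : γ < 4⁻¹ := by
    rw [hγ, ENNReal.inv_lt_inv]
    calc (4 : ℝ≥0∞) < 8 * 1 := by norm_num
      _ ≤ 8 * 2 ^ N := by gcongr; exact one_le_pow₀ (by norm_num)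
  have hγ1 : γ ≤ 1 := hγlt.le.trans (by simp)
  induction m with
  | zero => intro c h hh; simpa using measure_mono inter_subset_left
  | succ m ih =>
    intro c h hh
    obtain ⟨hQ0, hQt⟩ := hg.2 c h hh
    set Q := hc c h with hQ
    have hv0 : volume Q ≠ 0 := vol_hc_pos c hh
    have hvt : volume Q ≠ ⊤ := vol_hc_fin c h
    set μ := wm w with hμ
    set l := μ Q / volume Q with hl
    have hlQ : l * volume Q = μ Q := ENNReal.div_mul_cancel hv0 hvt
    have hlt : l ≠ ⊤ := (ENNReal.div_lt_top hQt hv0).ne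
    have hl0 : l ≠ 0 := by rw [hl]; exact (ENNReal.div_pos hQ0 hvt).ne'
    have hFeq : Q ∩ {x | w x * volume Q ≤ γ ^ (m + 1) * μ Q} = Q ∩ {x | w x ≤ γ ^ (m + 1) * l} := by
      ext x
      simp only [mem_inter_iff, mem_ofPred_eq, ← hlQ, ← mul_assoc]
      rw [ENNReal.mul_le_mul_iff_left hv0 hvt]
    rw [hFeq]
    set F := Q ∩ {x | w x ≤ γ ^ (m + 1) * l} with hF
    have hFm : MeasurableSet F := (meas_hc c h).inter (measurableSet_le hg.1 measurable_const)
    let S : Set (Set (ESp n)) := {R ∈ Dy c h | R ⊆ Q ∧ μ R < 4⁻¹ * l * volume R}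
    have hS : S ⊆ Dy c h := fun R hR => hR.1
    have hUQ : ⋃₀ S ⊆ Q := sUnion_subset fun R hR => hR.2.1
    have hUm := sUnion_meas hh hS
    have hdiff := dy_diff c hh hg.1 (by rwa [hμ, withDensity_apply _ (meas_hc c h)] at hQt)
    have hlow : γ ^ (m + 1) * l < 4⁻¹ * l := by
      rw [ENNReal.mul_lt_mul_iff_left hl0 hlt]
      refine lt_of_le_of_lt ?_ hγlt
      rw [pow_succ]
      exact mul_le_of_le_one_left bot_le (pow_le_one₀ bot_le hγ1)
    have hsub : F ≤ᵐ[volume] (F ∩ ⋃₀ S : Set (ESp n)) := by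
      filter_upwards [hdiff] with x hx hxF
      obtain ⟨j, hj⟩ := (hx hxF.1 (4⁻¹ * l)).2 (lt_of_le_of_lt hxF.2 hlow)
      refine ⟨hxF, dy c h j x, ⟨⟨j, x, rfl⟩, dy_sub_top hh hxF.1 j, ?_⟩, mem_dy c h j x⟩
      rwa [hμ, withDensity_apply _ (dy_meas c hh j x)]
    have h1 : volume (F ∩ ⋃₀ S) ≤ (1 - α) ^ m * volume (⋃₀ S) := by
      refine sUnion_bound hh hS _ _ _ hFm fun P hP => ?_
      obtain ⟨x, hx⟩ : P.Nonempty := by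
        rw [nonempty_iff_ne_empty]; rintro rfl; have := hP.1.2.2; simp at this
      have hxQ : x ∈ Q := hP.1.2.1 hx
      obtain ⟨j, rfl, hj⟩ := maxF_parent hh hn hS hP hx (by
        rw [dy_zero hh hxQ]
        rintro ⟨-, -, h3⟩
        refine absurd h3 (not_lt.2 ?_)
        rw [← hQ, mul_assoc, hlQ]
        exact mul_le_of_le_one_left bot_le (by simp))
      have hj' : 4⁻¹ * l * volume (dy c h j x) ≤ μ (dy c h j x) := by
        by_contra hcon
        exact hj ⟨⟨j, x, rfl⟩, dy_sub_top hh hxQ j, not_le.1 hcon⟩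
      have hdb : μ (dy c h j x) ≤ 2 ^ N * μ (dy c h (j + 1) x) := by
        have hs := dy_succ_sub c h j x
        have e : h / 2 ^ j = 2 * (h / 2 ^ (j + 1)) := by rw [pow_succ]; field_simp
        rw [dy_eq_hc c hh, dy_eq_hc c hh, e] at hs ⊢
        exact hN _ _ _ (by positivity) hs
      have hlP : γ * l * volume (dy c h (j + 1) x) ≤ μ (dy c h (j + 1) x) := by
        set P := dy c h (j + 1) x
        have h5 : l * volume P ≤ 4 * 2 ^ N * μ P := by
          calc l * volume P ≤ l * volume (dy c h j x) := by
                gcongr; exact dy_succ_sub c h j x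
            _ = 4 * (4⁻¹ * l * volume (dy c h j x)) := by
              rw [← mul_assoc, ← mul_assoc, ENNReal.mul_inv_cancel (by simp) (by simp), one_mul]
            _ ≤ 4 * (2 ^ N * μ P) := mul_le_mul_right (hj'.trans hdb) 4
            _ = _ := by ring
        calc γ * l * volume P = γ * (l * volume P) := by ring
          _ ≤ γ * (4 * 2 ^ N * μ P) := by gcongr
          _ = (γ * (4 * 2 ^ N)) * μ P := by ring
          _ ≤ μ P := mul_le_of_le_one_left bot_le hγ4
      have hih := ih (dyc c h (j + 1) x) (h / 2 ^ (j + 1)) (by positivity)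
      rw [← dy_eq_hc c hh] at hih
      refine le_trans (measure_mono ?_) hih
      rintro y ⟨hyF, hyP⟩
      refine ⟨hyP, ?_⟩
      have hyl : w y ≤ γ ^ (m + 1) * l := hyF.2
      show w y * volume (dy c h (j + 1) x) ≤ γ ^ m * μ (dy c h (j + 1) x)
      calc w y * volume (dy c h (j + 1) x) ≤ γ ^ (m + 1) * l * volume (dy c h (j + 1) x) := by
            gcongr
        _ = γ ^ m * (γ * l * volume (dy c h (j + 1) x)) := by rw [pow_succ]; ring
        _ ≤ _ := by gcongr
    have h2 : volume (⋃₀ S) ≤ (1 - α) * volume Q := by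
      have hwU : μ (⋃₀ S) ≤ 4⁻¹ * l * volume (⋃₀ S) := by
        have := sUnion_bound hh hS μ volume (4⁻¹ * l) MeasurableSet.univ (by
          intro P hP; rw [univ_inter]; exact hP.1.2.2.le)
        rwa [univ_inter] at this
      have hwU2 : μ (⋃₀ S) ≤ 4⁻¹ * μ Q := by
        refine hwU.trans ?_
        rw [← hlQ, ← mul_assoc]; gcongr
      have h3 : α * volume Q ≤ volume (Q \ ⋃₀ S) := by
        by_contra hcon
        have h4 := hw c h hh _ ((meas_hc c h).diff hUm) sdiff_subset (not_le.1 hcon).le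
        have h5 : μ Q ≤ 4⁻¹ * μ Q + 2⁻¹ * μ Q := by
          calc μ Q ≤ μ (⋃₀ S ∪ (Q \ ⋃₀ S)) :=
                measure_mono (by rw [union_sdiff_self]; exact subset_union_right)
            _ ≤ _ := (measure_union_le _ _).trans (by gcongr)
        rw [← add_mul] at h5
        have h6 : (4⁻¹ + 2⁻¹ : ℝ≥0∞) < 1 := by
          rw [← ENNReal.inv_two_add_inv_two]
          refine ENNReal.add_lt_add_right (by simp) ?_
          rw [ENNReal.inv_lt_inv]; norm_num
        have h7 : (4⁻¹ + 2⁻¹ : ℝ≥0∞) * μ Q < 1 * μ Q :=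
          (ENNReal.mul_lt_mul_iff_left hQ0 hQt).2 h6
        rw [one_mul] at h7
        exact absurd h5 (not_le.2 h7)
      rw [measure_sdiff hUQ hUm.nullMeasurableSet ((measure_mono hUQ).trans_lt hvt.lt_top).ne] at h3
      rw [ENNReal.sub_mul (fun _ _ => hvt), one_mul]
      have h8 : volume (⋃₀ S) ≤ volume Q := measure_mono hUQ
      have h9 : α * volume Q ≤ volume Q := h3.trans tsub_le_self
      refine ENNReal.le_sub_of_add_le_left (h9.trans_lt hvt.lt_top).ne ?_
      calc α * volume Q + volume (⋃₀ S) ≤ (volume Q - volume (⋃₀ S)) + volume (⋃₀ S) := by gcongr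
        _ = volume Q := tsub_add_cancel_of_le h8
    calc volume F ≤ volume (F ∩ ⋃₀ S) := measure_mono_ae hsub
      _ ≤ (1 - α) ^ m * volume (⋃₀ S) := h1
      _ ≤ (1 - α) ^ m * ((1 - α) * volume Q) := by gcongr
      _ = _ := by rw [pow_succ]; ring


/-- The three decay properties used in the main dyadic argument. -/
def BaseP {n : ℕ} (a : ℝ≥0∞) (u v : ESp n → ℝ≥0∞) : Prop :=
  ∀ (c : Fin n → ℝ) (h : ℝ), 0 < h → ∀ m : ℕ,
    (∀ E : Set (ESp n), MeasurableSet E → E ⊆ hc c h →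
      volume E ≤ (a⁻¹) ^ m * volume (hc c h) →
        wm u E ≤ (2⁻¹) ^ m * wm u (hc c h) ∧ wm v E ≤ (2⁻¹) ^ m * wm v (hc c h)) ∧
    wm u (hc c h ∩ {x | v x * volume (hc c h) ≤ (a⁻¹) ^ m * wm v (hc c h)})
      ≤ (2⁻¹) ^ m * wm u (hc c h)

lemma exists_base {n : ℕ} (hn : 0 < n) {Ku Kv : ℝ≥0∞} (hKu : Ku < ⊤) (hKv : Kv < ⊤) :
    ∃ a : ℝ≥0∞, 2 ≤ a ∧ a < ⊤ ∧ ∀ u v : ESp n → ℝ≥0∞, GoodW u → GoodW v → FWd u Ku → FWd v Kv →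
      BaseP a u v := by
  obtain ⟨αu, hu0, hu1, hu⟩ := halfP_of_FWd hn hKu
  obtain ⟨αv, hv0, hv1, hv⟩ := halfP_of_FWd hn hKv
  obtain ⟨N, hN⟩ := doubling_exists (n := n) hv0 hv1
  have h2n : ((2 : ℝ≥0∞) ^ n)⁻¹ ≠ 0 := by simp
  have hβu : αu * (2 ^ n)⁻¹ ≠ 0 := mul_ne_zero hu0.ne' h2n
  have hβv : αv * (2 ^ n)⁻¹ ≠ 0 := mul_ne_zero hv0.ne' h2n
  obtain ⟨m0, hm0⟩ : ∃ m0 : ℕ, (1 - αv) ^ m0 < αu * (2 ^ n)⁻¹ := by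
    have h1 : 1 - αv < 1 := ENNReal.sub_lt_self (by simp) (by simp) hv0.ne'
    exact ((ENNReal.tendsto_pow_atTop_nhds_zero_of_lt_one h1).eventually_lt_const
      (pos_iff_ne_zero.2 hβu)).exists
  refine ⟨max (max 2 ((8 * 2 ^ N) ^ m0)) (max (αu * (2 ^ n)⁻¹)⁻¹ (αv * (2 ^ n)⁻¹)⁻¹),
    (le_max_left _ _).trans (le_max_left _ _), ?_, ?_⟩
  · refine max_lt (max_lt (by simp) ?_) (max_lt ?_ ?_)
    · exact ENNReal.pow_lt_top (ENNReal.mul_lt_top (by simp) (ENNReal.pow_lt_top (by simp)))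
    · exact ENNReal.inv_lt_top.2 (pos_iff_ne_zero.2 hβu)
    · exact ENNReal.inv_lt_top.2 (pos_iff_ne_zero.2 hβv)
  intro u v gu gv fu fv c h hh m
  set a := max (max 2 ((8 * 2 ^ N) ^ m0)) (max (αu * (2 ^ n)⁻¹)⁻¹ (αv * (2 ^ n)⁻¹)⁻¹) with ha
  have hau : a⁻¹ ≤ αu * (2 ^ n)⁻¹ := by
    rw [ENNReal.inv_le_iff_inv_le]; exact (le_max_left _ _).trans (le_max_right _ _)
  have hav : a⁻¹ ≤ αv * (2 ^ n)⁻¹ := by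
    rw [ENNReal.inv_le_iff_inv_le]; exact (le_max_right _ _).trans (le_max_right _ _)
  have haN : a⁻¹ ≤ ((8 * 2 ^ N)⁻¹) ^ m0 := by
    rw [ENNReal.inv_le_iff_inv_le, ENNReal.inv_pow, inv_inv]
    exact (le_max_right _ _).trans (le_max_left _ _)
  have Hu := hu u gu fu
  have Hv := hv v gv fv
  refine ⟨fun E hE hEQ hvE => ⟨?_, ?_⟩, ?_⟩
  · exact decay_of_halfP hn hu0 hu1 Hu hh m E hE hEQ (hvE.trans (by gcongr))
  · exact decay_of_halfP hn hv0 hv1 Hv hh m E hE hEQ (hvE.trans (by gcongr))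
  · refine decay_of_halfP hn hu0 hu1 Hu hh m _ ?_ inter_subset_left ?_
    · exact (meas_hc _ _).inter (measurableSet_le (gv.1.mul_const _) measurable_const)
    · refine le_trans (measure_mono ?_)
        ((low_of_halfP hn gv Hv (hN v gv Hv) (m0 * m) c h hh).trans ?_)
      · refine inter_subset_inter_right _ fun x hx => ?_
        simp only [mem_ofPred_eq] at hx ⊢
        refine hx.trans ?_
        rw [pow_mul]
        gcongr
      · rw [pow_mul]
        gcongr

def A1d {n : ℕ} (w : ESp n → ℝ≥0∞) (C : ℝ≥0∞) : Prop :=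
  ∀ (c : Fin n → ℝ) (h : ℝ), 0 < h →
    ∀ᵐ x ∂(volume : Measure (ESp n)), x ∈ hc c h →
      wm w (hc c h) ≤ C * w x * volume (hc c h)

lemma A1d_Dy {n : ℕ} {w : ESp n → ℝ≥0∞} {C : ℝ≥0∞} (hA : A1d w C) {c : Fin n → ℝ} {h : ℝ}
    (hh : 0 < h) : ∀ᵐ x ∂(volume : Measure (ESp n)), ∀ Q ∈ Dy c h, x ∈ Q →
      wm w Q ≤ C * w x * volume Q := by
  rw [ae_ball_iff (Dy_countable c h)]
  intro Q hQ
  obtain ⟨c', h', hh', rfl⟩ := Dy_hc hh hQ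
  exact hA c' h' hh'

lemma FWd_of_A1d {n : ℕ} {w : ESp n → ℝ≥0∞} {C : ℝ≥0∞} (hC : C < ⊤) (hw : GoodW w)
    (hA : A1d w C) : FWd w C := by
  intro c h hh
  have e : wm w (hc c h) = ∫⁻ x in hc c h, w x := withDensity_apply _ (meas_hc _ _)
  rw [e, ← lintegral_const_mul _ hw.1]
  refine lintegral_mono_ae ?_
  filter_upwards [ae_restrict_of_ae (A1d_Dy hA hh)] with x hx
  refine iSup_le fun j => ?_
  rw [ENNReal.div_le_iff (dy_vol_pos c hh j x) (dy_vol_fin c hh j x)]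
  exact hx _ ⟨j, x, rfl⟩ (mem_dy c h j x)

lemma wm_hc_eq {n : ℕ} (w : ESp n → ℝ) (c : Fin n → ℝ) (h : ℝ) :
    wm (fun x => ENNReal.ofReal (w x)) (hc c h) = wMeas w (cc c h) := by
  rw [wMeas, withDensity_apply _ (meas_hc _ _)]
  exact setLIntegral_congr (hc_ae_cc c h)

lemma goodW_of_isWeight {n : ℕ} {w : ESp n → ℝ} (hw : IsWeight w) :
    GoodW (fun x => ENNReal.ofReal (w x)) := by
  refine ⟨hw.1.ennreal_ofReal, fun c h hh => ⟨?_, ?_⟩⟩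
  · rw [withDensity_apply _ (meas_hc _ _), ← pos_iff_ne_zero,
      setLIntegral_pos_iff hw.1.ennreal_ofReal]
    rw [pos_iff_ne_zero]
    intro h0
    refine vol_hc_pos c hh ?_
    rw [← h0]
    refine measure_congr ?_
    filter_upwards [hw.2.2.1] with x hx
    refine propext ⟨fun h1 => ⟨?_, h1⟩, fun h1 => h1.2⟩
    simp [hx]
  · rw [wm_hc_eq]
    exact (hw.2.2.2 _ (isCube_cc c hh)).ne

lemma A1d_of_A1Const {n : ℕ} {w : ESp n → ℝ} {C : ℝ≥0∞} (hA : A1Const w C) :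
    A1d (fun x => ENNReal.ofReal (w x)) C := by
  intro c h hh
  have h1 := hA _ (isCube_cc c hh)
  have h2 := ae_essInf_le (f := fun x => ENNReal.ofReal (w x)) (μ := volume.restrict (cc c h))
  rw [ae_restrict_iff' (meas_cc _ _)] at h2
  have hv : volume (cc c h) = volume (hc c h) := (measure_congr (hc_ae_cc c h)).symm
  rw [← wm_hc_eq, hv, mul_comm, ← div_eq_mul_inv, ENNReal.div_le_iff (vol_hc_pos c hh)
    (vol_hc_fin c h)] at h1
  filter_upwards [h2] with x hx hxQ
  refine h1.trans ?_
  gcongr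
  exact hx (hc_sub_cc _ _ hxQ)

lemma FWd_of_FW {n : ℕ} {w : ESp n → ℝ} {C : ℝ≥0∞} (hw : IsWeight w) (hA : FW w ≤ C) :
    FWd (fun x => ENNReal.ofReal (w x)) C := by
  intro c h hh
  have g := (goodW_of_isWeight hw).2 c h hh
  have h1 : (wMeas w (cc c h))⁻¹ * ∫⁻ x in cc c h, maxFn ((cc c h).indicator w) x ≤ C :=
    le_trans (le_iSup₂_of_le (f := fun (Q : Set (ESp n)) (_ : IsCube Q) =>
      (wMeas w Q)⁻¹ * ∫⁻ x in Q, maxFn (Q.indicator w) x) _ (isCube_cc c hh) le_rfl) hA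
  rw [← wm_hc_eq, mul_comm, ← div_eq_mul_inv, ENNReal.div_le_iff g.1 g.2] at h1
  refine le_trans ?_ h1
  refine le_trans ?_ (lintegral_mono_set (hc_sub_cc _ _))
  refine setLIntegral_mono' (meas_hc _ _) fun x hx => ?_
  refine iSup_le fun j => ?_
  have hsub := dy_sub_top hh hx j
  have hmem := mem_dy c h j x
  rw [dy_eq_hc c hh] at hsub hmem ⊢
  set c' := dyc c h j x
  have hh' : 0 < h / 2 ^ j := by positivity
  set h' := h / 2 ^ j
  refine le_iSup_of_le (cc c' h') (le_iSup_of_le (isCube_cc c' hh')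
    (le_iSup_of_le (hc_sub_cc _ _ hmem) ?_))
  rw [measure_congr (hc_ae_cc c' h'), mul_comm, ← div_eq_mul_inv,
    withDensity_apply _ (meas_hc _ _)]
  refine ENNReal.div_le_div_right ?_ _
  refine le_trans ?_ (lintegral_mono_set (hc_sub_cc _ _))
  refine setLIntegral_mono' (meas_hc _ _) fun y hy => ?_
  rw [indicator_of_mem (hc_sub_cc _ _ (hsub hy))]
  exact ENNReal.ofReal_le_ofReal (le_abs_self _)


lemma tsum_natAbs_le : ∑' i : ℤ, (2⁻¹ : ℝ≥0∞) ^ i.natAbs ≤ 4 := by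
  rw [tsum_of_nat_of_neg_add_one ENNReal.summable ENNReal.summable]
  have h1 : ∑' n : ℕ, (2⁻¹ : ℝ≥0∞) ^ ((n : ℤ)).natAbs = 2 := by
    simp only [Int.natAbs_natCast]
    rw [ENNReal.tsum_geometric, ENNReal.one_sub_inv_two, inv_inv]
  have h2 : ∑' n : ℕ, (2⁻¹ : ℝ≥0∞) ^ ((-((n : ℤ) + 1))).natAbs ≤ 2 := by
    refine le_trans ?_ h1.le
    refine ENNReal.tsum_le_tsum fun n => ?_
    have h3 : (2⁻¹ : ℝ≥0∞) ≤ 1 := by simp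
    have h4 : ((n : ℤ)).natAbs ≤ (-((n : ℤ) + 1)).natAbs := by omega
    exact pow_le_pow_right_of_le_one' h3 h4
  rw [h1]
  calc (2 : ℝ≥0∞) + _ ≤ 2 + 2 := by gcongr
    _ = 4 := by norm_num

lemma tsum_natAbs_sub_le (k : ℤ) : ∑' i : ℤ, (2⁻¹ : ℝ≥0∞) ^ (i - k).natAbs ≤ 4 := by
  exact ((Equiv.subRight k).tsum_eq (fun i : ℤ => (2⁻¹ : ℝ≥0∞) ^ i.natAbs)).trans_le
    tsum_natAbs_le

lemma half_pow_eq (m : ℕ) : (2⁻¹ : ℝ≥0∞) ^ m = 2 * 2⁻¹ ^ (m + 1) := by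
  rw [pow_succ, mul_comm, mul_assoc, ENNReal.inv_mul_cancel (by simp) (by simp), mul_one]

lemma zpow_shift {a x y : ℝ≥0∞} (ha : a ≠ 0) (ha' : a ≠ ⊤) {k K : ℤ} {m : ℕ}
    (hm : k = K + m) (h : a ^ k * x ≤ a ^ K * y) : x ≤ (a⁻¹) ^ m * y := by
  have h1 : a ^ k = a ^ K * a ^ m := by
    rw [hm, ENNReal.zpow_add ha ha', zpow_natCast]
  rw [h1, mul_assoc, ENNReal.mul_le_mul_iff_right (ENNReal.zpow_pos ha ha' K).ne'
    (ENNReal.zpow_ne_top ha ha' K)] at h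
  rw [← ENNReal.inv_pow, ← ENNReal.div_eq_inv_mul, ENNReal.le_div_iff_mul_le
    (Or.inl (pow_ne_zero _ ha)) (Or.inl (ENNReal.pow_ne_top ha')), mul_comm]
  exact h

lemma dyadic_lower {x : ℝ≥0∞} (hx : x ≠ ⊤) :
    x ≤ 2 * ∑' r : ℤ, (if (2 : ℝ≥0∞) ^ r ≤ x then (2 : ℝ≥0∞) ^ r else 0) := by
  rcases eq_or_ne x 0 with rfl | h0
  · simp
  obtain ⟨R, hR⟩ := ENNReal.exists_mem_Ico_zpow h0 hx (by norm_num : (1 : ℝ≥0∞) < 2) (by simp)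
  calc x ≤ 2 ^ (R + 1) := hR.2.le
    _ = 2 * 2 ^ R := by rw [ENNReal.zpow_add (by simp) (by simp), zpow_one, mul_comm]
    _ ≤ _ := by
      refine mul_le_mul_right ?_ 2
      refine le_trans ?_ (ENNReal.le_tsum R)
      rw [if_pos hR.1]

lemma dyadic_upper {x : ℝ≥0∞} (hx : x ≠ ⊤) :
    ∑' r : ℤ, (if (2 : ℝ≥0∞) ^ r ≤ x then (2 : ℝ≥0∞) ^ r else 0) ≤ 4 * x := by
  rcases eq_or_ne x 0 with rfl | h0
  · have : ∀ r : ℤ, ¬ ((2 : ℝ≥0∞) ^ r ≤ 0) := fun r =>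
      not_le.2 (ENNReal.zpow_pos (by simp) (by simp) r)
    simp only [this, if_false]; simp
  obtain ⟨R, hR⟩ := ENNReal.exists_mem_Ico_zpow h0 hx (by norm_num : (1 : ℝ≥0∞) < 2) (by simp)
  calc _ ≤ ∑' r : ℤ, (2⁻¹ : ℝ≥0∞) ^ (r - R).natAbs * x := by
        refine ENNReal.tsum_le_tsum fun r => ?_
        split_ifs with h
        · have hrR : r ≤ R := by
            by_contra hc
            have : (2 : ℝ≥0∞) ^ (R + 1) ≤ 2 ^ r := ENNReal.zpow_le_of_le (by simp) (by omega)
            exact absurd (this.trans h) (not_le.2 hR.2)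
          have := zpow_shift (a := 2) (x := (2 : ℝ≥0∞) ^ r) (y := (2 : ℝ≥0∞) ^ R) (by simp)
            (by simp) (k := R) (K := r) (m := (r - R).natAbs) (by omega) (by rw [mul_comm])
          exact this.trans (by gcongr; exact hR.1)
        · simp
    _ = (∑' r : ℤ, (2⁻¹ : ℝ≥0∞) ^ (r - R).natAbs) * x := ENNReal.tsum_mul_right
    _ ≤ 4 * x := by gcongr; exact tsum_natAbs_sub_le R

/-- `K` records the size of the averages of `v`. -/
def Lev {n : ℕ} (c : Fin n → ℝ) (h : ℝ) (a : ℝ≥0∞) (v : ESp n → ℝ≥0∞)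
    (K : Set (ESp n) → ℤ) : Prop :=
  ∀ Q ∈ Dy c h, a ^ K Q * volume Q ≤ wm v Q ∧ wm v Q ≤ a ^ (K Q + 1) * volume Q

lemma exists_Lev {n : ℕ} (c : Fin n → ℝ) {h : ℝ} (hh : 0 < h) {a : ℝ≥0∞} (ha : 2 ≤ a)
    (ha' : a < ⊤) {v : ESp n → ℝ≥0∞} (hv : GoodW v) : ∃ K, Lev c h a v K := by
  have : ∀ Q : Set (ESp n), ∃ k : ℤ, Q ∈ Dy c h →
      a ^ k * volume Q ≤ wm v Q ∧ wm v Q ≤ a ^ (k + 1) * volume Q := by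
    intro Q
    by_cases hQ : Q ∈ Dy c h
    · obtain ⟨c', h', hh', rfl⟩ := Dy_hc hh hQ
      have g := hv.2 c' h' hh'
      have p := vol_hc_pos c' hh'
      have f := vol_hc_fin c' h'
      obtain ⟨k, hk⟩ := ENNReal.exists_mem_Ico_zpow (x := wm v (hc c' h') / volume (hc c' h'))
        (y := a) (by simp [ENNReal.div_eq_zero_iff, g.1, f]) (ENNReal.div_ne_top g.2 p)
        (lt_of_lt_of_le (by norm_num) ha) ha'.ne
      refine ⟨k, fun _ => ⟨?_, ?_⟩⟩
      · exact (ENNReal.le_div_iff_mul_le (Or.inl p) (Or.inl f)).1 hk.1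
      · exact (ENNReal.div_le_iff p f).1 hk.2.le
    · exact ⟨0, fun h => absurd h hQ⟩
  choose K hK using this
  exact ⟨K, fun Q hQ => hK Q hQ⟩

lemma tsum_fiber {n : ℕ} (𝒢 : Set (Set (ESp n))) (K : Set (ESp n) → ℤ)
    (f : Set (ESp n) → ℝ≥0∞) :
    ∑' Q : 𝒢, f Q = ∑' k : ℤ, ∑' Q : {Q ∈ 𝒢 | K Q = k}, f Q := by
  rw [tsum_subtype 𝒢 f]
  simp_rw [tsum_subtype {Q ∈ 𝒢 | K Q = _} f]
  rw [ENNReal.tsum_comm]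
  refine tsum_congr fun Q => ?_
  rw [tsum_eq_single (K Q)]
  · by_cases hQ : Q ∈ 𝒢 <;> simp [indicator, hQ]
  · intro k hk
    rw [indicator_of_notMem]
    rintro ⟨_, h2⟩
    exact hk h2.symm

lemma packing {n : ℕ} {c : Fin n → ℝ} {h : ℝ} (hh : 0 < h) {a : ℝ≥0∞} (ha : 2 ≤ a)
    (ha' : a < ⊤) {u v : ESp n → ℝ≥0∞} (hB : BaseP a u v)
    {K : Set (ESp n) → ℤ} (hK : Lev c h a v K) {𝒢 : Set (Set (ESp n))} (hG : 𝒢 ⊆ Dy c h)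
    (hmono : ∀ Q ∈ 𝒢, ∀ P ∈ 𝒢, Q ⊆ P → K P ≤ K Q)
    (hdisj : ∀ k, {Q ∈ 𝒢 | K Q = k}.PairwiseDisjoint id) :
    ∑' Q : 𝒢, wm v Q ≤ 8 * wm v (⋃₀ 𝒢) := by
  have ha0 : a ≠ 0 := (lt_of_lt_of_le (by norm_num) ha).ne'
  have hGk : ∀ k, {Q ∈ 𝒢 | K Q = k} ⊆ Dy c h := fun k Q hQ => hG hQ.1
  have key : ∀ P ∈ maxF 𝒢, ∀ k : ℤ, wm v (P ∩ ⋃₀ {Q ∈ 𝒢 | K Q = k})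
      ≤ 2 * 2⁻¹ ^ (k - K P).natAbs * wm v P := by
    intro P hP k
    have hPD := hG hP.1
    have hPm := Dy_meas hh hPD
    have hin : ∀ Q ∈ 𝒢, (P ∩ Q).Nonempty → Q ⊆ P := by
      intro Q hQ hne
      rcases Dy_nested hPD (hG hQ) hne with h1 | h1
      · rw [hP.2 Q hQ h1]
      · exact h1
    rcases lt_trichotomy k (K P) with hk | hk | hk
    · have : P ∩ ⋃₀ {Q ∈ 𝒢 | K Q = k} = ∅ := by
        rw [eq_empty_iff_forall_notMem]
        rintro x ⟨hxP, Q, ⟨hQ, hQk⟩, hxQ⟩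
        have := hmono Q hQ P hP.1 (hin Q hQ ⟨x, hxP, hxQ⟩)
        omega
      rw [this]; simp
    · rw [hk, sub_self, Int.natAbs_zero, pow_zero, mul_one, two_mul]
      exact (measure_mono inter_subset_left).trans le_self_add
    · have hUm := sUnion_meas hh (hGk k)
      have hvol : a ^ k * volume (P ∩ ⋃₀ {Q ∈ 𝒢 | K Q = k}) ≤ a ^ (K P + 1) * volume P := by
        calc _ ≤ wm v (P ∩ ⋃₀ {Q ∈ 𝒢 | K Q = k}) := by
              rw [measure_sUnion_inter hh (hGk k) (hdisj k) _ hPm,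
                measure_sUnion_inter hh (hGk k) (hdisj k) _ hPm, ← ENNReal.tsum_mul_left]
              refine ENNReal.tsum_le_tsum fun Q => ?_
              rcases (P ∩ (Q : Set (ESp n))).eq_empty_or_nonempty with he | hne
              · rw [he]; simp
              · rw [inter_eq_right.2 (hin Q Q.2.1 hne)]
                have := (hK Q (hG Q.2.1)).1
                rwa [Q.2.2] at this
          _ ≤ wm v P := measure_mono inter_subset_left
          _ ≤ _ := (hK P hPD).2
      obtain ⟨m, hm⟩ : ∃ m : ℕ, k = K P + 1 + m := ⟨(k - K P - 1).toNat, by omega⟩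
      have h3 := zpow_shift ha0 ha'.ne hm hvol
      have h4 : (k - K P).natAbs = m + 1 := by omega
      rw [h4, ← half_pow_eq]
      obtain ⟨c', h', hh', rfl⟩ := Dy_hc hh hPD
      exact ((hB c' h' hh' m).1 _ (hPm.inter hUm) inter_subset_left h3).2
  have hU : ∀ k, ⋃₀ {Q ∈ 𝒢 | K Q = k} ⊆ ⋃₀ maxF 𝒢 := by
    intro k
    rw [maxF_sUnion hG]
    exact sUnion_subset_sUnion fun Q hQ => hQ.1
  calc ∑' Q : 𝒢, wm v Q = ∑' k : ℤ, ∑' Q : {Q ∈ 𝒢 | K Q = k}, wm v Q :=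
        tsum_fiber 𝒢 K (fun Q => wm v Q)
    _ = ∑' k : ℤ, wm v (⋃₀ {Q ∈ 𝒢 | K Q = k}) := by
        refine tsum_congr fun k => ?_
        rw [measure_sUnion' hh (hGk k) (hdisj k)]
    _ = ∑' k : ℤ, ∑' P : maxF 𝒢, wm v (P ∩ ⋃₀ {Q ∈ 𝒢 | K Q = k}) := by
        refine tsum_congr fun k => ?_
        conv_lhs => rw [← inter_eq_left.2 (hU k)]
        rw [measure_sUnion_inter hh ((maxF_sub 𝒢).trans hG) (maxF_disj hG) _
          (sUnion_meas hh (hGk k))]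
        refine tsum_congr fun P => by rw [inter_comm]
    _ = ∑' P : maxF 𝒢, ∑' k : ℤ, wm v (P ∩ ⋃₀ {Q ∈ 𝒢 | K Q = k}) := ENNReal.tsum_comm
    _ ≤ ∑' P : maxF 𝒢, 8 * wm v P := by
        refine ENNReal.tsum_le_tsum fun P => ?_
        calc _ ≤ ∑' k : ℤ, 2 * 2⁻¹ ^ (k - K P).natAbs * wm v P :=
              ENNReal.tsum_le_tsum fun k => key P P.2 k
          _ = 2 * (∑' k : ℤ, 2⁻¹ ^ (k - K P).natAbs) * wm v P := by
              rw [ENNReal.tsum_mul_right, ENNReal.tsum_mul_left]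
          _ ≤ 2 * 4 * wm v P := by gcongr; exact tsum_natAbs_sub_le _
          _ = 8 * wm v P := by norm_num
    _ = 8 * wm v (⋃₀ 𝒢) := by
        rw [ENNReal.tsum_mul_left, ← maxF_sUnion hG,
          measure_sUnion' hh ((maxF_sub 𝒢).trans hG) (maxF_disj hG)]


lemma slice_bound {n : ℕ} {c : Fin n → ℝ} {h : ℝ} (hh : 0 < h) {a : ℝ≥0∞} (ha : 2 ≤ a)
    (ha' : a < ⊤) {u v : ESp n → ℝ≥0∞} (hv : GoodW v) (hB : BaseP a u v)
    {K : Set (ESp n) → ℤ} (hK : Lev c h a v K) {Q : Set (ESp n)} (hQ : Q ∈ Dy c h) (k : ℤ) :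
    wm u ({x | a ^ k < v x ∧ v x ≤ a ^ (k + 1)} ∩ Q) ≤ 2 * 2⁻¹ ^ (K Q - k).natAbs * wm u Q := by
  have ha0 : a ≠ 0 := (lt_of_lt_of_le (by norm_num) ha).ne'
  have hKQ := hK Q hQ
  have hEm : MeasurableSet {x | a ^ k < v x ∧ v x ≤ a ^ (k + 1)} :=
    (measurableSet_lt measurable_const hv.1).inter (measurableSet_le hv.1 measurable_const)
  have hQm := Dy_meas hh hQ
  rcases lt_trichotomy (K Q) k with hk | hk | hk
  · obtain ⟨m, hm⟩ : ∃ m : ℕ, k = K Q + 1 + m := ⟨(k - K Q - 1).toNat, by omega⟩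
    have hvol : a ^ k * volume ({x | a ^ k < v x ∧ v x ≤ a ^ (k + 1)} ∩ Q)
        ≤ a ^ (K Q + 1) * volume Q := by
      calc _ ≤ wm v ({x | a ^ k < v x ∧ v x ≤ a ^ (k + 1)} ∩ Q) := by
            rw [withDensity_apply _ (hEm.inter hQm), ← setLIntegral_const]
            exact setLIntegral_mono' (hEm.inter hQm) fun x hx => hx.1.1.le
        _ ≤ wm v Q := measure_mono inter_subset_right
        _ ≤ _ := hKQ.2
    have h3 := zpow_shift ha0 ha'.ne hm hvol
    have h4 : (K Q - k).natAbs = m + 1 := by omega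
    rw [h4, ← half_pow_eq]
    obtain ⟨c', h', hh', rfl⟩ := Dy_hc hh hQ
    exact ((hB c' h' hh' m).1 _ (hEm.inter hQm) inter_subset_right h3).1
  · rw [hk, sub_self, Int.natAbs_zero, pow_zero, mul_one, two_mul]
    exact (measure_mono inter_subset_right).trans le_self_add
  · obtain ⟨m, hm⟩ : ∃ m : ℕ, K Q = k + 1 + m := ⟨(K Q - k - 1).toNat, by omega⟩
    have h4 : (K Q - k).natAbs = m + 1 := by omega
    rw [h4, ← half_pow_eq]
    have h5 : a ^ (k + 1) * volume Q ≤ a⁻¹ ^ m * wm v Q := by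
      refine zpow_shift (k := K Q) (K := k + 1) ha0 ha'.ne hm ?_
      rw [mul_left_comm]
      gcongr
      exact hKQ.1
    obtain ⟨c', h', hh', rfl⟩ := Dy_hc hh hQ
    refine le_trans (measure_mono ?_) (hB c' h' hh' m).2
    rintro x ⟨hx, hxQ⟩
    refine ⟨hxQ, ?_⟩
    refine le_trans ?_ h5
    gcongr
    exact hx.2

/-- level cubes of the density `G` -/
def SS {n : ℕ} (c : Fin n → ℝ) (h : ℝ) (a : ℝ≥0∞) (G : ESp n → ℝ≥0∞) (k : ℤ) :
    Set (Set (ESp n)) := {Q ∈ Dy c h | a ^ k * volume Q ≤ wm G Q}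

lemma SS_sub {n : ℕ} (c : Fin n → ℝ) (h : ℝ) (a : ℝ≥0∞) (G : ESp n → ℝ≥0∞) (k : ℤ) :
    SS c h a G k ⊆ Dy c h := fun _ hQ => hQ.1

/-- cubes with a prescribed gap between the average of `v` and the stopping level -/
def FF {n : ℕ} (c : Fin n → ℝ) (h : ℝ) (a : ℝ≥0∞) (G : ESp n → ℝ≥0∞) (K : Set (ESp n) → ℤ)
    (l : ℤ) : Set (Set (ESp n)) := {Q | Q ∈ maxF (SS c h a G (K Q - l))}

lemma FF_sum {n : ℕ} {c : Fin n → ℝ} {h : ℝ} (hh : 0 < h) {a : ℝ≥0∞} (ha : 2 ≤ a)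
    (ha' : a < ⊤) {u v G : ESp n → ℝ≥0∞} (hB : BaseP a u v)
    {K : Set (ESp n) → ℤ} (hK : Lev c h a v K) (l : ℤ) {𝒢 : Set (Set (ESp n))}
    (hGF : 𝒢 ⊆ FF c h a G K l) :
    ∑' Q : 𝒢, wm v Q ≤ 8 * (a ^ (l + 1) * wm G (⋃₀ 𝒢)) := by
  have ha0 : a ≠ 0 := (lt_of_lt_of_le (by norm_num) ha).ne'
  have ha1 : 1 ≤ a := le_trans (by norm_num) ha
  have hG : 𝒢 ⊆ Dy c h := fun Q hQ => (hGF hQ).1.1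
  refine (packing hh ha ha' hB hK hG ?_ ?_).trans ?_
  · intro Q hQ P hP hQP
    by_contra hlt
    have hPS : P ∈ SS c h a G (K Q - l) := by
      refine ⟨hG hP, le_trans ?_ (hGF hP).1.2⟩
      refine mul_le_mul_left (ENNReal.zpow_le_of_le ha1 ?_) _
      omega
    have := (hGF hQ).2 P hPS hQP
    rw [this] at hlt
    exact hlt le_rfl
  · intro k
    refine (maxF_disj (SS_sub c h a G (k - l))).subset ?_
    rintro Q ⟨hQ, rfl⟩
    exact hGF hQ
  · refine mul_le_mul_right ?_ 8
    have := sUnion_bound hh hG (wm v) (wm G) (a ^ (l + 1)) MeasurableSet.univ (by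
      intro P hP
      rw [univ_inter]
      have h1 := (hK P (hG hP.1)).2
      have h2 := (hGF hP.1).1.2
      calc wm v P ≤ a ^ (K P + 1) * volume P := h1
        _ = a ^ (l + 1) * (a ^ (K P - l) * volume P) := by
          rw [← mul_assoc, ← ENNReal.zpow_add ha0 ha'.ne]; congr 2; ring
        _ ≤ _ := mul_le_mul_right h2 _)
    rwa [univ_inter] at this

lemma FF_weighted {n : ℕ} {c : Fin n → ℝ} {h : ℝ} (hh : 0 < h) {a : ℝ≥0∞} (ha : 2 ≤ a)
    (ha' : a < ⊤) {u v G : ESp n → ℝ≥0∞} (hu : GoodW u) (huf : ∀ x, u x ≠ ⊤)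
    (hGm : Measurable G) (hB : BaseP a u v)
    {Cu : ℝ≥0∞} (hCu : Cu < ⊤) (hA : A1d u Cu)
    {K : Set (ESp n) → ℤ} (hK : Lev c h a v K) (l : ℤ) :
    ∑' Q : FF c h a G K l, a ^ (K Q - l) * wm u Q ≤ 64 * a * Cu * ∫⁻ x, G x * u x := by
  have ha0 : a ≠ 0 := (lt_of_lt_of_le (by norm_num) ha).ne'
  have hFD : FF c h a G K l ⊆ Dy c h := fun Q hQ => hQ.1.1
  set GG : ℤ → Set (Set (ESp n)) := fun r =>
    {Q ∈ FF c h a G K l | (2 : ℝ≥0∞) ^ r ≤ wm u Q / volume Q} with hGG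
  have hGD : ∀ r, GG r ⊆ Dy c h := fun r Q hQ => hFD hQ.1
  have hpt : ∀ Q ∈ FF c h a G K l, a ^ (K Q - l) * wm u Q ≤ 2 * a ^ (-l) *
      ∑' r : ℤ, (if (2 : ℝ≥0∞) ^ r ≤ wm u Q / volume Q then 2 ^ r * wm v Q else 0) := by
    intro Q hQ
    obtain ⟨hp, hf, hw⟩ : volume Q ≠ 0 ∧ volume Q ≠ ⊤ ∧ wm u Q ≠ ⊤ := by
      obtain ⟨c', h', hh', rfl⟩ := Dy_hc hh (hFD hQ)
      exact ⟨vol_hc_pos c' hh', vol_hc_fin c' h', (hu.2 c' h' hh').2⟩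
    have h1 := dyadic_lower (ENNReal.div_ne_top hw hp)
    calc a ^ (K Q - l) * wm u Q = a ^ (-l) * (a ^ K Q * volume Q) * (wm u Q / volume Q) := by
          rw [sub_eq_add_neg, ENNReal.zpow_add ha0 ha'.ne]
          rw [mul_assoc (a ^ (-l)), mul_assoc (a ^ K Q) (volume Q), ENNReal.mul_div_cancel hp hf]
          ring
      _ ≤ a ^ (-l) * wm v Q * (2 * ∑' r : ℤ,
          (if (2 : ℝ≥0∞) ^ r ≤ wm u Q / volume Q then (2 : ℝ≥0∞) ^ r else 0)) := by
          refine mul_le_mul' (mul_le_mul_right (hK Q (hFD hQ)).1 _) h1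
      _ = 2 * a ^ (-l) * ((∑' r : ℤ,
          (if (2 : ℝ≥0∞) ^ r ≤ wm u Q / volume Q then (2 : ℝ≥0∞) ^ r else 0)) * wm v Q) := by ring
      _ = _ := by
          rw [← ENNReal.tsum_mul_right]
          congr 1
          refine tsum_congr fun r => ?_
          split_ifs <;> simp
  have hpow : a ^ (-l) * a ^ (l + 1) = a := by
    rw [← ENNReal.zpow_add ha0 ha'.ne]; simp
  calc ∑' Q : FF c h a G K l, a ^ (K Q - l) * wm u Q
      ≤ ∑' Q : FF c h a G K l, 2 * a ^ (-l) * ∑' r : ℤ,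
        (if (2 : ℝ≥0∞) ^ r ≤ wm u (Q : Set (ESp n)) / volume (Q : Set (ESp n))
          then 2 ^ r * wm v Q else 0) :=
        ENNReal.tsum_le_tsum fun Q => hpt Q Q.2
    _ = 2 * a ^ (-l) * ∑' r : ℤ, 2 ^ r * ∑' Q : GG r, wm v Q := by
        rw [ENNReal.tsum_mul_left, ENNReal.tsum_comm]
        congr 1
        refine tsum_congr fun r => ?_
        rw [tsum_subtype (GG r) (fun Q => wm v Q), tsum_subtype (FF c h a G K l) (fun Q =>
          if (2 : ℝ≥0∞) ^ r ≤ wm u Q / volume Q then 2 ^ r * wm v Q else 0),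
          ← ENNReal.tsum_mul_left]
        refine tsum_congr fun Q => ?_
        by_cases h1 : Q ∈ FF c h a G K l <;>
          by_cases h2 : (2 : ℝ≥0∞) ^ r ≤ wm u Q / volume Q <;> simp [indicator, hGG, h1, h2]
    _ ≤ 2 * a ^ (-l) * ∑' r : ℤ, 2 ^ r * (8 * (a ^ (l + 1) * wm G (⋃₀ GG r))) := by
        gcongr with r
        exact FF_sum hh ha ha' hB hK l fun Q hQ => hQ.1
    _ = 16 * a * ∑' r : ℤ, 2 ^ r * wm G (⋃₀ GG r) := by
        have : ∀ r : ℤ, (2 : ℝ≥0∞) ^ r * (8 * (a ^ (l + 1) * wm G (⋃₀ GG r)))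
          = (8 * a ^ (l + 1)) * (2 ^ r * wm G (⋃₀ GG r)) := fun r => by ring
        simp_rw [this]
        rw [ENNReal.tsum_mul_left, ← mul_assoc]
        congr 1
        calc 2 * a ^ (-l) * (8 * a ^ (l + 1)) = 16 * (a ^ (-l) * a ^ (l + 1)) := by ring
          _ = _ := by rw [hpow]
    _ = 16 * a * ∫⁻ x, ∑' r : ℤ, (⋃₀ GG r).indicator (fun _ => (2 : ℝ≥0∞) ^ r) x ∂(wm G) := by
        rw [lintegral_tsum fun r =>
          (measurable_const.indicator (sUnion_meas hh (hGD r))).aemeasurable]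
        congr 1
        refine tsum_congr fun r => ?_
        rw [lintegral_indicator (sUnion_meas hh (hGD r)), setLIntegral_const]
    _ ≤ 16 * a * ∫⁻ x, 4 * (Cu * u x) ∂(wm G) := by
        refine mul_le_mul_right ?_ _
        refine lintegral_mono_ae ?_
        filter_upwards [(withDensity_absolutelyContinuous volume G).ae_le (A1d_Dy hA hh)] with x hx
        refine le_trans (ENNReal.tsum_le_tsum fun r => ?_)
          (dyadic_upper (ENNReal.mul_ne_top hCu.ne (huf x)))
        by_cases hxr : x ∈ ⋃₀ GG r
        · rw [indicator_of_mem hxr]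
          obtain ⟨Q, hQ, hxQ⟩ := hxr
          have h1 := hx Q (hGD r hQ) hxQ
          rw [if_pos]
          refine hQ.2.trans ?_
          obtain ⟨c', h', hh', rfl⟩ := Dy_hc hh (hGD r hQ)
          rwa [ENNReal.div_le_iff (vol_hc_pos c' hh') (vol_hc_fin c' h')]
        · rw [indicator_of_notMem hxr]; exact bot_le
    _ = 64 * a * Cu * ∫⁻ x, G x * u x := by
        have : ∀ x, 4 * (Cu * u x) = (4 * Cu) * u x := fun x => by ring
        simp_rw [this]
        rw [lintegral_const_mul _ hu.1, lintegral_withDensity_eq_lintegral_mul _ hGm hu.1]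
        simp only [Pi.mul_apply]
        ring

lemma dyadic_main {n : ℕ} {c : Fin n → ℝ} {h : ℝ} (hh : 0 < h) {a : ℝ≥0∞} (ha : 2 ≤ a)
    (ha' : a < ⊤) {u v G : ESp n → ℝ≥0∞} (hu : GoodW u) (huf : ∀ x, u x ≠ ⊤)
    (hv : GoodW v) (hvf : ∀ x, v x ≠ ⊤)
    (hGm : Measurable G) (hB : BaseP a u v)
    {Cu : ℝ≥0∞} (hCu : Cu < ⊤) (hA : A1d u Cu) :
    wm (fun x => u x * v x) {x | ∃ j, v x * volume (dy c h j x) ≤ wm G (dy c h j x)}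
      ≤ 512 * a ^ 2 * Cu * ∫⁻ x, G x * u x := by
  have ha0 : a ≠ 0 := (lt_of_lt_of_le (by norm_num) ha).ne'
  have ha1 : 1 < a := lt_of_lt_of_le (by norm_num) ha
  obtain ⟨K, hK⟩ := exists_Lev c hh ha ha' hv
  set E : ℤ → Set (ESp n) := fun k => {x | a ^ k < v x ∧ v x ≤ a ^ (k + 1)} with hE
  have hEm : ∀ k, MeasurableSet (E k) := fun k =>
    (measurableSet_lt measurable_const hv.1).inter (measurableSet_le hv.1 measurable_const)
  have hSS := fun k => SS_sub c h a G k
  have hcov : {x | ∃ j, v x * volume (dy c h j x) ≤ wm G (dy c h j x)} ⊆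
      {x | v x = 0} ∪ ⋃ k : ℤ, (E k ∩ ⋃₀ SS c h a G k) := by
    rintro x ⟨j, hj⟩
    rcases eq_or_ne (v x) 0 with h0 | h0
    · exact Or.inl h0
    · right
      obtain ⟨k, hk⟩ := ENNReal.exists_mem_Ioc_zpow h0 (hvf x) ha1 ha'.ne
      refine mem_iUnion.2 ⟨k, hk, dy c h j x, ⟨⟨j, x, rfl⟩, le_trans ?_ hj⟩, mem_dy c h j x⟩
      gcongr
      exact hk.1.le
  have hz : wm (fun x => u x * v x) {x | v x = 0} = 0 := by
    have hm : MeasurableSet {x | v x = 0} := hv.1 (measurableSet_singleton 0)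
    rw [withDensity_apply _ hm]
    rw [setLIntegral_congr_fun hm (g := fun _ => 0)]
    · simp
    · intro x hx
      simp only [mem_ofPred_eq] at hx
      simp [hx]
  have hk : ∀ k : ℤ, wm (fun x => u x * v x) (E k ∩ ⋃₀ SS c h a G k) ≤
      ∑' Q : maxF (SS c h a G k), a ^ (k + 1) * (2 * 2⁻¹ ^ (K Q - k).natAbs * wm u Q) := by
    intro k
    have hm := (hEm k).inter (sUnion_meas hh (hSS k))
    calc wm (fun x => u x * v x) (E k ∩ ⋃₀ SS c h a G k)
        ≤ a ^ (k + 1) * wm u (E k ∩ ⋃₀ SS c h a G k) := by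
          rw [withDensity_apply _ hm, withDensity_apply _ hm, ← lintegral_const_mul _ hu.1]
          refine setLIntegral_mono' hm fun x hx => ?_
          rw [mul_comm]
          gcongr
          exact hx.1.2
      _ = ∑' Q : maxF (SS c h a G k), a ^ (k + 1) * wm u (E k ∩ Q) := by
          rw [← maxF_sUnion (hSS k), measure_sUnion_inter hh ((maxF_sub _).trans (hSS k))
            (maxF_disj (hSS k)) _ (hEm k), ENNReal.tsum_mul_left]
      _ ≤ _ := by
          refine ENNReal.tsum_le_tsum fun Q => mul_le_mul_right ?_ _
          exact slice_bound hh ha ha' hv hB hK (hSS k Q.2.1) k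
  have hre : ∑' k : ℤ, ∑' Q : maxF (SS c h a G k),
        a ^ (k + 1) * (2 * 2⁻¹ ^ (K Q - k).natAbs * wm u Q) =
      ∑' l : ℤ, (2 * a * 2⁻¹ ^ l.natAbs) * ∑' Q : FF c h a G K l, a ^ (K Q - l) * wm u Q := by
    have e1 : ∀ k : ℤ, ∑' Q : maxF (SS c h a G k),
        a ^ (k + 1) * (2 * 2⁻¹ ^ (K Q - k).natAbs * wm u Q) =
        ∑' Q : Set (ESp n), (maxF (SS c h a G k)).indicator (fun Q =>
          a ^ (k + 1) * (2 * 2⁻¹ ^ (K Q - k).natAbs * wm u Q)) Q := fun k =>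
      tsum_subtype (maxF (SS c h a G k)) (fun Q =>
          a ^ (k + 1) * (2 * 2⁻¹ ^ (K Q - k).natAbs * wm u Q))
    have e2 : ∀ l : ℤ, (2 * a * 2⁻¹ ^ l.natAbs) *
        ∑' Q : FF c h a G K l, a ^ (K Q - l) * wm u Q =
        ∑' Q : Set (ESp n), (2 * a * 2⁻¹ ^ l.natAbs) * (FF c h a G K l).indicator (fun Q =>
          a ^ (K Q - l) * wm u Q) Q := fun l => by
      rw [tsum_subtype (FF c h a G K l) (fun Q => a ^ (K Q - l) * wm u Q),
        ENNReal.tsum_mul_left]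
    simp_rw [e1, e2]
    rw [ENNReal.tsum_comm, ENNReal.tsum_comm (α := ℤ)]
    refine tsum_congr fun Q => ?_
    rw [← (Equiv.subLeft (K Q)).tsum_eq]
    refine tsum_congr fun l => ?_
    simp only [Equiv.subLeft_apply]
    by_cases hQ : Q ∈ FF c h a G K l
    · have hQ' : Q ∈ maxF (SS c h a G (K Q - l)) := hQ
      rw [indicator_of_mem hQ, indicator_of_mem hQ', ENNReal.zpow_add ha0 ha'.ne, zpow_one,
        show K Q - (K Q - l) = l by ring]
      ring
    · have hQ' : Q ∉ maxF (SS c h a G (K Q - l)) := hQ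
      rw [indicator_of_notMem hQ, indicator_of_notMem hQ', mul_zero]
  calc _ ≤ wm (fun x => u x * v x) ({x | v x = 0} ∪ ⋃ k : ℤ, (E k ∩ ⋃₀ SS c h a G k)) :=
        measure_mono hcov
    _ ≤ wm (fun x => u x * v x) {x | v x = 0} +
        wm (fun x => u x * v x) (⋃ k : ℤ, (E k ∩ ⋃₀ SS c h a G k)) := measure_union_le _ _
    _ = wm (fun x => u x * v x) (⋃ k : ℤ, (E k ∩ ⋃₀ SS c h a G k)) := by rw [hz, zero_add]
    _ ≤ ∑' k : ℤ, wm (fun x => u x * v x) (E k ∩ ⋃₀ SS c h a G k) := measure_iUnion_le _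
    _ ≤ _ := ENNReal.tsum_le_tsum hk
    _ = _ := hre
    _ ≤ ∑' l : ℤ, (2 * a * 2⁻¹ ^ l.natAbs) * (64 * a * Cu * ∫⁻ x, G x * u x) := by
        refine ENNReal.tsum_le_tsum fun l => mul_le_mul_right ?_ _
        exact FF_weighted hh ha ha' hu huf hGm hB hCu hA hK l
    _ = (2 * a * ∑' l : ℤ, 2⁻¹ ^ l.natAbs) * (64 * a * Cu * ∫⁻ x, G x * u x) := by
        rw [ENNReal.tsum_mul_right, ENNReal.tsum_mul_left]
    _ ≤ (2 * a * 4) * (64 * a * Cu * ∫⁻ x, G x * u x) := by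
        gcongr
        exact tsum_natAbs_le
    _ = _ := by ring


lemma third_trick (j : ℕ) {s h : ℝ} (hs : 0 < s) (hle : 3 * h * 2 ^ j ≤ s) (c : ℝ) :
    ∃ e : Bool, ⌊2 ^ j * ((c - (if e then s / 3 else 0)) / s)⌋ =
      ⌊2 ^ j * ((c + h - (if e then s / 3 else 0)) / s)⌋ ∨ h < 0 := by
  by_cases hh : h < 0
  · exact ⟨true, Or.inr hh⟩
  push Not at hh
  by_contra hcon
  push Not at hcon
  have h0 := (hcon false).1
  have h1 := (hcon true).1
  simp only [if_true, if_false, Bool.false_eq_true, sub_zero] at h0 h1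
  have step : ∀ A B : ℝ, A ≤ B → ⌊A⌋ ≠ ⌊B⌋ → A < ⌊B⌋ ∧ (⌊B⌋ : ℝ) ≤ B := by
    intro A B hAB hne
    refine ⟨?_, Int.floor_le B⟩
    exact Int.floor_lt.1 (lt_of_le_of_ne (Int.floor_le_floor hAB) hne)
  have hp : (0 : ℝ) < 2 ^ j := by positivity
  obtain ⟨a1, a2⟩ := step _ _ (by gcongr; linarith) h0
  obtain ⟨b1, b2⟩ := step _ _ (by gcongr; linarith) h1
  set p := ⌊2 ^ j * ((c + h) / s)⌋
  set q := ⌊2 ^ j * ((c + h - s / 3) / s)⌋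
  have e1 : (2 : ℝ) ^ j * ((c + h) / s) = 2 ^ j * (c / s) + 2 ^ j * h / s := by ring
  have e2 : (2 : ℝ) ^ j * ((c - s / 3) / s) = 2 ^ j * (c / s) - 2 ^ j / 3 := by
    field_simp
  have e3 : (2 : ℝ) ^ j * ((c + h - s / 3) / s) = 2 ^ j * (c / s) + 2 ^ j * h / s - 2 ^ j / 3 := by
    field_simp
  have e4 : 2 ^ j * h / s ≤ 1 / 3 := by
    rw [div_le_iff₀ hs]; linarith
  rw [e1] at a2
  rw [e2] at b1
  rw [e3] at b2
  have k1 : (3 * (p - q) : ℝ) < 2 ^ j + 1 := by linarith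
  have k2 : (2 : ℝ) ^ j - 1 < 3 * (p - q) := by linarith
  have k1' : 3 * (p - q) < 2 ^ j + 1 := by exact_mod_cast k1
  have k2' : (2 : ℤ) ^ j - 1 < 3 * (p - q) := by exact_mod_cast k2
  have k3 : (2 : ℤ) ^ j = 3 * (p - q) := by omega
  have k4 : (3 : ℤ) ∣ 2 ^ j := ⟨_, k3⟩
  have k5 := Int.prime_three.dvd_of_dvd_pow k4
  omega

/-- origins of the shifted grids -/
def org {n : ℕ} (s : ℝ) (e : Fin n → Bool) : Fin n → ℝ := fun i => if e i then s / 3 else 0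

lemma cc_sub_dy {n : ℕ} {s h : ℝ} (hs : 0 < s) (hh : 0 < h) (hle : 3 * h ≤ s) (c : Fin n → ℝ) :
    ∃ (e : Fin n → Bool) (j : ℕ), ∀ x ∈ cc c h, cc c h ⊆ dy (org s e) s j x ∧
      volume (dy (org s e) s j x) ≤ 6 ^ n * volume (cc c h) := by
  obtain ⟨j, hj1, hj2⟩ := exists_nat_pow_near (x := s / (3 * h)) (y := 2)
    (by rw [le_div_iff₀ (by positivity)]; linarith) (by norm_num)
  rw [le_div_iff₀ (by positivity)] at hj1
  rw [div_lt_iff₀ (by positivity)] at hj2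
  choose e he using fun i => third_trick j hs (by linarith : 3 * h * 2 ^ j ≤ s) (c i)
  refine ⟨e, j, fun x hx => ⟨fun y hy i => ?_, ?_⟩⟩
  · have key : ∀ z ∈ cc c h, ⌊2 ^ j * ((z i - org s e i) / s)⌋ =
        ⌊2 ^ j * ((c i - org s e i) / s)⌋ := by
      intro z hz
      have h1 := (he i).resolve_right (not_lt.2 hh.le)
      refine le_antisymm ?_ ?_
      · rw [org, h1]
        refine Int.floor_le_floor ?_
        have := (hz i).2
        gcongr
      · refine Int.floor_le_floor ?_
        have := (hz i).1
        gcongr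
    rw [key y hy, key x hx]
  · rw [dy_eq_hc _ hs, vol_hc, vol_cc, ← mul_pow]
    gcongr
    rw [show (6 : ℝ≥0∞) = ENNReal.ofReal 6 by simp, ← ENNReal.ofReal_mul (by norm_num)]
    refine ENNReal.ofReal_le_ofReal ?_
    rw [div_le_iff₀ (by positivity)]
    rw [pow_succ] at hj2
    linarith

lemma cube_main {n : ℕ} {a : ℝ≥0∞} (ha : 2 ≤ a)
    (ha' : a < ⊤) {u v G : ESp n → ℝ≥0∞} (hu : GoodW u) (huf : ∀ x, u x ≠ ⊤)
    (hv : GoodW v) (hvf : ∀ x, v x ≠ ⊤)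
    (hGm : Measurable G) (hB : BaseP a u v)
    {Cu : ℝ≥0∞} (hCu : Cu < ⊤) (hA : A1d u Cu) :
    wm (fun x => u x * v x) {x | v x = 0 ∨ ∃ c h, 0 < h ∧ x ∈ cc c h ∧
        v x * volume (cc c h) ≤ wm G (cc c h)}
      ≤ 2 ^ n * (512 * a ^ 2 * Cu * 6 ^ n) * ∫⁻ x, G x * u x := by
  set A : ℕ → Set (ESp n) := fun N => {x | v x = 0 ∨ ∃ c h, 0 < h ∧ 3 * h ≤ 2 ^ N ∧ x ∈ cc c h ∧
        v x * volume (cc c h) ≤ wm G (cc c h)} with hAdef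
  have hmono : Monotone A := by
    intro M N hMN x hx
    rcases hx with hx | ⟨c, h, h1, h2, h3⟩
    · exact Or.inl hx
    · exact Or.inr ⟨c, h, h1, h2.trans (pow_le_pow_right₀ (by norm_num) hMN), h3⟩
  have hsub : {x | v x = 0 ∨ ∃ c h, 0 < h ∧ x ∈ cc c h ∧
        v x * volume (cc c h) ≤ wm G (cc c h)} ⊆ ⋃ N, A N := by
    rintro x (hx | ⟨c, h, h1, h3⟩)
    · exact mem_iUnion.2 ⟨0, Or.inl hx⟩
    · obtain ⟨N, hN⟩ := pow_unbounded_of_one_lt (3 * h) (by norm_num : (1 : ℝ) < 2)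
      exact mem_iUnion.2 ⟨N, Or.inr ⟨c, h, h1, hN.le, h3⟩⟩
  refine (measure_mono hsub).trans ?_
  rw [hmono.measure_iUnion]
  refine iSup_le fun N => ?_
  have hs : (0 : ℝ) < 2 ^ N := by positivity
  have hN : A N ⊆ ⋃ e : Fin n → Bool, {x | ∃ j, v x * volume (dy (org (2 ^ N) e) (2 ^ N) j x) ≤
      wm (fun x => 6 ^ n * G x) (dy (org (2 ^ N) e) (2 ^ N) j x)} := by
    rintro x (hx | ⟨c, h, h1, h2, h3, h4⟩)
    · exact mem_iUnion.2 ⟨fun _ => true, 0, by rw [hx]; simp⟩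
    · obtain ⟨e, j, hej⟩ := cc_sub_dy hs h1 h2 c
      refine mem_iUnion.2 ⟨e, j, ?_⟩
      obtain ⟨h5, h6⟩ := hej x h3
      have hm := dy_meas (org (2 ^ N) e) hs j x
      calc v x * volume (dy (org (2 ^ N) e) (2 ^ N) j x)
          ≤ v x * (6 ^ n * volume (cc c h)) := by gcongr
        _ = 6 ^ n * (v x * volume (cc c h)) := by ring
        _ ≤ 6 ^ n * wm G (cc c h) := by gcongr
        _ ≤ 6 ^ n * wm G (dy (org (2 ^ N) e) (2 ^ N) j x) :=
          mul_le_mul_right (measure_mono h5) _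
        _ = _ := by
          rw [withDensity_apply _ hm, withDensity_apply _ hm, lintegral_const_mul _ hGm]
  refine (measure_mono hN).trans ((measure_iUnion_le _).trans ?_)
  rw [tsum_fintype]
  refine (Finset.sum_le_sum fun e _ => dyadic_main (c := org (2 ^ N) e) hs ha ha' hu huf hv hvf
    (hGm.const_mul _) hB hCu hA).trans ?_
  rw [Finset.sum_const, Finset.card_univ, Fintype.card_fun, Fintype.card_bool, Fintype.card_fin,
    nsmul_eq_mul]
  have : ∀ x, 6 ^ n * G x * u x = 6 ^ n * (G x * u x) := fun x => by ring
  simp_rw [this]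
  rw [lintegral_const_mul (f := fun x => G x * u x) _ (hGm.mul hu.1)]
  push_cast
  exact le_of_eq (by ring)

/-- **Li–Ombrosi–Pérez: maximal-function case of Sawyer's conjecture.**  If `u ∈ A₁` and
`v ∈ A_∞`, then there is a constant `C`, depending only on the `A₁` constant of `u` and the
`A_∞` (Fujii–Wilson) constant of `v`, such that for every locally integrable `f`,
`‖M(fv)/v‖_{L^{1,∞}(uv)} ≤ C ∫ |f| u v`. -/
theorem LOP_maximal_mixed_weak_type {n : ℕ} (hn : 0 < n)
    (Cu Cv : ℝ≥0∞) (hCu : Cu < ⊤) (hCv : Cv < ⊤) :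
    ∃ C : ℝ≥0∞, C < ⊤ ∧
      ∀ u v : ESp n → ℝ, IsWeight u → IsWeight v →
        A1Const u Cu → IsAinfty v → FW v ≤ Cv →
        ∀ f : ESp n → ℝ, LocallyIntegrable f volume →
          wnorm (fun x => maxFn (fun y => f y * v y) x / ENNReal.ofReal (v x)) 1
              (fun x => u x * v x)
            ≤ C * ∫⁻ x, ENNReal.ofReal (|f x| * u x * v x) := by
  obtain ⟨a, ha, ha', hbase⟩ := exists_base hn hCu hCv
  refine ⟨2 ^ n * (512 * a ^ 2 * Cu * 6 ^ n), by finiteness, ?_⟩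
  intro u v hu hv hA1 _ hFW f hf
  have gu := goodW_of_isWeight hu
  have gv := goodW_of_isWeight hv
  have hA := A1d_of_A1Const hA1
  have hB := hbase _ _ gu gv (FWd_of_A1d hCu gu hA) (FWd_of_FW hv hFW)
  have hfm := hf.aestronglyMeasurable.aemeasurable
  set g := hfm.mk f with hg
  have hgm : Measurable g := hfm.measurable_mk
  have hfg : f =ᵐ[volume] g := hfm.ae_eq_mk
  set G : ESp n → ℝ≥0∞ := fun x => ENNReal.ofReal |g x * v x| with hG
  have hGm : Measurable G := (hgm.mul hv.1).abs.ennreal_ofReal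
  have hI : ∫⁻ x, G x * ENNReal.ofReal (u x) = ∫⁻ x, ENNReal.ofReal (|f x| * u x * v x) := by
    refine lintegral_congr_ae ?_
    filter_upwards [hfg] with x hx
    rw [hG, ← ENNReal.ofReal_mul (abs_nonneg _), hx, abs_mul, abs_of_nonneg (hv.2.1 x)]
    congr 1; ring
  refine iSup₂_le fun t ht => ?_
  have ht0 : ENNReal.ofReal t ≠ 0 := by simpa using ht
  have htT : ENNReal.ofReal t ≠ ⊤ := ENNReal.ofReal_ne_top
  rw [div_one, ENNReal.rpow_one]
  have e1 : ∀ E : Set (ESp n), wMeas (fun x => u x * v x) E =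
      wm (fun x => ENNReal.ofReal (u x) * ENNReal.ofReal (v x)) E := by
    intro E
    rw [wMeas, withDensity_apply']
    refine lintegral_congr fun x => ?_
    rw [ENNReal.ofReal_mul (hu.2.1 x)]
  rw [e1]
  have hsub : {x | ENNReal.ofReal t <
      maxFn (fun y => f y * v y) x / ENNReal.ofReal (v x)} ⊆
      {x | ENNReal.ofReal (v x) = 0 ∨ ∃ c h, 0 < h ∧ x ∈ cc c h ∧
        ENNReal.ofReal (v x) * volume (cc c h) ≤
          wm (fun x => (ENNReal.ofReal t)⁻¹ * G x) (cc c h)} := by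
    intro x hx
    rcases eq_or_ne (ENNReal.ofReal (v x)) 0 with h0 | h0
    · exact Or.inl h0
    right
    have hx' : ENNReal.ofReal t * ENNReal.ofReal (v x) < maxFn (fun y => f y * v y) x :=
      (ENNReal.lt_div_iff_mul_lt (Or.inl h0) (Or.inl ENNReal.ofReal_ne_top)).1 hx
    rw [maxFn] at hx'
    obtain ⟨Q, hx1⟩ := lt_iSup_iff.1 hx'
    obtain ⟨hQ, hx2⟩ := lt_iSup_iff.1 hx1
    obtain ⟨hxQ, hx3⟩ := lt_iSup_iff.1 hx2
    obtain ⟨c, h, hh, rfl⟩ := hQ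
    refine ⟨c, h, hh, hxQ, ?_⟩
    change _ < (volume (cc c h))⁻¹ * ∫⁻ y in cc c h, ENNReal.ofReal |f y * v y| at hx3
    have hvol : volume (cc c h) = volume (hc c h) := (measure_congr (hc_ae_cc c h)).symm
    have e2 : ∫⁻ y in cc c h, ENNReal.ofReal |f y * v y| = ∫⁻ y in cc c h, G y := by
      refine lintegral_congr_ae (ae_restrict_of_ae ?_)
      filter_upwards [hfg] with y hy
      rw [hG, hy]
    rw [withDensity_apply _ (meas_cc _ _), lintegral_const_mul _ hGm, ← ENNReal.div_eq_inv_mul,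
      ENNReal.le_div_iff_mul_le (Or.inl ht0) (Or.inl htT)]
    rw [e2, ← ENNReal.div_eq_inv_mul, ENNReal.lt_div_iff_mul_lt (Or.inl (hvol ▸ vol_hc_pos c hh))
      (Or.inl (hvol ▸ vol_hc_fin c h))] at hx3
    refine le_trans (le_of_eq (by ring)) hx3.le
  calc _ ≤ ENNReal.ofReal t * (2 ^ n * (512 * a ^ 2 * Cu * 6 ^ n) *
        ∫⁻ x, (ENNReal.ofReal t)⁻¹ * G x * ENNReal.ofReal (u x)) := by
        refine mul_le_mul_right ((measure_mono hsub).trans ?_) _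
        exact cube_main ha ha' gu (fun x => ENNReal.ofReal_ne_top) gv
          (fun x => ENNReal.ofReal_ne_top) (hGm.const_mul _) hB hCu hA
    _ = (ENNReal.ofReal t * (ENNReal.ofReal t)⁻¹) * (2 ^ n * (512 * a ^ 2 * Cu * 6 ^ n) *
        ∫⁻ x, G x * ENNReal.ofReal (u x)) := by
        have : ∀ x, (ENNReal.ofReal t)⁻¹ * G x * ENNReal.ofReal (u x) =
          (ENNReal.ofReal t)⁻¹ * (G x * ENNReal.ofReal (u x)) := fun x => by ring
        simp_rw [this]
        rw [lintegral_const_mul (f := fun x => G x * ENNReal.ofReal (u x)) _ (hGm.mul gu.1)]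
        ring
    _ = _ := by rw [ENNReal.mul_inv_cancel ht0 htT, one_mul, hI]


end
end

section
/- (Berra–Carena–Pradolini, fractional maximal case) Let 0<α<n, 1≤p<n/α and let q be defined by 1/q = 1/p − α/n. If u and v are weights on ℝ^n such that u ∈ A_1 and v^{q/p} ∈ A_1, then there exists a positive constant C such that for every f and every t>0, (uv^{q/p})({x ∈ ℝ^n : M_α(fv)(x)/v(x) > t})^{1/q} ≤ (C/t) (∫_{ℝ^n} |f(x)|^p u(x)^{p/q} v(x) dx)^{1/p}, where uv^{q/p} denotes the weight u·v^{q/p}. -/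
open MeasureTheory ENNReal Set

noncomputable section

/-! ### Cubes -/

/-- Index of a cube: corner and side. -/
abbrev CI (n : ℕ) := (Fin n → ℝ) × ℝ

/-- The cube with given corner and side. -/
def cub {n : ℕ} (i : CI n) : Set (ESp n) := {x | ∀ k, i.1 k ≤ x k ∧ x k ≤ i.1 k + i.2}

/-- The concentric enlargement by a factor of five. -/
def enl {n : ℕ} (i : CI n) : CI n := (fun k => i.1 k - 2 * i.2, 5 * i.2)

lemma isCube_cub {n : ℕ} (i : CI n) (h : 0 < i.2) : IsCube (cub i) := ⟨i.1, i.2, h, rfl⟩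

lemma cub_eq {n : ℕ} (i : CI n) :
    cub i = (@WithLp.ofLp 2 (Fin n → ℝ)) ⁻¹' (Set.Icc i.1 (fun k => i.1 k + i.2)) := by
  ext x
  simp [cub, Pi.le_def, forall_and]

lemma isClosed_cub {n : ℕ} (i : CI n) : IsClosed (cub i) := by
  rw [cub_eq]
  exact isClosed_Icc.preimage (PiLp.continuous_ofLp 2 _)

lemma meas_cub {n : ℕ} (i : CI n) : MeasurableSet (cub i) := (isClosed_cub i).measurableSet

lemma vol_cub {n : ℕ} (i : CI n) : volume (cub i) = ENNReal.ofReal i.2 ^ n := by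
  rw [cub_eq, (PiLp.volume_preserving_ofLp (Fin n)).measure_preimage
    measurableSet_Icc.nullMeasurableSet, Real.volume_Icc_pi]
  simp

lemma vol_cub_ne_zero {n : ℕ} {i : CI n} (h : 0 < i.2) : volume (cub i) ≠ 0 := by
  rw [vol_cub]
  exact pow_ne_zero _ (by simpa using h)

lemma vol_cub_ne_top {n : ℕ} (i : CI n) : volume (cub i) ≠ ⊤ := by
  rw [vol_cub]
  exact ENNReal.pow_ne_top ENNReal.ofReal_ne_top

lemma interior_cub {n : ℕ} {i : CI n} (h : 0 < i.2) : (interior (cub i)).Nonempty := by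
  have ho : IsOpen {x : ESp n | ∀ k, i.1 k < x k ∧ x k < i.1 k + i.2} := by
    simp only [Set.ofPred_forall]
    refine isOpen_iInter_of_finite fun k => ?_
    have hc : Continuous fun x : ESp n => x k := by fun_prop
    exact (isOpen_lt continuous_const hc).inter (isOpen_lt hc continuous_const)
  refine ⟨WithLp.toLp 2 (fun k => i.1 k + i.2 / 2), ?_⟩
  refine interior_maximal ?_ ho ?_
  · intro x hx k
    exact ⟨(hx k).1.le, (hx k).2.le⟩
  · intro k
    constructor <;> simp <;> linarith

lemma nonempty_cub {n : ℕ} {i : CI n} (h : 0 < i.2) : (cub i).Nonempty :=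
  (interior_cub h).mono interior_subset

lemma vol_enl {n : ℕ} (i : CI n) : volume (cub (enl i)) = 5 ^ n * volume (cub i) := by
  rw [vol_cub, vol_cub, enl, ← mul_pow, ENNReal.ofReal_mul (by norm_num)]
  norm_num

lemma sub_enl_self {n : ℕ} {i : CI n} (h : 0 < i.2) : cub i ⊆ cub (enl i) := by
  intro x hx k
  have := hx k
  simp only [enl]
  constructor <;> linarith

lemma sub_enl {n : ℕ} {a b : CI n} (hne : (cub a ∩ cub b).Nonempty)
    (hab : a.2 ≤ 2 * b.2) : cub a ⊆ cub (enl b) := by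
  obtain ⟨y, hya, hyb⟩ := hne
  intro x hx k
  have := hx k
  have := hya k
  have := hyb k
  simp only [enl]
  constructor <;> linarith

lemma vitali {n : ℕ} (T : Set (CI n)) (R : ℝ) (hpos : ∀ i ∈ T, 0 < i.2) (hR : ∀ i ∈ T, i.2 ≤ R) :
    ∃ D ⊆ T, D.Countable ∧ D.PairwiseDisjoint cub ∧ ∀ i ∈ T, ∃ j ∈ D, cub i ⊆ cub (enl j) := by
  obtain ⟨D, hDT, hdis, hcov⟩ := Vitali.exists_disjoint_subfamily_covering_enlargement
    (fun i : CI n => cub i) T (fun i => i.2) 2 (by norm_num) (fun i hi => (hpos i hi).le) R hR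
    (fun i hi => nonempty_cub (hpos i hi))
  refine ⟨D, hDT, hdis.countable_of_nonempty_interior fun i hi => interior_cub (hpos i (hDT hi)),
    hdis, fun i hi => ?_⟩
  obtain ⟨b, hb, hne, hle⟩ := hcov i hi
  exact ⟨b, hb, sub_enl hne hle⟩

/-- Points of a cube of side `h` are at distance at most `h * (n+1)`. -/
lemma cub_sub_ball {n : ℕ} {i : CI n} (h : 0 < i.2) {x : ESp n} (hx : x ∈ cub i) :
    cub i ⊆ Metric.closedBall x (i.2 * (n + 1)) := by
  intro y hy
  rw [Metric.mem_closedBall, EuclideanSpace.dist_eq]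
  apply Real.sqrt_le_iff.2
  refine ⟨by positivity, ?_⟩
  calc ∑ k, dist (y k) (x k) ^ 2 ≤ ∑ k : Fin n, i.2 ^ 2 := by
        refine Finset.sum_le_sum fun k _ => ?_
        have h1 : dist (y k) (x k) ≤ i.2 := by
          have := hx k
          have := hy k
          rw [Real.dist_eq, abs_le]
          constructor <;> linarith
        gcongr
    _ = n * i.2 ^ 2 := by simp
    _ ≤ (i.2 * (n + 1)) ^ 2 := by
        have : (0:ℝ) ≤ n := by positivity
        have : 0 < i.2 ^ 2 := by positivity
        nlinarith

/-- Lebesgue differentiation along cubes. -/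
lemma ldt {n : ℕ} {f : ESp n → ℝ≥0∞} (hf : Measurable f) (hfin : ∫⁻ x, f x ≠ ⊤) :
    ∀ᵐ x : ESp n, ∀ i : ℕ → CI n, (∀ k, 0 < (i k).2) → (∀ k, x ∈ cub (i k)) →
      Filter.Tendsto (fun k => (i k).2) Filter.atTop (nhds 0) →
      Filter.Tendsto (fun k => (∫⁻ y in cub (i k), f y) / volume (cub (i k)))
        Filter.atTop (nhds (f x)) := by
  set ω : ℝ≥0∞ := volume (Metric.ball (0 : ESp n) 1) with hω
  have hω0 : ω ≠ 0 := (Metric.measure_ball_pos _ _ one_pos).ne'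
  have hωt : ω ≠ ⊤ := measure_ball_lt_top.ne
  set C : NNReal := (3 * (n + 1)) ^ n * max 1 ω.toNNReal with hC
  have hball : ∀ (x : ESp n) (r : ℝ), 0 ≤ r →
      volume (Metric.closedBall x r) = ENNReal.ofReal r ^ n * ω := by
    intro x r hr
    rw [Measure.addHaar_closedBall _ _ hr]
    simp [ENNReal.ofReal_pow hr, hω]
  have hCω : (3 * (n + 1)) ^ n * ω ≤ (C : ℝ≥0∞) := by
    rw [hC]
    push_cast
    gcongr
    rw [ENNReal.coe_toNNReal hωt]
    exact le_max_right _ _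
  have hC3 : (3 : ℝ≥0∞) ^ n ≤ C := by
    rw [hC]
    push_cast
    calc (3 : ℝ≥0∞) ^ n ≤ (3 * (n + 1)) ^ n * 1 := by
          rw [mul_one]
          gcongr
          calc (3 : ℝ≥0∞) = 3 * 1 := by simp
            _ ≤ _ := by gcongr; simp
      _ ≤ _ := by gcongr; exact le_max_left _ _
  have h : ∀ x : ESp n, ∃ᶠ r in nhdsWithin (0:ℝ) (Set.Ioi 0),
      volume (Metric.closedBall x (3 * r)) ≤ C * volume (Metric.closedBall x r) := by
    intro x
    apply Filter.Eventually.frequently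
    filter_upwards [self_mem_nhdsWithin] with r hr
    have hr : (0:ℝ) < r := hr
    rw [hball _ _ (by positivity), hball _ _ hr.le, ENNReal.ofReal_mul (by norm_num), mul_pow,
      ← mul_assoc]
    have : ENNReal.ofReal 3 = 3 := by simp
    rw [this]
    gcongr
  set vf := Vitali.vitaliFamily (volume : Measure (ESp n)) C h with hvf
  filter_upwards [vf.ae_tendsto_lintegral_div hf.aemeasurable hfin] with x hx i hpos hmem hlim
  refine hx.comp ?_
  rw [VitaliFamily.tendsto_filterAt_iff]
  constructor
  · refine Filter.Eventually.of_forall fun k => ?_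
    refine ⟨isClosed_cub _, interior_cub (hpos k), (i k).2 * (n + 1),
      cub_sub_ball (hpos k) (hmem k), ?_⟩
    have := hpos k
    rw [hball _ _ (by positivity), vol_cub]
    have h1 : 3 * ((i k).2 * ((n:ℝ) + 1)) = (3 * (n + 1)) * (i k).2 := by ring
    rw [h1, ENNReal.ofReal_mul (by positivity), mul_pow]
    have h2 : ENNReal.ofReal (3 * ((n:ℝ) + 1)) = 3 * (n + 1) := by
      rw [ENNReal.ofReal_mul (by norm_num), ENNReal.ofReal_add (by positivity) (by norm_num)]
      simp
    rw [h2]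
    calc _ = ((3 * ((n:ℝ≥0∞) + 1)) ^ n * ω) * ENNReal.ofReal (i k).2 ^ n := by ring
      _ ≤ _ := by gcongr
  · intro ε hε
    have h1 : Filter.Tendsto (fun k => (i k).2 * ((n:ℝ) + 1)) Filter.atTop (nhds 0) := by
      simpa using hlim.mul_const ((n:ℝ) + 1)
    filter_upwards [h1.eventually (ge_mem_nhds hε)] with k hk
    exact (cub_sub_ball (hpos k) (hmem k)).trans (Metric.closedBall_subset_closedBall hk)

/-! ### `A₁` weights -/

/-- Essential infimum over a cube. -/
def ei {n : ℕ} (u : ESp n → ℝ≥0∞) (i : CI n) : ℝ≥0∞ := essInf u (volume.restrict (cub i))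

/-- Working form of the `A₁` condition. -/
structure W1 {n : ℕ} (u : ESp n → ℝ≥0∞) (C : ℝ≥0∞) : Prop where
  meas : Measurable u
  Cfin : C ≠ ⊤
  pos : ∀ᵐ x, u x ≠ 0
  fin : ∀ x, u x ≠ ⊤
  a1 : ∀ i : CI n, 0 < i.2 → ∫⁻ x in cub i, u x ≤ C * ei u i * volume (cub i)

lemma ei_le_ae {n : ℕ} (u : ESp n → ℝ≥0∞) (i : CI n) : ∀ᵐ x, x ∈ cub i → ei u i ≤ u x := by
  rw [← ae_restrict_iff' (meas_cub i)]
  exact ae_essInf_le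

lemma ei_mono {n : ℕ} (u : ESp n → ℝ≥0∞) {i j : CI n} (h : cub i ⊆ cub j) : ei u j ≤ ei u i :=
  essInf_antitone_measure (Measure.absolutelyContinuous_of_le (Measure.restrict_mono h le_rfl))

lemma ei_mul_le {n : ℕ} (u : ESp n → ℝ≥0∞) (i : CI n) :
    ei u i * volume (cub i) ≤ ∫⁻ x in cub i, u x := by
  rw [← setLIntegral_const]
  exact lintegral_mono_ae ae_essInf_le

lemma W1.ei_ne_top {n : ℕ} {u : ESp n → ℝ≥0∞} {C : ℝ≥0∞} (h : W1 u C) {i : CI n} (hi : 0 < i.2) :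
    ei u i ≠ ⊤ := by
  have hne : (volume.restrict (cub i) : Measure (ESp n)) ≠ 0 := by
    rw [Ne, Measure.restrict_eq_zero]
    exact vol_cub_ne_zero hi
  have : (ae (volume.restrict (cub i) : Measure (ESp n))).NeBot := ae_neBot.2 hne
  obtain ⟨x, hx⟩ := (ae_essInf_le (f := u) (μ := volume.restrict (cub i))).exists
  exact ne_top_of_le_ne_top (h.fin x) hx

lemma W1.int_ne_top {n : ℕ} {u : ESp n → ℝ≥0∞} {C : ℝ≥0∞} (h : W1 u C) {i : CI n} (hi : 0 < i.2) :
    ∫⁻ x in cub i, u x ≠ ⊤ :=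
  ne_top_of_le_ne_top (ENNReal.mul_ne_top (ENNReal.mul_ne_top h.Cfin (h.ei_ne_top hi))
    (vol_cub_ne_top i)) (h.a1 i hi)

lemma W1.int_ne_zero {n : ℕ} {u : ESp n → ℝ≥0∞} {C : ℝ≥0∞} (h : W1 u C) {i : CI n} (hi : 0 < i.2) :
    ∫⁻ x in cub i, u x ≠ 0 := by
  intro h0
  rw [lintegral_eq_zero_iff h.meas] at h0
  have h1 : ∀ᵐ x ∂(volume.restrict (cub i) : Measure (ESp n)), False := by
    filter_upwards [h0, ae_restrict_of_ae h.pos] with x h1 h2 using h2 h1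
  rw [ae_iff] at h1
  simp at h1
  exact vol_cub_ne_zero hi h1

lemma W1.ei_ne_zero {n : ℕ} {u : ESp n → ℝ≥0∞} {C : ℝ≥0∞} (h : W1 u C) {i : CI n} (hi : 0 < i.2) :
    ei u i ≠ 0 := by
  intro h0
  have := h.a1 i hi
  rw [h0] at this
  simp at this
  exact h.int_ne_zero hi (by simpa using this)

lemma W1.enl_le {n : ℕ} {u : ESp n → ℝ≥0∞} {C : ℝ≥0∞} (h : W1 u C) {i : CI n} (hi : 0 < i.2) :
    ∫⁻ x in cub (enl i), u x ≤ C * 5 ^ n * (ei u i * volume (cub i)) := by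
  calc _ ≤ C * ei u (enl i) * volume (cub (enl i)) := h.a1 _ (by simpa [enl] using hi)
    _ ≤ C * ei u i * volume (cub (enl i)) := by
        gcongr
        exact ei_mono u (sub_enl_self hi)
    _ = _ := by
        rw [vol_enl]
        ring

/-- Homothetic copy of a cube about a point. -/
def hom {n : ℕ} (i : CI n) (x : ESp n) (s : ℝ) : CI n :=
  (fun k => x k + s * (i.1 k - x k), s * i.2)

lemma hom_mem {n : ℕ} {i : CI n} {x : ESp n} (hx : x ∈ cub i) {s : ℝ} (hs : 0 ≤ s) :
    x ∈ cub (hom i x s) := by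
  intro k
  have := hx k
  simp only [hom]
  constructor <;> nlinarith

lemma hom_mono {n : ℕ} {i : CI n} {x : ESp n} (hx : x ∈ cub i) {s t : ℝ} (hst : s ≤ t) :
    cub (hom i x s) ⊆ cub (hom i x t) := by
  intro y hy k
  have h1 := hx k
  have h2 := hy k
  simp only [hom] at *
  constructor <;> nlinarith

lemma hom_one {n : ℕ} (i : CI n) (x : ESp n) : hom i x 1 = i := by
  ext <;> simp [hom]

lemma vol_hom_half {n : ℕ} (i : CI n) (x : ESp n) (k : ℕ) :
    volume (cub (hom i x ((1/2) ^ k))) = 2 ^ n * volume (cub (hom i x ((1/2) ^ (k + 1)))) := by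
  rw [vol_cub, vol_cub, ← mul_pow]
  congr 1
  have : (2 : ℝ≥0∞) = ENNReal.ofReal 2 := by simp
  rw [this, ← ENNReal.ofReal_mul (by norm_num)]
  congr 1
  simp only [hom]
  ring

/-- The stopping cubes inside a given cube. -/
lemma W1.selection {n : ℕ} {u : ESp n → ℝ≥0∞} {C : ℝ≥0∞} (h : W1 u C) {Q : CI n} (hQ : 0 < Q.2)
    {l : ℝ≥0∞} (hl : ∫⁻ x in cub Q, u x ≤ l * volume (cub Q)) :
    ∀ᵐ x, x ∈ cub Q → l < u x → ∃ i : CI n, 0 < i.2 ∧ i.2 ≤ Q.2 ∧ x ∈ cub i ∧ cub i ⊆ cub Q ∧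
      l * volume (cub i) ≤ ∫⁻ y in cub i, u y ∧
      ∫⁻ y in cub i, u y ≤ 2 ^ n * l * volume (cub i) := by
  have hm : Measurable ((cub Q).indicator u) := h.meas.indicator (meas_cub Q)
  have hfin : ∫⁻ x, (cub Q).indicator u x ≠ ⊤ := by
    rw [lintegral_indicator (meas_cub Q)]
    exact h.int_ne_top hQ
  filter_upwards [ldt hm hfin] with x hx hxQ hlx
  have hsub : ∀ k : ℕ, cub (hom Q x ((1/2) ^ k)) ⊆ cub Q := by
    intro k
    have := hom_mono hxQ (s := (1/2) ^ k) (t := 1) (pow_le_one₀ (by norm_num) (by norm_num))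
    rwa [hom_one] at this
  have hpos : ∀ k : ℕ, 0 < (hom Q x ((1/2) ^ k)).2 := fun k => by
    simp only [hom]; positivity
  have ht := hx (fun k => hom Q x ((1/2) ^ k)) hpos (fun k => hom_mem hxQ (by positivity)) (by
    have := (tendsto_pow_atTop_nhds_zero_of_lt_one (r := (1/2 : ℝ)) (by norm_num)
      (by norm_num)).mul_const Q.2
    simpa [hom] using this)
  rw [Set.indicator_of_mem hxQ] at ht
  have hev := (ht.eventually (lt_mem_nhds hlx)).exists
  have hIntEq : ∀ k : ℕ, ∫⁻ y in cub (hom Q x ((1/2) ^ k)), (cub Q).indicator u y =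
      ∫⁻ y in cub (hom Q x ((1/2) ^ k)), u y := by
    intro k
    refine setLIntegral_congr_fun (meas_cub _) fun y hy => ?_
    exact Set.indicator_of_mem (hsub k hy) u
  simp only [hIntEq] at hev
  classical
  have hk0 := Nat.find_spec hev
  have hmin := fun m => Nat.find_min hev (m := m)
  set k := Nat.find hev with hk
  rcases hkk : k with _ | m
  · rw [hkk] at hk0
    simp only [pow_zero, hom_one] at hk0
    rw [ENNReal.lt_div_iff_mul_lt (Or.inl (vol_cub_ne_zero hQ)) (Or.inl (vol_cub_ne_top _))] at hk0
    exact absurd hl (not_le.2 hk0)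
  · have hm1 := hmin m (by omega)
    rw [hkk] at hk0
    rw [ENNReal.lt_div_iff_mul_lt (Or.inl (vol_cub_ne_zero (hpos _)))
      (Or.inl (vol_cub_ne_top _))] at hk0 hm1
    refine ⟨hom Q x ((1/2) ^ (m + 1)), hpos _, ?_, hom_mem hxQ (by positivity), hsub _, hk0.le, ?_⟩
    · simp only [hom]
      exact mul_le_of_le_one_left hQ.le (pow_le_one₀ (by norm_num) (by norm_num))
    · calc _ ≤ ∫⁻ y in cub (hom Q x ((1/2) ^ m)), u y :=
            lintegral_mono_set (hom_mono hxQ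
              (pow_le_pow_of_le_one (by norm_num) (by norm_num) (by omega)))
        _ ≤ l * volume (cub (hom Q x ((1/2) ^ m))) := not_lt.1 hm1
        _ = _ := by rw [vol_hom_half]; ring

lemma W1.weak {n : ℕ} {u : ESp n → ℝ≥0∞} {C : ℝ≥0∞} (h : W1 u C) {Q : CI n} (hQ : 0 < Q.2)
    {l : ℝ≥0∞} (hl : ∫⁻ x in cub Q, u x ≤ l * volume (cub Q)) :
    ∫⁻ x in cub Q ∩ {x | l < u x}, u x ≤
      C * 5 ^ n * 2 ^ n * l * volume (cub Q ∩ {x | l ≤ C * u x}) := by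
  set T : Set (CI n) := {i | 0 < i.2 ∧ i.2 ≤ Q.2 ∧ cub i ⊆ cub Q ∧
      l * volume (cub i) ≤ ∫⁻ y in cub i, u y ∧
      ∫⁻ y in cub i, u y ≤ 2 ^ n * l * volume (cub i)} with hT
  obtain ⟨D, hDT, hDc, hDd, hcov⟩ := vitali T Q.2 (fun i hi => hi.1) (fun i hi => hi.2.1)
  have hsub : (cub Q ∩ {x | l < u x} : Set (ESp n)) ≤ᵐ[volume]
      (⋃ i ∈ D, cub (enl i) : Set (ESp n)) := by
    filter_upwards [h.selection hQ hl] with x hx hxm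
    obtain ⟨i, h1, h2, h3, h4, h5, h6⟩ := hx hxm.1 hxm.2
    obtain ⟨j, hj, hij⟩ := hcov i ⟨h1, h2, h4, h5, h6⟩
    exact Set.mem_biUnion hj (hij h3)
  have : Countable D := hDc.to_subtype
  calc ∫⁻ x in cub Q ∩ {x | l < u x}, u x
      ≤ ∫⁻ x in ⋃ i ∈ D, cub (enl i), u x := lintegral_mono' (Measure.restrict_mono_ae hsub) le_rfl
    _ = ∫⁻ x in ⋃ i : D, cub (enl i), u x := by rw [Set.biUnion_eq_iUnion]
    _ ≤ ∑' i : D, ∫⁻ x in cub (enl i), u x := lintegral_iUnion_le _ _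
    _ ≤ ∑' i : D, C * 5 ^ n * 2 ^ n * l * volume (cub i.1) := by
        refine ENNReal.tsum_le_tsum fun i => ?_
        have hi := hDT i.2
        calc _ ≤ C * 5 ^ n * (ei u i.1 * volume (cub i.1)) := h.enl_le hi.1
          _ ≤ C * 5 ^ n * (2 ^ n * l * volume (cub i.1)) := by
              gcongr C * 5 ^ n * ?_
              exact (ei_mul_le u i.1).trans hi.2.2.2.2
          _ = _ := by ring
    _ = C * 5 ^ n * 2 ^ n * l * volume (⋃ i ∈ D, cub i) := by
        rw [ENNReal.tsum_mul_left, measure_biUnion hDc hDd (fun i _ => meas_cub i)]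
    _ ≤ _ := by
        gcongr C * 5 ^ n * 2 ^ n * l * ?_
        refine measure_mono_ae ?_
        have hall : ∀ᵐ x, ∀ i ∈ D, x ∈ cub i → ei u i ≤ u x :=
          (ae_ball_iff hDc).2 fun i _ => ei_le_ae u i
        filter_upwards [hall] with x hx hxm
        obtain ⟨i, hi, hxi⟩ := Set.mem_iUnion₂.1 hxm
        have hiT := hDT hi
        refine ⟨hiT.2.2.1 hxi, ?_⟩
        have h1 : l * volume (cub i) ≤ C * ei u i * volume (cub i) :=
          hiT.2.2.2.1.trans (h.a1 i hiT.1)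
        have h2 : l ≤ C * ei u i :=
          (ENNReal.mul_le_mul_iff_left (vol_cub_ne_zero hiT.1) (vol_cub_ne_top i)).1 h1
        exact h2.trans (by gcongr; exact hx i hi hxi)

lemma W1.step {n : ℕ} {u : ESp n → ℝ≥0∞} {C : ℝ≥0∞} (h : W1 u C) :
    ∃ B θ : ℝ≥0∞, 1 < B ∧ B ≠ ⊤ ∧ θ < 1 ∧ ∀ (Q : CI n) (s : ℝ≥0∞), 0 < Q.2 → s ≠ 0 → s ≠ ⊤ →
      ∫⁻ x in cub Q, u x ≤ s * volume (cub Q) →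
      ∫⁻ x in cub Q ∩ {x | B * s < u x}, u x ≤ θ * ∫⁻ x in cub Q ∩ {x | s < u x}, u x := by
  set K : ℝ≥0∞ := max 1 (C * 5 ^ n * 2 ^ n) with hK
  have hK1 : 1 ≤ K := le_max_left _ _
  have hKt : K ≠ ⊤ := by
    have h1 : C * 5 ^ n * 2 ^ n ≠ ⊤ := by
      refine ENNReal.mul_ne_top (ENNReal.mul_ne_top h.Cfin ?_) ?_ <;>
      exact ENNReal.pow_ne_top (by simp)
    exact (max_lt ENNReal.one_lt_top h1.lt_top).ne
  have hKK : C * 5 ^ n * 2 ^ n ≤ K := le_max_right _ _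
  have hCK : C ≤ K := by
    refine le_trans ?_ hKK
    calc C = C * 1 * 1 := by simp
      _ ≤ _ := by gcongr <;> exact one_le_pow₀ (by norm_num)
  have hB1 : 1 < 4 * K ^ 2 := by
    calc (1 : ℝ≥0∞) < 4 * 1 ^ 2 := by norm_num
      _ ≤ _ := by gcongr
  have hBt : 4 * K ^ 2 ≠ ⊤ := ENNReal.mul_ne_top (by simp) (ENNReal.pow_ne_top hKt)
  refine ⟨4 * K ^ 2, 4 * K ^ 2 / (1 + 4 * K ^ 2), hB1, hBt, ?_, ?_⟩
  · rw [ENNReal.div_lt_iff (Or.inl (by simp)) (Or.inl (by simpa using hBt)), one_mul]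
    conv_lhs => rw [← zero_add (4 * K ^ 2)]
    exact ENNReal.add_lt_add_right hBt (by simp)
  intro Q s hQ hs0 hst hav
  set B := 4 * K ^ 2 with hB
  set φ : ℝ≥0∞ := ∫⁻ x in cub Q ∩ {x | B * s < u x}, u x with hφ
  have hmB : MeasurableSet {x | B * s < u x} := measurableSet_lt measurable_const h.meas
  have hms : MeasurableSet {x | s < u x} := measurableSet_lt measurable_const h.meas
  have hφt : φ ≠ ⊤ := ne_top_of_le_ne_top (h.int_ne_top hQ) (lintegral_mono_set Set.inter_subset_left)
  have hsB : s ≤ B * s := le_mul_of_one_le_left (by simp) hB1.le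
  set mid : Set (ESp n) := cub Q ∩ {x | s < u x} ∩ {x | B * s < u x}ᶜ with hmid
  have hset : (cub Q ∩ {x | s < u x}) ∩ {x | B * s < u x} = cub Q ∩ {x | B * s < u x} := by
    ext x
    constructor
    · rintro ⟨⟨h1, h2⟩, h3⟩
      exact ⟨h1, h3⟩
    · rintro ⟨h1, h2⟩
      exact ⟨⟨h1, lt_of_le_of_lt hsB h2⟩, h2⟩
  have hsplit : φ + ∫⁻ x in mid, u x = ∫⁻ x in cub Q ∩ {x | s < u x}, u x := by
    rw [hφ, ← hset]
    exact lintegral_inter_add_sdiff _ _ hmB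
  have hsplitμ : volume (cub Q ∩ {x | B * s < u x}) + volume mid =
      volume (cub Q ∩ {x | s < u x}) := by
    rw [← hset]
    exact measure_inter_add_sdiff _ hmB
  have hw := h.weak hQ (l := 2 * K * s) (by
    refine hav.trans ?_
    gcongr
    refine le_mul_of_one_le_left (by simp) ?_
    calc (1 : ℝ≥0∞) ≤ 2 * 1 := by norm_num
      _ ≤ _ := by gcongr)
  have h1 : φ ≤ 2 * K ^ 2 * s * volume (cub Q ∩ {x | s < u x}) := by
    calc φ ≤ ∫⁻ x in cub Q ∩ {x | 2 * K * s < u x}, u x := by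
          refine lintegral_mono_set (Set.inter_subset_inter_right _ fun x hx => ?_)
          have hx : B * s < u x := hx
          refine lt_of_le_of_lt (b := B * s) ?_ hx
          gcongr
          calc 2 * K = 2 * K * 1 := by simp
            _ ≤ 2 * K * (2 * K) := by
              gcongr
              calc (1 : ℝ≥0∞) ≤ 2 * 1 := by norm_num
                _ ≤ _ := by gcongr
            _ = B := by rw [hB]; ring
      _ ≤ _ := hw
      _ ≤ K * (2 * K * s) * volume (cub Q ∩ {x | s < u x}) := by
          gcongr ?_ * (2 * K * s) * volume (cub Q ∩ ?_)
          intro x hx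
          have hx : 2 * K * s ≤ C * u x := hx
          have h2 : K * (2 * s) ≤ K * u x := by
            calc _ = 2 * K * s := by ring
              _ ≤ _ := hx
              _ ≤ _ := by gcongr
          have h3 : 2 * s ≤ u x := (ENNReal.mul_le_mul_iff_right
            (zero_lt_one.trans_le hK1).ne' hKt).1 h2
          refine lt_of_lt_of_le ?_ h3
          rw [two_mul]
          exact ENNReal.lt_add_right hst hs0
      _ = _ := by ring
  have h2 : B * s * volume (cub Q ∩ {x | B * s < u x}) ≤ φ := by
    rw [← setLIntegral_const]
    refine setLIntegral_mono' ((meas_cub Q).inter hmB) fun x hx => ?_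
    exact le_of_lt hx.2
  have h3 : s * volume mid ≤ ∫⁻ x in mid, u x := by
    rw [← setLIntegral_const]
    refine setLIntegral_mono' (((meas_cub Q).inter hms).inter hmB.compl) fun x hx => ?_
    exact le_of_lt hx.1.2
  have h4 : 2 * φ ≤ φ + B * ∫⁻ x in mid, u x := by
    calc 2 * φ ≤ 2 * (2 * K ^ 2 * s * volume (cub Q ∩ {x | s < u x})) := by gcongr
      _ = B * s * volume (cub Q ∩ {x | B * s < u x}) + B * (s * volume mid) := by
          rw [← hsplitμ, hB]; ring
      _ ≤ _ := by gcongr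
  have h5 : φ ≤ B * ∫⁻ x in mid, u x := by
    rw [two_mul] at h4
    exact (ENNReal.add_le_add_iff_left hφt).1 h4
  have h6 : φ * (1 + B) ≤ B * ∫⁻ x in cub Q ∩ {x | s < u x}, u x := by
    rw [← hsplit]
    calc φ * (1 + B) = φ + B * φ := by ring
      _ ≤ B * (∫⁻ x in mid, u x) + B * φ := by gcongr
      _ = _ := by ring
  have h7 : B / (1 + B) * ∫⁻ x in cub Q ∩ {x | s < u x}, u x =
      (B * ∫⁻ x in cub Q ∩ {x | s < u x}, u x) / (1 + B) := by
    simp only [div_eq_mul_inv]; ring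
  rw [h7, ENNReal.le_div_iff_mul_le (Or.inl (by simp)) (Or.inl (by simpa using hBt))]
  exact h6

lemma W1.decay {n : ℕ} {u : ESp n → ℝ≥0∞} {C : ℝ≥0∞} (h : W1 u C) :
    ∃ a : ℝ≥0∞, 1 < a ∧ a ≠ ⊤ ∧ ∀ D : ℝ≥0∞, D ≠ ⊤ → ∃ ε : ℕ → ℝ≥0∞, ∑' j, ε j ≠ ⊤ ∧
      ∀ (Q : CI n) (F : Set (ESp n)) (j : ℕ), 0 < Q.2 → MeasurableSet F → F ⊆ cub Q →
        a ^ j * volume F ≤ D * volume (cub Q) →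
        ∫⁻ x in F, u x ≤ ε j * ∫⁻ x in cub Q, u x := by
  obtain ⟨B, θ, hB1, hBt, hθ, hstep⟩ := h.step
  refine ⟨B ^ 2, one_lt_pow₀ hB1 (by norm_num), ENNReal.pow_ne_top hBt, fun D hD => ?_⟩
  have hB0 : B ≠ 0 := (zero_lt_one.trans hB1).ne'
  refine ⟨fun j => θ ^ j + D * (B⁻¹) ^ j, ?_, ?_⟩
  · rw [ENNReal.tsum_add, ENNReal.tsum_mul_left, ENNReal.tsum_geometric, ENNReal.tsum_geometric]
    refine ENNReal.add_ne_top.2 ⟨?_, ENNReal.mul_ne_top hD ?_⟩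
    · rw [ENNReal.inv_ne_top]
      exact (tsub_pos_of_lt hθ).ne'
    · rw [ENNReal.inv_ne_top]
      exact (tsub_pos_of_lt (ENNReal.inv_lt_one.2 hB1)).ne'
  intro Q F j hQ hF hFQ hsmall
  set I := ∫⁻ x in cub Q, u x with hI
  have hI0 : I ≠ 0 := h.int_ne_zero hQ
  have hIt : I ≠ ⊤ := h.int_ne_top hQ
  have hv0 := vol_cub_ne_zero hQ
  have hvt := vol_cub_ne_top Q
  set s := I / volume (cub Q) with hs
  have hs0 : s ≠ 0 := ENNReal.div_ne_zero.2 ⟨hI0, hvt⟩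
  have hst : s ≠ ⊤ := ENNReal.div_ne_top hIt hv0
  have hsI : s * volume (cub Q) = I := ENNReal.div_mul_cancel hv0 hvt
  have hiter : ∀ i : ℕ, ∫⁻ x in cub Q ∩ {x | B ^ i * s < u x}, u x ≤ θ ^ i * I := by
    intro i
    induction i with
    | zero =>
      simp only [pow_zero, one_mul]
      exact lintegral_mono_set Set.inter_subset_left
    | succ i ih =>
      have h1 := hstep Q (B ^ i * s) hQ (mul_ne_zero (pow_ne_zero _ hB0) hs0)
        (ENNReal.mul_ne_top (ENNReal.pow_ne_top hBt) hst) (by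
          rw [mul_assoc, hsI]
          exact le_mul_of_one_le_left (by simp) (one_le_pow₀ hB1.le))
      have h2 : B ^ (i + 1) * s = B * (B ^ i * s) := by ring
      rw [h2]
      calc _ ≤ _ := h1
        _ ≤ θ * (θ ^ i * I) := by gcongr
        _ = _ := by ring
  have hm : MeasurableSet {x | B ^ j * s < u x} := measurableSet_lt measurable_const h.meas
  have hsm : B ^ j * volume F ≤ D * volume (cub Q) * (B⁻¹) ^ j := by
    rw [← ENNReal.inv_pow, ← div_eq_mul_inv, ENNReal.le_div_iff_mul_le
      (Or.inl (pow_ne_zero _ hB0)) (Or.inl (ENNReal.pow_ne_top hBt))]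
    calc _ = (B ^ 2) ^ j * volume F := by rw [← pow_mul, mul_comm 2 j, pow_mul]; ring
      _ ≤ _ := hsmall
  rw [← lintegral_inter_add_sdiff u F hm, add_mul]
  gcongr ?_ + ?_
  · exact (lintegral_mono_set (Set.inter_subset_inter_left _ hFQ)).trans (hiter j)
  · calc ∫⁻ x in F \ {x | B ^ j * s < u x}, u x ≤
          ∫⁻ x in F \ {x | B ^ j * s < u x}, B ^ j * s := by
          refine setLIntegral_mono' (hF.diff hm) fun x hx => ?_
          exact not_lt.1 hx.2
      _ = B ^ j * s * volume (F \ {x | B ^ j * s < u x}) := setLIntegral_const _ _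
      _ ≤ B ^ j * s * volume F := by gcongr; exact Set.sdiff_subset
      _ = s * (B ^ j * volume F) := by ring
      _ ≤ s * (D * volume (cub Q) * (B⁻¹) ^ j) := by gcongr
      _ = D * (B⁻¹) ^ j * (s * volume (cub Q)) := by ring
      _ = _ := by rw [hsI]

/-! ### The mixed weak type inequality for the Hardy-Littlewood maximal operator -/

lemma geom_layer {a : ℝ≥0∞} (ha : 1 < a) (hat : a ≠ ⊤) (y : ℝ≥0∞) :
    ∑' m : ℤ, (if a ^ m ≤ y then a ^ m else 0) ≤ (1 - a⁻¹)⁻¹ * y := by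
  have ha0 : a ≠ 0 := (zero_lt_one.trans ha).ne'
  rcases eq_or_ne y 0 with rfl | hy0
  · have : ∀ m : ℤ, (if a ^ m ≤ 0 then a ^ m else 0) = 0 := by
      intro m
      split_ifs with h
      · exact le_antisymm h (by simp)
      · rfl
    simp [this]
  rcases eq_or_ne y ⊤ with rfl | hyt
  · rw [ENNReal.mul_top]
    · exact le_top
    · rw [Ne, ENNReal.inv_eq_zero]
      exact ne_top_of_le_ne_top (by simp) tsub_le_self
  obtain ⟨k, hk1, hk2⟩ := ENNReal.exists_mem_Ico_zpow hy0 hyt ha hat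
  have hinj : Function.Injective (fun i : ℕ => k - (i : ℤ)) := by
    intro i j hij
    simpa using hij
  have hsupp : Function.support (fun m : ℤ => if a ^ m ≤ y then a ^ m else 0) ⊆
      Set.range (fun i : ℕ => k - (i : ℤ)) := by
    intro m hm
    have h1 : a ^ m ≤ y := by
      by_contra hcon
      simp [hcon] at hm
    have h2 : m < k + 1 := by
      by_contra hcon
      have := ENNReal.zpow_le_of_le ha.le (not_lt.1 hcon)
      exact absurd (this.trans h1) (not_le.2 hk2)
    exact ⟨(k - m).toNat, by simp only; omega⟩
  rw [← hinj.tsum_eq hsupp]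
  calc ∑' i : ℕ, (if a ^ (k - (i : ℤ)) ≤ y then a ^ (k - (i : ℤ)) else 0)
      ≤ ∑' i : ℕ, a ^ k * a⁻¹ ^ i := by
        refine ENNReal.tsum_le_tsum fun i => ?_
        have : a ^ (k - (i : ℤ)) = a ^ k * a⁻¹ ^ i := by
          rw [sub_eq_add_neg, ENNReal.zpow_add ha0 hat, ENNReal.zpow_neg, zpow_natCast,
            ENNReal.inv_pow]
        rw [this]
        split_ifs
        · exact le_rfl
        · simp
    _ = (1 - a⁻¹)⁻¹ * a ^ k := by
        rw [ENNReal.tsum_mul_left, ENNReal.tsum_geometric, mul_comm]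
    _ ≤ _ := by gcongr

lemma layer {n : ℕ} {a : ℝ≥0∞} (ha : 1 < a) (hat : a ≠ ⊤) (ν : Measure (ESp n))
    {g W : ESp n → ℝ≥0∞} (hg : Measurable g) (hW : Measurable W) :
    ∑' m : ℤ, a ^ m * ∫⁻ x in {x | a ^ m ≤ W x}, g x ∂ν ≤
      (1 - a⁻¹)⁻¹ * ∫⁻ x, g x * W x ∂ν := by
  have hms : ∀ m : ℤ, MeasurableSet {x | a ^ m ≤ W x} := fun m =>
    measurableSet_le measurable_const hW
  have h1 : ∀ m : ℤ, a ^ m * ∫⁻ x in {x | a ^ m ≤ W x}, g x ∂ν =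
      ∫⁻ x, g x * (if a ^ m ≤ W x then a ^ m else 0) ∂ν := by
    intro m
    rw [← lintegral_const_mul _ hg, ← lintegral_indicator (hms m)]
    refine lintegral_congr fun x => ?_
    by_cases hx : a ^ m ≤ W x
    · simp [hx, mul_comm]
    · simp [hx]
  simp only [h1]
  have hgW : Measurable fun x => g x * W x := hg.mul hW
  rw [← lintegral_tsum, ← lintegral_const_mul _ hgW]
  · refine lintegral_mono fun x => ?_
    simp only [ENNReal.tsum_mul_left]
    calc _ ≤ g x * ((1 - a⁻¹)⁻¹ * W x) := by
          gcongr
          exact geom_layer ha hat _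
      _ = _ := by ring
  · intro m
    exact (hg.mul (Measurable.ite (hms m) measurable_const measurable_const)).aemeasurable

lemma carl {n : ℕ} {u V h : ESp n → ℝ≥0∞} {Cv : ℝ≥0∞} (hV : W1 V Cv) {T : Set (CI n)} {R : ℝ}
    (hpos : ∀ i ∈ T, 0 < i.2) (hR : ∀ i ∈ T, i.2 ≤ R) {L A c : ℝ≥0∞}
    (hL : ∀ i ∈ T, L ≤ ei u i)
    (hT : ∀ i ∈ T, A * ∫⁻ x in cub i, V x ≤ c * ∫⁻ x in cub i, h x) :
    A * ∫⁻ x in ⋃ i ∈ T, cub i, V x ≤ Cv * 5 ^ n * c * ∫⁻ x in {x | L ≤ u x}, h x := by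
  obtain ⟨D, hDT, hDc, hDd, hcov⟩ := vitali T R hpos hR
  have : Countable D := hDc.to_subtype
  have hsub : (⋃ i ∈ T, cub i) ⊆ ⋃ i : D, cub (enl i.1) := by
    intro x hx
    obtain ⟨i, hi, hxi⟩ := Set.mem_iUnion₂.1 hx
    obtain ⟨j, hj, hij⟩ := hcov i hi
    exact Set.mem_iUnion.2 ⟨⟨j, hj⟩, hij hxi⟩
  calc A * ∫⁻ x in ⋃ i ∈ T, cub i, V x
      ≤ A * ∑' i : D, ∫⁻ x in cub (enl i.1), V x := by
        gcongr
        exact (lintegral_mono_set hsub).trans (lintegral_iUnion_le _ _)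
    _ = ∑' i : D, A * ∫⁻ x in cub (enl i.1), V x := by rw [ENNReal.tsum_mul_left]
    _ ≤ ∑' i : D, Cv * 5 ^ n * c * ∫⁻ x in cub i.1, h x := by
        refine ENNReal.tsum_le_tsum fun i => ?_
        calc A * ∫⁻ x in cub (enl i.1), V x
            ≤ A * (Cv * 5 ^ n * ∫⁻ x in cub i.1, V x) := by
              gcongr
              refine (hV.enl_le (hpos _ (hDT i.2))).trans ?_
              gcongr
              exact ei_mul_le V i.1
          _ = Cv * 5 ^ n * (A * ∫⁻ x in cub i.1, V x) := by ring
          _ ≤ Cv * 5 ^ n * (c * ∫⁻ x in cub i.1, h x) := by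
              gcongr Cv * 5 ^ n * ?_
              exact hT _ (hDT i.2)
          _ = _ := by ring
    _ = Cv * 5 ^ n * c * ∫⁻ x in ⋃ i ∈ D, cub i, h x := by
        rw [ENNReal.tsum_mul_left, lintegral_biUnion hDc (fun i _ => meas_cub i) hDd]
    _ ≤ _ := by
        gcongr Cv * 5 ^ n * c * ?_
        refine lintegral_mono' (Measure.restrict_mono_ae ?_) le_rfl
        have hall : ∀ᵐ x, ∀ i ∈ D, x ∈ cub i → ei u i ≤ u x :=
          (ae_ball_iff hDc).2 fun i _ => ei_le_ae u i
        filter_upwards [hall] with x hx hxm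
        obtain ⟨i, hi, hxi⟩ := Set.mem_iUnion₂.1 hxm
        exact (hL i (hDT hi)).trans (hx i hi hxi)

lemma core {n : ℕ} {u V : ESp n → ℝ≥0∞} {Cu Cv : ℝ≥0∞} (hu : W1 u Cu) (hV : W1 V Cv) :
    ∃ K : ℝ≥0∞, K ≠ ⊤ ∧ ∀ (h : ESp n → ℝ≥0∞) (S : Set (CI n)) (R : ℝ), Measurable h →
      S.Countable → (∀ i ∈ S, 0 < i.2) → (∀ i ∈ S, i.2 ≤ R) →
      ∫⁻ x in {x | ∃ i ∈ S, x ∈ cub i ∧ V x * volume (cub i) < ∫⁻ y in cub i, h y}, u x * V x ≤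
        K * ∫⁻ x, h x * u x := by
  obtain ⟨a, ha, hat, hdecay⟩ := hu.decay
  have ha0 : a ≠ 0 := (zero_lt_one.trans ha).ne'
  obtain ⟨ε, hε, hdec⟩ := hdecay (Cv * a) (ENNReal.mul_ne_top hV.Cfin hat)
  have hzt : ∀ m : ℤ, a ^ m ≠ ⊤ := fun m => ENNReal.zpow_ne_top ha0 hat m
  have hz0 : ∀ m : ℤ, a ^ m ≠ 0 := fun m => (ENNReal.zpow_pos ha0 hat m).ne'
  have hz1 : ∀ m : ℤ, a ^ (m + 1) = a ^ m * a := fun m => by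
    rw [ENNReal.zpow_add ha0 hat, zpow_one]
  have hzj : ∀ (m : ℤ) (j : ℕ), a ^ (m + j) = a ^ m * a ^ j := fun m j => by
    rw [ENNReal.zpow_add ha0 hat, zpow_natCast]
  set K1 : ℝ≥0∞ := (1 - a⁻¹)⁻¹ with hK1
  have hK1t : K1 ≠ ⊤ := by
    rw [hK1, ENNReal.inv_ne_top]
    exact (tsub_pos_of_lt (ENNReal.inv_lt_one.2 ha)).ne'
  have h5 : (5 : ℝ≥0∞) ^ n ≠ ⊤ := ENNReal.pow_ne_top (by simp)
  set M1 : ℝ≥0∞ := Cu * 5 ^ n * a * a * K1 * (Cv * 5 ^ n * (Cv * a)) * K1 with hM1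
  have hM1t : M1 ≠ ⊤ := by
    have h1 := hu.Cfin
    have h2 := hV.Cfin
    simp only [hM1]
    repeat' apply ENNReal.mul_ne_top
    all_goals assumption
  refine ⟨(∑' j, ε j) * M1, ENNReal.mul_ne_top hε hM1t, ?_⟩
  intro h S R hh hSc hpos hR
  let T : ℕ → ℤ → ℤ → Set (CI n) := fun j l m => {i | i ∈ S ∧ a ^ l ≤ ei u i ∧ ei u i < a ^ (l + 1) ∧
    a ^ m ≤ ei V i ∧ ei V i < a ^ (m + 1) ∧ a ^ (m + j) * volume (cub i) ≤ ∫⁻ y in cub i, h y}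
  have hvit := fun j l m => vitali (T j l m) R (fun i hi => hpos i hi.1) (fun i hi => hR i hi.1)
  choose D hDT hDc hDd hcov using hvit
  have hcD : ∀ j l m, Countable (D j l m) := fun j l m => (hDc j l m).to_subtype
  let E : ℤ → Set (ESp n) := fun k => {x | a ^ k ≤ V x ∧ V x < a ^ (k + 1)}
  have hEm : ∀ k, MeasurableSet (E k) := fun k =>
    (measurableSet_le measurable_const hV.meas).inter (measurableSet_lt hV.meas measurable_const)
  have hsub : ({x | ∃ i ∈ S, x ∈ cub i ∧ V x * volume (cub i) < ∫⁻ y in cub i, h y} : Set (ESp n))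
      ≤ᵐ[volume] (⋃ j : ℕ, ⋃ l : ℤ, ⋃ m : ℤ, ⋃ Q : D j l m, (cub (enl Q.1) ∩ E (m + j)) :
        Set (ESp n)) := by
    have hall : ∀ᵐ x, ∀ i ∈ S, x ∈ cub i → ei V i ≤ V x :=
      (ae_ball_iff hSc).2 fun i _ => ei_le_ae V i
    filter_upwards [hall, hV.pos] with x hx hx0 hxm
    obtain ⟨i, hiS, hxi, hlt⟩ := hxm
    have hi := hpos i hiS
    obtain ⟨k, hk1, hk2⟩ := ENNReal.exists_mem_Ico_zpow hx0 (hV.fin x) ha hat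
    obtain ⟨m, hm1, hm2⟩ := ENNReal.exists_mem_Ico_zpow (hV.ei_ne_zero hi) (hV.ei_ne_top hi) ha hat
    obtain ⟨l, hl1, hl2⟩ := ENNReal.exists_mem_Ico_zpow (hu.ei_ne_zero hi) (hu.ei_ne_top hi) ha hat
    have hmk : m < k + 1 := by
      by_contra hcon
      have h1 := ENNReal.zpow_le_of_le ha.le (not_lt.1 hcon)
      exact absurd (h1.trans (hm1.trans (hx i hiS hxi))) (not_le.2 hk2)
    obtain ⟨j, hj⟩ : ∃ j : ℕ, k = m + j := ⟨(k - m).toNat, by omega⟩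
    subst hj
    obtain ⟨Q, hQ, hiQ⟩ := hcov j l m i ⟨hiS, hl1, hl2, hm1, hm2,
      (by gcongr : a ^ (m + (j : ℤ)) * volume (cub i) ≤ V x * volume (cub i)).trans hlt.le⟩
    refine Set.mem_iUnion.2 ⟨j, Set.mem_iUnion.2 ⟨l, Set.mem_iUnion.2 ⟨m, Set.mem_iUnion.2
      ⟨⟨Q, hQ⟩, hiQ hxi, hk1, hk2⟩⟩⟩⟩
  -- the bound for one selected cube
  have hterm : ∀ j l m (Q : D j l m), ∫⁻ x in cub (enl Q.1) ∩ E (m + j), u x * V x ≤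
      (ε j * (Cu * 5 ^ n * a * a)) * (a ^ l * (a ^ j * (a ^ m * volume (cub Q.1)))) := by
    intro j l m Q
    obtain ⟨hQS, hl1, hl2, hm1, hm2, hQh⟩ := hDT j l m Q.2
    have hQ := hpos _ hQS
    have hQ5 : 0 < (enl Q.1).2 := by simpa [enl] using hQ
    have hFm : MeasurableSet (cub (enl Q.1) ∩ E (m + j)) := (meas_cub _).inter (hEm _)
    have hsmall : a ^ j * volume (cub (enl Q.1) ∩ E (m + j)) ≤
        Cv * a * volume (cub (enl Q.1)) := by
      have h1 : a ^ m * (a ^ j * volume (cub (enl Q.1) ∩ E (m + j))) ≤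
          a ^ m * (Cv * a * volume (cub (enl Q.1))) := by
        calc _ = a ^ (m + (j:ℤ)) * volume (cub (enl Q.1) ∩ E (m + j)) := by rw [hzj]; ring
          _ = ∫⁻ x in cub (enl Q.1) ∩ E (m + j), a ^ (m + (j:ℤ)) := (setLIntegral_const _ _).symm
          _ ≤ ∫⁻ x in cub (enl Q.1) ∩ E (m + j), V x :=
              setLIntegral_mono' hFm fun x hx => hx.2.1
          _ ≤ ∫⁻ x in cub (enl Q.1), V x := lintegral_mono_set Set.inter_subset_left
          _ ≤ Cv * ei V (enl Q.1) * volume (cub (enl Q.1)) := hV.a1 _ hQ5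
          _ ≤ Cv * (a ^ m * a) * volume (cub (enl Q.1)) := by
              gcongr
              rw [← hz1]
              exact (ei_mono V (sub_enl_self hQ)).trans hm2.le
          _ = _ := by ring
      exact (ENNReal.mul_le_mul_iff_right (hz0 m) (hzt m)).1 h1
    have hd := hdec (enl Q.1) _ j hQ5 hFm Set.inter_subset_left hsmall
    calc ∫⁻ x in cub (enl Q.1) ∩ E (m + j), u x * V x
        ≤ ∫⁻ x in cub (enl Q.1) ∩ E (m + j), a ^ (m + (j:ℤ) + 1) * u x := by
          refine setLIntegral_mono' hFm fun x hx => ?_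
          rw [mul_comm]
          gcongr
          exact hx.2.2.le
      _ = a ^ (m + (j:ℤ) + 1) * ∫⁻ x in cub (enl Q.1) ∩ E (m + j), u x :=
          lintegral_const_mul _ hu.meas
      _ ≤ a ^ m * a ^ j * a * (ε j * (Cu * 5 ^ n * (a ^ l * a * volume (cub Q.1)))) := by
          rw [hz1, hzj]
          gcongr a ^ m * a ^ j * a * ?_
          refine hd.trans ?_
          gcongr ε j * ?_
          refine (hu.enl_le hQ).trans ?_
          gcongr
          rw [← hz1]
          exact hl2.le
      _ = _ := by ring
  -- the sum over `m`
  have hG : ∀ j l, ∑' m : ℤ, ∑' Q : D j l m, a ^ j * (a ^ m * volume (cub Q.1)) ≤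
      K1 * (Cv * 5 ^ n * (Cv * a)) * ∫⁻ x in {x | a ^ l ≤ u x}, h x := by
    intro j l
    set T' : Set (CI n) := ⋃ m, T j l m with hT'
    have hT'S : T' ⊆ S := by
      intro i hi
      obtain ⟨m, hm⟩ := Set.mem_iUnion.1 hi
      exact hm.1
    set G : Set (ESp n) := ⋃ i ∈ T', cub i with hGdef
    have hGm : MeasurableSet G :=
      MeasurableSet.biUnion (hSc.mono hT'S) fun i _ => meas_cub i
    have hcarl : a ^ j * ∫⁻ x in G, V x ≤
        Cv * 5 ^ n * (Cv * a) * ∫⁻ x in {x | a ^ l ≤ u x}, h x := by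
      refine carl hV (R := R) (fun i hi => hpos i (hT'S hi)) (fun i hi => hR i (hT'S hi)) ?_ ?_
      · intro i hi
        obtain ⟨m, hm⟩ := Set.mem_iUnion.1 hi
        exact hm.2.1
      · intro i hi
        obtain ⟨m, hm⟩ := Set.mem_iUnion.1 hi
        obtain ⟨hiS, hl1, hl2, hm1, hm2, hih⟩ := hm
        calc a ^ j * ∫⁻ x in cub i, V x ≤ a ^ j * (Cv * (a ^ m * a) * volume (cub i)) := by
              gcongr
              refine (hV.a1 i (hpos i hiS)).trans ?_
              gcongr
              rw [← hz1]
              exact hm2.le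
          _ = Cv * a * (a ^ (m + (j:ℤ)) * volume (cub i)) := by rw [hzj]; ring
          _ ≤ _ := by gcongr
    have hm : ∀ m : ℤ, ∑' Q : D j l m, a ^ j * (a ^ m * volume (cub Q.1)) ≤
        a ^ j * (a ^ m * ∫⁻ x in {x | a ^ m ≤ V x}, 1 ∂(volume.restrict G)) := by
      intro m
      rw [ENNReal.tsum_mul_left, ENNReal.tsum_mul_left,
        ← measure_biUnion (hDc j l m) (hDd j l m) (fun i _ => meas_cub i)]
      gcongr
      rw [setLIntegral_one, Measure.restrict_apply (measurableSet_le measurable_const hV.meas)]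
      refine measure_mono_ae ?_
      have hall : ∀ᵐ x, ∀ i ∈ D j l m, x ∈ cub i → ei V i ≤ V x :=
        (ae_ball_iff (hDc j l m)).2 fun i _ => ei_le_ae V i
      filter_upwards [hall] with x hx hxm
      obtain ⟨i, hi, hxi⟩ := Set.mem_iUnion₂.1 hxm
      have hiT := hDT j l m hi
      exact ⟨hiT.2.2.2.1.trans (hx i hi hxi),
        Set.mem_biUnion (Set.mem_iUnion.2 ⟨m, hiT⟩) hxi⟩
    calc _ ≤ ∑' m : ℤ, a ^ j * (a ^ m * ∫⁻ x in {x | a ^ m ≤ V x}, 1 ∂(volume.restrict G)) :=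
          ENNReal.tsum_le_tsum hm
      _ = a ^ j * ∑' m : ℤ, (a ^ m * ∫⁻ x in {x | a ^ m ≤ V x}, 1 ∂(volume.restrict G)) :=
          ENNReal.tsum_mul_left
      _ ≤ a ^ j * (K1 * ∫⁻ x in G, 1 * V x) := by
          gcongr
          exact layer ha hat (volume.restrict G) measurable_const hV.meas
      _ = K1 * (a ^ j * ∫⁻ x in G, V x) := by simp only [one_mul]; ring
      _ ≤ K1 * (Cv * 5 ^ n * (Cv * a) * ∫⁻ x in {x | a ^ l ≤ u x}, h x) := by gcongr K1 * ?_
      _ = _ := by ring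
  calc _ ≤ ∫⁻ x in ⋃ j : ℕ, ⋃ l : ℤ, ⋃ m : ℤ, ⋃ Q : D j l m, (cub (enl Q.1) ∩ E (m + j)),
          u x * V x := lintegral_mono' (Measure.restrict_mono_ae hsub) le_rfl
    _ ≤ ∑' (j : ℕ) (l : ℤ) (m : ℤ) (Q : D j l m),
          ∫⁻ x in cub (enl Q.1) ∩ E (m + j), u x * V x := by
        refine (lintegral_iUnion_le _ _).trans (ENNReal.tsum_le_tsum fun j => ?_)
        refine (lintegral_iUnion_le _ _).trans (ENNReal.tsum_le_tsum fun l => ?_)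
        refine (lintegral_iUnion_le _ _).trans (ENNReal.tsum_le_tsum fun m => ?_)
        exact lintegral_iUnion_le _ _
    _ ≤ ∑' (j : ℕ) (l : ℤ) (m : ℤ) (Q : D j l m),
          (ε j * (Cu * 5 ^ n * a * a)) * (a ^ l * (a ^ j * (a ^ m * volume (cub Q.1)))) := by
        gcongr with j l m Q
        exact hterm j l m Q
    _ = ∑' (j : ℕ), (ε j * (Cu * 5 ^ n * a * a)) * ∑' (l : ℤ), a ^ l * ∑' (m : ℤ) (Q : D j l m),
          (a ^ j * (a ^ m * volume (cub Q.1))) := by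
        simp only [ENNReal.tsum_mul_left]
    _ ≤ ∑' (j : ℕ), (ε j * (Cu * 5 ^ n * a * a)) * ∑' (l : ℤ), a ^ l *
          (K1 * (Cv * 5 ^ n * (Cv * a)) * ∫⁻ x in {x | a ^ l ≤ u x}, h x) := by
        gcongr with j l
        exact hG j l
    _ = ∑' (j : ℕ), (ε j * (Cu * 5 ^ n * a * a)) * (K1 * (Cv * 5 ^ n * (Cv * a)) *
          ∑' (l : ℤ), a ^ l * ∫⁻ x in {x | a ^ l ≤ u x}, h x) := by
        congr 1
        ext j
        congr 1
        rw [← ENNReal.tsum_mul_left]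
        congr 1
        ext l
        ring
    _ ≤ ∑' (j : ℕ), (ε j * (Cu * 5 ^ n * a * a)) * (K1 * (Cv * 5 ^ n * (Cv * a)) *
          (K1 * ∫⁻ x, h x * u x)) := by
        gcongr with j
        exact layer ha hat volume hh hu.meas
    _ = _ := by
        rw [ENNReal.tsum_mul_right, ENNReal.tsum_mul_right, hM1]
        ring

/-! ### Reduction to countably many cubes and measurable functions -/

/-- Cubes with rational data. -/
def ratCubes (n : ℕ) : Set (CI n) :=
  (Set.range fun r : (Fin n → ℚ) × ℚ => ((fun k => (r.1 k : ℝ), (r.2 : ℝ)) : CI n)) ∩ {i | 0 < i.2}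

lemma ratCubes_countable (n : ℕ) : (ratCubes n).Countable :=
  (Set.countable_range _).mono Set.inter_subset_left

lemma exists_ratCube {n : ℕ} (Q : CI n) (hQ : 0 < Q.2) :
    ∃ i ∈ ratCubes n, cub Q ⊆ cub i ∧ volume (cub i) ≤ 2 ^ n * volume (cub Q) := by
  have h1 : ∀ k, ∃ r : ℚ, Q.1 k - Q.2 / 4 < r ∧ (r : ℝ) < Q.1 k := fun k =>
    exists_rat_btwn (by linarith)
  choose c hc1 hc2 using h1
  obtain ⟨h, hh1, hh2⟩ := exists_rat_btwn (show 3 * Q.2 / 2 < 2 * Q.2 by linarith)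
  refine ⟨(fun k => (c k : ℝ), (h : ℝ)), ⟨⟨(c, h), rfl⟩, ?_⟩, ?_, ?_⟩
  · show (0:ℝ) < h
    linarith
  · intro x hx k
    have := hx k
    have := hc1 k
    have := hc2 k
    simp only
    constructor <;> linarith
  · rw [vol_cub, vol_cub, ← mul_pow]
    gcongr
    have : (2 : ℝ≥0∞) = ENNReal.ofReal 2 := by simp
    rw [this, ← ENNReal.ofReal_mul (by norm_num)]
    exact ENNReal.ofReal_le_ofReal hh2.le

lemma exists_minorant {n : ℕ} (F : ESp n → ℝ≥0∞) {S : Set (CI n)} (hS : S.Countable) :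
    ∃ G : ESp n → ℝ≥0∞, Measurable G ∧ (∀ x, G x ≤ F x) ∧
      ∀ i ∈ S, ∫⁻ x in cub i, F x ≤ ∫⁻ x in cub i, G x := by
  choose g hg1 hg2 hg3 using fun i : CI n =>
    exists_measurable_le_lintegral_eq (μ := (volume.restrict (cub i) : Measure (ESp n))) F
  have : Countable S := hS.to_subtype
  refine ⟨fun x => ⨆ i : S, g i.1 x, Measurable.iSup fun i => hg1 i.1,
    fun x => iSup_le fun i => hg2 i.1 x, fun i hi => ?_⟩
  rw [hg3 i]
  exact lintegral_mono fun x => le_iSup (fun i : S => g i.1 x) ⟨i, hi⟩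

lemma core2 {n : ℕ} {u V : ESp n → ℝ≥0∞} {Cu Cv : ℝ≥0∞} (hu : W1 u Cu) (hV : W1 V Cv) :
    ∃ K : ℝ≥0∞, K ≠ ⊤ ∧ ∀ (h : ESp n → ℝ≥0∞) (S : Set (CI n)), Measurable h →
      S.Countable → (∀ i ∈ S, 0 < i.2) →
      ∫⁻ x in {x | ∃ i ∈ S, x ∈ cub i ∧ V x * volume (cub i) < ∫⁻ y in cub i, h y}, u x * V x ≤
        K * ∫⁻ x, h x * u x := by
  obtain ⟨K, hK, hcore⟩ := core hu hV
  refine ⟨K, hK, fun h S hh hS hpos => ?_⟩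
  let E : ℕ → Set (ESp n) := fun N => {x | ∃ i ∈ S ∩ {i | i.2 ≤ (N : ℝ)}, x ∈ cub i ∧
    V x * volume (cub i) < ∫⁻ y in cub i, h y}
  have hE : {x | ∃ i ∈ S, x ∈ cub i ∧ V x * volume (cub i) < ∫⁻ y in cub i, h y} = ⋃ N, E N := by
    ext x
    simp only [Set.mem_iUnion]
    constructor
    · rintro ⟨i, hi, h1⟩
      obtain ⟨N, hN⟩ := exists_nat_ge i.2
      exact ⟨N, i, ⟨hi, hN⟩, h1⟩
    · rintro ⟨N, i, hi, h1⟩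
      exact ⟨i, hi.1, h1⟩
  have hmono : Monotone E := by
    rintro N M hNM x ⟨i, hi, h1⟩
    have h2 : i.2 ≤ (N : ℝ) := hi.2
    have h3 : (N : ℝ) ≤ (M : ℝ) := by exact_mod_cast hNM
    have h4 : i.2 ≤ (M : ℝ) := h2.trans h3
    exact ⟨i, ⟨hi.1, h4⟩, h1⟩
  rw [hE, setLIntegral_iUnion_of_directed _ hmono.directed_le]
  exact iSup_le fun N => hcore h _ N hh (hS.mono Set.inter_subset_left)
    (fun i hi => hpos i hi.1) (fun i hi => hi.2)

/-! ### Hölder -/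

lemma pointwise_id {p q β : ℝ} (hp : 1 ≤ p) (hq : 0 < q) (hβ : 1 / q + β = 1 / p)
    {f w u : ℝ≥0∞} (hft : f ≠ ⊤) (hw0 : w ≠ 0) (hwt : w ≠ ⊤) (hu0 : u ≠ 0) (hut : u ≠ ⊤) :
    f * w = (f ^ p * u ^ (p / q - 1) * w) ^ (1 / q) * (f ^ p * u ^ (p / q) * w) ^ β *
      (w ^ (q / p)) ^ ((p - 1) / q) := by
  have hp0 : 0 < p := by linarith
  rcases eq_or_ne f 0 with rfl | hf0
  · rw [ENNReal.zero_rpow_of_pos hp0]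
    simp [ENNReal.zero_rpow_of_pos (inv_pos.2 hq)]
  have hfp0 : f ^ p ≠ 0 := by simp [hf0, hft]
  have hfpt : f ^ p ≠ ⊤ := by simp [hf0, hft]
  have hup0 : ∀ r : ℝ, u ^ r ≠ 0 := fun r => by simp [hu0, hut]
  have hupt : ∀ r : ℝ, u ^ r ≠ ⊤ := fun r => by simp [hu0, hut]
  rw [ENNReal.mul_rpow_of_ne_zero (mul_ne_zero hfp0 (hup0 _)) hw0,
    ENNReal.mul_rpow_of_ne_zero hfp0 (hup0 _),
    ENNReal.mul_rpow_of_ne_zero (mul_ne_zero hfp0 (hup0 _)) hw0,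
    ENNReal.mul_rpow_of_ne_zero hfp0 (hup0 _)]
  simp only [← ENNReal.rpow_mul]
  have e1 : f ^ (p * (1 / q)) * f ^ (p * β) = f := by
    rw [← ENNReal.rpow_add _ _ hf0 hft, ← mul_add, hβ, mul_one_div_cancel hp0.ne',
      ENNReal.rpow_one]
  have e2 : u ^ ((p / q - 1) * (1 / q)) * u ^ (p / q * β) = 1 := by
    rw [← ENNReal.rpow_add _ _ hu0 hut]
    have : (p / q - 1) * (1 / q) + p / q * β = 0 := by
      have : β = 1 / p - 1 / q := by linarith
      rw [this]
      field_simp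
      ring
    rw [this, ENNReal.rpow_zero]
  have e3 : w ^ (1 / q) * w ^ β * w ^ (q / p * ((p - 1) / q)) = w := by
    rw [← ENNReal.rpow_add _ _ hw0 hwt, ← ENNReal.rpow_add _ _ hw0 hwt, hβ]
    have : 1 / p + q / p * ((p - 1) / q) = 1 := by
      field_simp
      ring
    rw [this, ENNReal.rpow_one]
  calc f * w = (f ^ (p * (1 / q)) * f ^ (p * β)) *
        (u ^ ((p / q - 1) * (1 / q)) * u ^ (p / q * β)) *
        (w ^ (1 / q) * w ^ β * w ^ (q / p * ((p - 1) / q))) := by rw [e1, e2, e3, mul_one]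
    _ = _ := by ring

lemma holder4 {n : ℕ} (ν : Measure (ESp n)) {p q β : ℝ} (hp : 1 ≤ p) (hq : 0 < q) (hβ0 : 0 ≤ β)
    (hβ : 1 / q + β = 1 / p) {f w u : ESp n → ℝ≥0∞} (hf : Measurable f) (hw : Measurable w)
    (hu : Measurable u) (hft : ∀ x, f x ≠ ⊤) (hw0 : ∀ᵐ x ∂ν, w x ≠ 0) (hwt : ∀ x, w x ≠ ⊤)
    (hu0 : ∀ᵐ x ∂ν, u x ≠ 0) (hut : ∀ x, u x ≠ ⊤) :
    ∫⁻ x, f x * w x ∂ν ≤ (∫⁻ x, f x ^ p * u x ^ (p / q - 1) * w x ∂ν) ^ (1 / q) *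
      (∫⁻ x, f x ^ p * u x ^ (p / q) * w x ∂ν) ^ β *
      (∫⁻ x, w x ^ (q / p) ∂ν) ^ ((p - 1) / q) * (ν Set.univ) ^ ((p - 1) * β) := by
  have hp0 : 0 < p := by linarith
  let F : Fin 4 → ESp n → ℝ≥0∞ := ![fun x => f x ^ p * u x ^ (p / q - 1) * w x,
    fun x => f x ^ p * u x ^ (p / q) * w x, fun x => w x ^ (q / p), fun _ => 1]
  let P : Fin 4 → ℝ := ![1 / q, β, (p - 1) / q, (p - 1) * β]
  have hsum : ∑ i, P i = 1 := by
    simp only [P, Fin.sum_univ_four]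
    simp only [Matrix.cons_val]
    have h1 : β = 1 / p - 1 / q := by linarith
    rw [h1]
    field_simp
    ring
  have hF : ∀ i ∈ Finset.univ, AEMeasurable (F i) ν := by
    intro i _
    have h1 : Measurable fun x => f x ^ p := hf.pow_const p
    fin_cases i
    · exact ((h1.mul (hu.pow_const _)).mul hw).aemeasurable
    · exact ((h1.mul (hu.pow_const _)).mul hw).aemeasurable
    · exact (hw.pow_const _).aemeasurable
    · exact aemeasurable_const
  have hP : ∀ i ∈ Finset.univ, 0 ≤ P i := by
    intro i _
    have h1 : 0 ≤ p - 1 := by linarith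
    fin_cases i
    · show 0 ≤ 1 / q
      positivity
    · exact hβ0
    · show 0 ≤ (p - 1) / q
      positivity
    · show 0 ≤ (p - 1) * β
      positivity
  have hh := ENNReal.lintegral_prod_norm_pow_le (μ := ν) Finset.univ hF hsum hP
  simp only [Fin.prod_univ_four, F, P, Matrix.cons_val, ENNReal.one_rpow, mul_one,
    lintegral_one] at hh
  refine le_trans (le_of_eq (lintegral_congr_ae ?_)) hh
  filter_upwards [hw0, hu0] with x h1 h2
  exact pointwise_id hp hq hβ (hft x) h1 (hwt x) h2 (hut x)

/-- Algebraic step: passing from the fractional average to the ordinary average. -/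
lemma alg_step {p q β : ℝ} (hp : 1 ≤ p) (hq : 0 < q) (hβ : 1 / q + β = 1 / p)
    {t w V m c I J N C : ℝ≥0∞} (hV : V = w ^ (q / p)) (hV0 : V ≠ 0) (hVt : V ≠ ⊤) (hm0 : m ≠ 0)
    (hmt : m ≠ ⊤) (ht0 : t ≠ 0) (htt : t ≠ ⊤)
    (h1 : t * w * m ^ (1 - β) < c * I)
    (h2 : I ≤ J ^ (1 / q) * N ^ β * (C * V * m) ^ ((p - 1) / q) * m ^ ((p - 1) * β)) :
    V * m < (c ^ q * N ^ (q * β) * C ^ (p - 1) / t ^ q) * J := by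
  have hp0 : 0 < p := by linarith
  have hp1 : 0 ≤ p - 1 := by linarith
  have h3 : t * w * m ^ (1 - β) <
      c * (J ^ (1 / q) * N ^ β * (C * V * m) ^ ((p - 1) / q) * m ^ ((p - 1) * β)) :=
    h1.trans_le (by gcongr)
  have h4 := ENNReal.rpow_lt_rpow h3 hq
  have hq0 := hq.le
  simp only [ENNReal.mul_rpow_of_nonneg _ _ hq0, ← ENNReal.rpow_mul] at h4
  rw [one_div_mul_cancel hq.ne', ENNReal.rpow_one, div_mul_cancel₀ _ hq.ne',
    ENNReal.mul_rpow_of_nonneg _ _ hp1, ENNReal.mul_rpow_of_nonneg _ _ hp1] at h4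
  have e0 : ∀ (a : ℝ≥0∞) (r : ℝ), a ≠ 0 → a ≠ ⊤ → a ^ r * a = a ^ (r + 1) := by
    intro a r ha hat
    rw [ENNReal.rpow_add _ _ ha hat, ENNReal.rpow_one]
  have e1 : w ^ q = V ^ (p - 1) * V := by
    rw [e0 _ _ hV0 hVt, hV, ← ENNReal.rpow_mul]
    congr 1
    field_simp
    ring
  have e2 : m ^ ((1 - β) * q) = m ^ (p - 1) * m ^ ((p - 1) * β * q) * m := by
    rw [← ENNReal.rpow_add _ _ hm0 hmt, e0 _ _ hm0 hmt]
    congr 1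
    have : β = 1 / p - 1 / q := by linarith
    rw [this]
    field_simp
    ring
  rw [e1, e2] at h4
  set X := V ^ (p - 1) * (m ^ (p - 1) * m ^ ((p - 1) * β * q)) with hX
  have h5 : X * (t ^ q * (V * m)) < X * (c ^ q * N ^ (q * β) * C ^ (p - 1) * J) := by
    calc _ = t ^ q * (V ^ (p - 1) * V) * (m ^ (p - 1) * m ^ ((p - 1) * β * q) * m) := by
          rw [hX]; ring
      _ < _ := h4
      _ = _ := by rw [hX, mul_comm q β]; ring
  have h6 : t ^ q * (V * m) < c ^ q * N ^ (q * β) * C ^ (p - 1) * J := by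
    by_contra hcon
    exact absurd h5 (not_lt.2 (mul_le_mul' le_rfl (not_lt.1 hcon)))
  have htq0 : t ^ q ≠ 0 := by simp [ht0, htt]
  have htqt : t ^ q ≠ ⊤ := by simp [ht0, htt]
  have h7 : c ^ q * N ^ (q * β) * C ^ (p - 1) / t ^ q * J =
      (c ^ q * N ^ (q * β) * C ^ (p - 1) * J) / t ^ q := by
    simp only [div_eq_mul_inv]; ring
  rw [h7, ENNReal.lt_div_iff_mul_lt (Or.inl htq0) (Or.inl htqt), mul_comm]
  exact h6

lemma W1_of {n : ℕ} {w : ESp n → ℝ} (hm : Measurable w) (hpos : ∀ᵐ x, 0 < w x) {C : ℝ≥0∞}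
    (hC : C < ⊤) (h : A1Const w C) : W1 (fun x => ENNReal.ofReal (w x)) C where
  meas := hm.ennreal_ofReal
  Cfin := hC.ne
  pos := by
    filter_upwards [hpos] with x hx
    simpa using hx
  fin := fun x => ENNReal.ofReal_ne_top
  a1 := by
    intro i hi
    have h1 := h _ (isCube_cub i hi)
    rw [mul_comm, ← div_eq_mul_inv, ENNReal.div_le_iff (vol_cub_ne_zero hi) (vol_cub_ne_top i)] at h1
    exact h1

/-! ### The main estimate -/

lemma main_ennreal {n : ℕ} {p q β : ℝ} (hp : 1 ≤ p) (hq : 0 < q) (hβ0 : 0 ≤ β) (hβ1 : β ≤ 1)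
    (hβ : 1 / q + β = 1 / p) {uu w : ESp n → ℝ≥0∞} (hw : Measurable w) (hwt : ∀ x, w x ≠ ⊤)
    (hw0 : ∀ᵐ x, w x ≠ 0) {Cu Cv : ℝ≥0∞} (hu : W1 uu Cu) (hV : W1 (fun x => w x ^ (q / p)) Cv) :
    ∃ C : ℝ≥0∞, C ≠ ⊤ ∧ ∀ g : ESp n → ℝ≥0∞, (∀ x, g x ≠ ⊤) → ∀ t : ℝ≥0∞, t ≠ 0 → t ≠ ⊤ →
      (∫⁻ x in {x | ∃ Q : CI n, 0 < Q.2 ∧ x ∈ cub Q ∧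
        t * w x * volume (cub Q) ^ (1 - β) < ∫⁻ y in cub Q, g y * w y},
          uu x * w x ^ (q / p)) ^ (1 / q) ≤
      C / t * (∫⁻ x, g x ^ p * uu x ^ (p / q) * w x) ^ (1 / p) := by
  have hp0 : 0 < p := by linarith
  have hp1 : 0 ≤ p - 1 := by linarith
  have hiq : 0 ≤ 1 / q := by positivity
  have hβ1' : 0 ≤ 1 - β := by linarith
  obtain ⟨K, hK, hcore⟩ := core2 hu hV
  set c : ℝ≥0∞ := ((2 : ℝ≥0∞) ^ n) ^ (1 - β) with hc
  have hct : c ≠ ⊤ := ENNReal.rpow_ne_top_of_nonneg hβ1' (by simp)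
  have hc0 : c ≠ 0 := by
    rw [hc]
    simp
  refine ⟨K ^ (1 / q) * c * Cv ^ ((p - 1) / q), ?_, ?_⟩
  · refine ENNReal.mul_ne_top (ENNReal.mul_ne_top ?_ hct) ?_
    · exact ENNReal.rpow_ne_top_of_nonneg hiq hK
    · exact ENNReal.rpow_ne_top_of_nonneg (by positivity) hV.Cfin
  intro g hg t ht0 htt
  obtain ⟨G, hG, hGF, hGi⟩ := exists_minorant (fun x => g x * w x) (ratCubes_countable n)
  set φ : ESp n → ℝ≥0∞ := fun x => G x / w x with hφ
  have hφm : Measurable φ := hG.div hw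
  have hφg : ∀ x, φ x ≤ g x := fun x => ENNReal.div_le_of_le_mul (hGF x)
  have hφt : ∀ x, φ x ≠ ⊤ := fun x => ne_top_of_le_ne_top (hg x) (hφg x)
  have hφw : ∀ᵐ x, φ x * w x = G x := by
    filter_upwards [hw0] with x hx
    exact ENNReal.div_mul_cancel hx (hwt x)
  set N : ℝ≥0∞ := ∫⁻ x, φ x ^ p * uu x ^ (p / q) * w x with hN
  set h : ESp n → ℝ≥0∞ := fun x => φ x ^ p * uu x ^ (p / q - 1) * w x with hh
  have hhm : Measurable h := ((hφm.pow_const _).mul (hu.meas.pow_const _)).mul hw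
  set A : ℝ≥0∞ := c ^ q * N ^ (q * β) * Cv ^ (p - 1) / t ^ q with hA
  have hNint : ∫⁻ x, A * h x * uu x = A * N := by
    have e : ∀ᵐ x, A * h x * uu x = A * (φ x ^ p * uu x ^ (p / q) * w x) := by
      filter_upwards [hu.pos] with x hx
      have : uu x ^ (p / q) = uu x ^ (p / q - 1) * uu x := by
        conv_lhs => rw [show p / q = (p / q - 1) + 1 by ring]
        rw [ENNReal.rpow_add _ _ hx (hu.fin x), ENNReal.rpow_one]
      rw [this]
      simp only [hh]
      ring
    have hm : Measurable fun x => φ x ^ p * uu x ^ (p / q) * w x :=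
      ((hφm.pow_const _).mul (hu.meas.pow_const _)).mul hw
    rw [lintegral_congr_ae e, lintegral_const_mul _ hm]
  have hmain := hcore (fun x => A * h x) (ratCubes n) (hhm.const_mul A) (ratCubes_countable n)
    (fun i hi => hi.2)
  rw [hNint] at hmain
  have hei : ∀ᵐ x : ESp n, ∀ i ∈ ratCubes n, x ∈ cub i →
      ei (fun x => w x ^ (q / p)) i ≤ w x ^ (q / p) :=
    (ae_ball_iff (ratCubes_countable n)).2 fun i _ => ei_le_ae _ i
  have hsub : ∀ᵐ x : ESp n, (∃ Q : CI n, 0 < Q.2 ∧ x ∈ cub Q ∧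
        t * w x * volume (cub Q) ^ (1 - β) < ∫⁻ y in cub Q, g y * w y) →
      ∃ i ∈ ratCubes n, x ∈ cub i ∧
        w x ^ (q / p) * volume (cub i) < ∫⁻ y in cub i, A * h y := by
    filter_upwards [hei, hV.pos] with x hx hVx
    rintro ⟨Q, hQ, hxQ, hlt⟩
    obtain ⟨i, hi, hQi, hvol⟩ := exists_ratCube Q hQ
    refine ⟨i, hi, hQi hxQ, ?_⟩
    have hi0 : 0 < i.2 := hi.2
    have h1 : t * w x * volume (cub i) ^ (1 - β) < c * ∫⁻ y in cub i, φ y * w y := by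
      calc t * w x * volume (cub i) ^ (1 - β)
          ≤ t * w x * (2 ^ n * volume (cub Q)) ^ (1 - β) := by gcongr
        _ = c * (t * w x * volume (cub Q) ^ (1 - β)) := by
            rw [ENNReal.mul_rpow_of_nonneg _ _ hβ1', hc]; ring
        _ < c * ∫⁻ y in cub Q, g y * w y := by
            rw [ENNReal.mul_lt_mul_iff_right hc0 hct]
            exact hlt
        _ ≤ c * ∫⁻ y in cub i, g y * w y := by gcongr
        _ ≤ c * ∫⁻ y in cub i, G y := by
            exact mul_le_mul' le_rfl (hGi i hi)
        _ = c * ∫⁻ y in cub i, φ y * w y := by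
            rw [lintegral_congr_ae (ae_restrict_of_ae hφw)]
    have h2 := holder4 (volume.restrict (cub i)) hp hq hβ0 hβ hφm hw hu.meas hφt
      (ae_restrict_of_ae hw0) hwt (ae_restrict_of_ae hu.pos) hu.fin
    rw [Measure.restrict_apply_univ] at h2
    have h3 : ∫⁻ y in cub i, w y ^ (q / p) ≤ Cv * w x ^ (q / p) * volume (cub i) :=
      (hV.a1 i hi0).trans (by
        gcongr
        exact hx i hi (hQi hxQ))
    have h4 : ∫⁻ y in cub i, φ y ^ p * uu y ^ (p / q) * w y ≤ N := setLIntegral_le_lintegral _ _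
    have h5 : ∫⁻ y in cub i, φ y * w y ≤ (∫⁻ y in cub i, h y) ^ (1 / q) * N ^ β *
        (Cv * w x ^ (q / p) * volume (cub i)) ^ ((p - 1) / q) *
          volume (cub i) ^ ((p - 1) * β) := by
      refine h2.trans ?_
      have hpq : 0 ≤ (p - 1) / q := by positivity
      exact mul_le_mul' (mul_le_mul' (mul_le_mul' le_rfl (ENNReal.rpow_le_rpow h4 hβ0))
        (ENNReal.rpow_le_rpow h3 hpq)) le_rfl
    rw [lintegral_const_mul _ hhm]
    exact alg_step hp hq hβ rfl hVx (hV.fin x) (vol_cub_ne_zero hi0) (vol_cub_ne_top i)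
      ht0 htt h1 h5
  have hle : ∫⁻ x in {x | ∃ Q : CI n, 0 < Q.2 ∧ x ∈ cub Q ∧
        t * w x * volume (cub Q) ^ (1 - β) < ∫⁻ y in cub Q, g y * w y},
          uu x * w x ^ (q / p) ≤ K * (A * N) :=
    (lintegral_mono' (Measure.restrict_mono_ae hsub) le_rfl).trans hmain
  have hNN : N ≤ ∫⁻ x, g x ^ p * uu x ^ (p / q) * w x := by
    refine lintegral_mono fun x => ?_
    exact mul_le_mul' (mul_le_mul' (ENNReal.rpow_le_rpow (hφg x) hp0.le) le_rfl) le_rfl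
  have hcalc : (K * (A * N)) ^ (1 / q) =
      K ^ (1 / q) * c * Cv ^ ((p - 1) / q) / t * N ^ (1 / p) := by
    have e1 : (c ^ q) ^ (1 / q) = c := by
      rw [← ENNReal.rpow_mul, mul_one_div_cancel hq.ne', ENNReal.rpow_one]
    have e2 : ((t ^ q)⁻¹) ^ (1 / q) = t⁻¹ := by
      rw [ENNReal.inv_rpow, ← ENNReal.rpow_mul, mul_one_div_cancel hq.ne', ENNReal.rpow_one]
    have e3 : (N ^ (q * β)) ^ (1 / q) = N ^ β := by
      rw [← ENNReal.rpow_mul]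
      congr 1
      field_simp
    have e4 : (Cv ^ (p - 1)) ^ (1 / q) = Cv ^ ((p - 1) / q) := by
      rw [← ENNReal.rpow_mul]
      congr 1
      ring
    rw [hA, div_eq_mul_inv _ (t ^ q), div_eq_mul_inv _ t]
    simp only [ENNReal.mul_rpow_of_nonneg _ _ hiq]
    rw [e1, e2, e3, e4, ← hβ, ENNReal.rpow_add_of_nonneg _ _ hiq hβ0]
    ring
  calc _ ≤ (K * (A * N)) ^ (1 / q) := ENNReal.rpow_le_rpow hle hiq
    _ = _ := hcalc
    _ ≤ _ := mul_le_mul' le_rfl (ENNReal.rpow_le_rpow hNN (by positivity))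

/-- **Berra–Carena–Pradolini, fractional maximal case.**  Let `0 < α < n`, `1 ≤ p < n/α`
and `1/q = 1/p - α/n`.  If `u ∈ A₁` and `v^{q/p} ∈ A₁`, then there is `C > 0` such that
for every `f` and `t > 0`,
`(uv^{q/p})({x : M_α(fv)(x)/v(x) > t})^{1/q} ≤ (C/t) (∫ |f|^p u^{p/q} v)^{1/p}`. -/
theorem BCP_fractional_maximal {n : ℕ} (hn : 0 < n) (α p q : ℝ)
    (hα0 : 0 < α) (hα : α < (n : ℝ)) (hp1 : 1 ≤ p) (hp2 : p < (n : ℝ) / α)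
    (hq : 1 / q = 1 / p - α / (n : ℝ))
    (u v : ESp n → ℝ) (hu : IsWeight u) (hv : IsWeight v)
    (hu1 : IsA1 u) (hv1 : IsA1 (fun x => v x ^ (q / p))) :
    ∃ C : ℝ≥0∞, 0 < C ∧ C < ⊤ ∧
      ∀ (f : ESp n → ℝ) (t : ℝ), 0 < t →
        (wMeas (fun x => u x * v x ^ (q / p))
            {x : ESp n | ENNReal.ofReal t <
              fracM α (fun y => f y * v y) x / ENNReal.ofReal (v x)}) ^ (1 / q)
          ≤ (C / ENNReal.ofReal t) *
              (∫⁻ x, ENNReal.ofReal (|f x| ^ p * u x ^ (p / q) * v x)) ^ (1 / p) := by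
  have hn' : (0 : ℝ) < n := by exact_mod_cast hn
  have hp0 : 0 < p := by linarith
  have hβ0 : 0 < α / (n : ℝ) := by positivity
  have hβ1 : α / (n : ℝ) ≤ 1 := by
    rw [div_le_one hn']
    exact hα.le
  have hβ : 1 / q + α / (n : ℝ) = 1 / p := by linarith
  have hq0 : 0 < q := by
    have h1 : p * α < n := (lt_div_iff₀ hα0).1 hp2
    have h2 : α / (n : ℝ) < 1 / p := by
      rw [div_lt_div_iff₀ hn' hp0]
      linarith
    have h3 : 0 < 1 / q := by linarith
    exact one_div_pos.1 h3
  have hqp : 0 ≤ q / p := by positivity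
  have hpq : 0 ≤ p / q := by positivity
  obtain ⟨Cu, hCu, hAu⟩ := hu1
  obtain ⟨Cv, hCv, hAv⟩ := hv1
  obtain ⟨hum, hunn, hupos, -⟩ := hu
  obtain ⟨hvm, hvnn, hvpos, -⟩ := hv
  have hW1u := W1_of hum hupos hCu hAu
  have hvr : ∀ x, ENNReal.ofReal (v x ^ (q / p)) = ENNReal.ofReal (v x) ^ (q / p) := fun x =>
    (ENNReal.ofReal_rpow_of_nonneg (hvnn x) hqp).symm
  have hW1v := W1_of (hvm.pow_const (q / p))
    (by filter_upwards [hvpos] with x hx using Real.rpow_pos_of_pos hx _) hCv hAv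
  simp only [hvr] at hW1v
  have hw0 : ∀ᵐ x, ENNReal.ofReal (v x) ≠ 0 := by
    filter_upwards [hvpos] with x hx
    simpa using hx
  obtain ⟨C, hC, hmain⟩ := main_ennreal hp1 hq0 hβ0.le hβ1 hβ hvm.ennreal_ofReal
    (fun x => ENNReal.ofReal_ne_top) hw0 hW1u hW1v
  refine ⟨C + 1, by simp, by simp [lt_top_iff_ne_top, hC], fun f t ht => ?_⟩
  have ht0 : ENNReal.ofReal t ≠ 0 := by simpa using ht
  have h1 := hmain (fun x => ENNReal.ofReal |f x|) (fun x => ENNReal.ofReal_ne_top)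
    (ENNReal.ofReal t) ht0 ENNReal.ofReal_ne_top
  have hF : ∀ y, ENNReal.ofReal |f y * v y| = ENNReal.ofReal |f y| * ENNReal.ofReal (v y) := by
    intro y
    rw [abs_mul, abs_of_nonneg (hvnn y), ENNReal.ofReal_mul (abs_nonneg _)]
  have hR : ∀ x, ENNReal.ofReal (|f x| ^ p * u x ^ (p / q) * v x) =
      ENNReal.ofReal |f x| ^ p * ENNReal.ofReal (u x) ^ (p / q) * ENNReal.ofReal (v x) := by
    intro x
    rw [ENNReal.ofReal_mul (mul_nonneg (Real.rpow_nonneg (abs_nonneg _) _)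
      (Real.rpow_nonneg (hunn x) _)), ENNReal.ofReal_mul (Real.rpow_nonneg (abs_nonneg _) _),
      ENNReal.ofReal_rpow_of_nonneg (abs_nonneg _) hp0.le,
      ENNReal.ofReal_rpow_of_nonneg (hunn x) hpq]
  have hL : ∀ x, ENNReal.ofReal (u x * v x ^ (q / p)) =
      ENNReal.ofReal (u x) * ENNReal.ofReal (v x) ^ (q / p) := by
    intro x
    rw [ENNReal.ofReal_mul (hunn x), hvr]
  have hsub : ∀ᵐ x : ESp n, ENNReal.ofReal t <
        fracM α (fun y => f y * v y) x / ENNReal.ofReal (v x) →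
      ∃ Q : CI n, 0 < Q.2 ∧ x ∈ cub Q ∧ ENNReal.ofReal t * ENNReal.ofReal (v x) *
        volume (cub Q) ^ (1 - α / (n : ℝ)) <
          ∫⁻ y in cub Q, ENNReal.ofReal |f y| * ENNReal.ofReal (v y) := by
    filter_upwards [hw0] with x hx hlt
    rw [ENNReal.lt_div_iff_mul_lt (Or.inl hx) (Or.inl ENNReal.ofReal_ne_top), fracM] at hlt
    simp only [lt_iSup_iff] at hlt
    obtain ⟨_, ⟨c, s, hs, rfl⟩, hxQ, hlt⟩ := hlt
    have hs' : 0 < ((c, s) : CI n).2 := hs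
    refine ⟨(c, s), hs, hxQ, ?_⟩
    change _ < (volume (cub ((c, s) : CI n)) ^ (1 - α / (n : ℝ)))⁻¹ *
      ∫⁻ y in cub ((c, s) : CI n), ENNReal.ofReal |f y * v y| at hlt
    simp only [hF] at hlt
    have hv0 : volume (cub ((c, s) : CI n)) ^ (1 - α / (n : ℝ)) ≠ 0 := by
      simp [vol_cub_ne_zero hs', vol_cub_ne_top]
    have hvt : volume (cub ((c, s) : CI n)) ^ (1 - α / (n : ℝ)) ≠ ⊤ := by
      simp [vol_cub_ne_zero hs', vol_cub_ne_top]
    rw [mul_comm _ (∫⁻ y in cub ((c, s) : CI n), _), ← div_eq_mul_inv,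
      ENNReal.lt_div_iff_mul_lt (Or.inl hv0) (Or.inl hvt)] at hlt
    exact hlt
  unfold wMeas
  simp only [hL, hR]
  refine le_trans (ENNReal.rpow_le_rpow
    (lintegral_mono' (Measure.restrict_mono_ae hsub) le_rfl) (by positivity)) (h1.trans ?_)
  gcongr
  exact le_self_add


end
end
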